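/- Let k be a field of characteristic zero. Then the group Aut(k^2) of polynomial automorphisms of the affine plane, i.e. the group of k-algebra automorphisms of the polynomial ring k[x,y], satisfies the strong Tits alternative: every subgroup of Aut(k^2) either contains a nonabelian free subgroup or contains a solvable subgroup of finite index. -/

import Mathlib

/-- A group contains a nonabelian free subgroup if it has a subgroup isomorphic to the
free group on two generators. -/
def ContainsNonabelianFree (G : Type*) [Group G] : Prop :=
  ∃ K : Subgroup G, Nonempty (↥K ≃* FreeGroup (Fin 2))

/-- A group is virtually solvable if it contains a solvable subgroup of finite index. -/
def IsVirtuallySolvable (G : Type*) [Group G] : Prop :=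
  ∃ K : Subgroup G, K.FiniteIndex ∧ IsSolvable ↥K

/-- A group satisfies the strong Tits alternative if every subgroup contains a nonabelian
free subgroup or is virtually solvable. -/
def StrongTitsAlternative (G : Type*) [Group G] : Prop :=
  ∀ H : Subgroup G, ContainsNonabelianFree ↥H ∨ IsVirtuallySolvable ↥H

open scoped Pointwise commutatorElement

namespace TitsAlternative

section GroupTheory

variable {G H : Type*} [Group G] [Group H]

theorem containsNonabelianFree_of_injective (f : FreeGroup (Fin 2) →* G)
    (hf : Function.Injective f) : ContainsNonabelianFree G :=
  ⟨f.range, ⟨(MonoidHom.ofInjective hf).symm⟩⟩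

theorem exists_injective_of_containsNonabelianFree (h : ContainsNonabelianFree G) :
    ∃ f : FreeGroup (Fin 2) →* G, Function.Injective f := by
  obtain ⟨K, ⟨e⟩⟩ := h
  exact ⟨K.subtype.comp e.symm.toMonoidHom, K.subtype_injective.comp e.symm.injective⟩

theorem containsNonabelianFree_map (f : G →* H) (hf : Function.Injective f)
    (h : ContainsNonabelianFree G) : ContainsNonabelianFree H := by
  obtain ⟨i, hi⟩ := exists_injective_of_containsNonabelianFree h
  exact containsNonabelianFree_of_injective (f.comp i) (hf.comp hi)

theorem containsNonabelianFree_of_surjective (f : G →* H) (hf : Function.Surjective f)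
    (h : ContainsNonabelianFree H) : ContainsNonabelianFree G := by
  obtain ⟨i, hi⟩ := exists_injective_of_containsNonabelianFree h
  choose s hs using hf
  let j : FreeGroup (Fin 2) →* G := FreeGroup.lift fun n => s (i (FreeGroup.of n))
  have hj : f.comp j = i := by
    ext n
    simp [j, hs]
  refine containsNonabelianFree_of_injective j fun a b hab => hi ?_
  rw [← hj]
  simp [hab]

theorem isVirtuallySolvable_of_ker (f : G →* H) (hf : Group.IsSolvable f.ker)
    (h : IsVirtuallySolvable f.range) : IsVirtuallySolvable G := by
  obtain ⟨K, hK, hs⟩ := h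
  refine ⟨K.comap f.rangeRestrict, ?_, ?_⟩
  · refine ⟨?_⟩
    rw [Subgroup.index_comap_of_surjective _ f.rangeRestrict_surjective]
    exact hK.index_ne_zero
  · have hs' : Group.IsSolvable K := hs
    let g : K.comap f.rangeRestrict →* K :=
      (f.rangeRestrict.comp (Subgroup.subtype _)).codRestrict K fun x => x.2
    have hle : f.ker ≤ K.comap f.rangeRestrict := fun x hx => by
      have : f.rangeRestrict x = 1 := Subtype.ext hx
      rw [Subgroup.mem_comap, this]
      exact K.one_mem
    refine Group.isSolvable_of_ker_le_range (Subgroup.inclusion hle) g fun x hx => ?_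
    refine ⟨⟨x.1, ?_⟩, Subtype.ext rfl⟩
    have : g x = 1 := hx
    exact congrArg (fun y => y.1.1) this

theorem isVirtuallySolvable_of_isSolvable (h : Group.IsSolvable G) : IsVirtuallySolvable G :=
  ⟨⊤, inferInstance, Group.isSolvable_of_isSolvable_injective (f := (⊤ : Subgroup G).subtype)
    (Subgroup.subtype_injective _)⟩

theorem alternative_of_range (f : G →* H) (hf : Group.IsSolvable f.ker)
    (h : ContainsNonabelianFree f.range ∨ IsVirtuallySolvable f.range) :
    ContainsNonabelianFree G ∨ IsVirtuallySolvable G :=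
  h.imp (containsNonabelianFree_of_surjective _ f.rangeRestrict_surjective)
    (isVirtuallySolvable_of_ker f hf)

/-- Membership in a term of the derived series only involves finitely many elements. -/
theorem exists_finset_of_mem_derivedSeries (n : ℕ) (g : G) (hg : g ∈ derivedSeries G n) :
    ∃ S : Finset G, ∀ B : Subgroup G, (S : Set G) ⊆ B →
      g ∈ (derivedSeries B n).map B.subtype := by
  classical
  induction n generalizing g with
  | zero =>
    refine ⟨{g}, fun B hB => ?_⟩
    simpa using hB
  | succ n ih =>
    rw [derivedSeries_succ, Subgroup.commutator_def] at hg
    induction hg using Subgroup.closure_induction with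
    | mem x hx =>
      obtain ⟨a, ha, b, hb, rfl⟩ := hx
      obtain ⟨S, hS⟩ := ih a ha
      obtain ⟨T, hT⟩ := ih b hb
      refine ⟨S ∪ T, fun B hB => ?_⟩
      rw [Finset.coe_union, Set.union_subset_iff] at hB
      rw [derivedSeries_succ, Subgroup.map_commutator]
      exact Subgroup.commutator_mem_commutator (hS B hB.1) (hT B hB.2)
    | one => exact ⟨∅, fun B _ => one_mem _⟩
    | mul x y _ _ hx hy =>
      obtain ⟨S, hS⟩ := hx
      obtain ⟨T, hT⟩ := hy
      refine ⟨S ∪ T, fun B hB => ?_⟩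
      rw [Finset.coe_union, Set.union_subset_iff] at hB
      exact mul_mem (hS B hB.1) (hT B hB.2)
    | inv x _ hx =>
      obtain ⟨S, hS⟩ := hx
      exact ⟨S, fun B hB => inv_mem (hS B hB)⟩

theorem derivedSeries_eq_bot_of_locally (n : ℕ)
    (h : ∀ S : Finset G, ∃ B : Subgroup G, (S : Set G) ⊆ B ∧ derivedSeries B n = ⊥) :
    derivedSeries G n = ⊥ := by
  refine (Subgroup.eq_bot_iff_forall _).2 fun g hg => ?_
  obtain ⟨S, hS⟩ := exists_finset_of_mem_derivedSeries n g hg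
  obtain ⟨B, hSB, hB⟩ := h S
  simpa [hB] using hS B hSB

theorem derivedSeries_eq_bot_of_injective (f : G →* H) (hf : Function.Injective f) {n : ℕ}
    (h : derivedSeries H n = ⊥) : derivedSeries G n = ⊥ := by
  have := map_derivedSeries_le_derivedSeries f n
  rw [h, le_bot_iff, Subgroup.map_eq_bot_iff_of_injective _ hf] at this
  exact this

theorem isSolvable_of_commutator_le {K : Subgroup G} (hK : Group.IsSolvable K)
    (h : ∀ a b : G, ⁅a, b⁆ ∈ K) : Group.IsSolvable G := by
  have hle : commutator G ≤ K := by
    rw [commutator_def, Subgroup.commutator_le]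
    exact fun a _ b _ => h a b
  refine Group.isSolvable_of_ker_le_range (Subgroup.subtype K) (Abelianization.of (G := G)) ?_
  rw [Abelianization.ker_of, Subgroup.range_subtype]
  exact hle

/-- If every translate of the pair `(p, q)` meets it, one of the two points has a stabilizer of
finite index. -/
theorem finiteIndex_stabilizer_of_meets {Y : Type*} [MulAction G Y] (p q : Y)
    (h : ∀ g : G, g • p = p ∨ g • p = q ∨ g • q = p ∨ g • q = q) :
    (MulAction.stabilizer G p).FiniteIndex ∨ (MulAction.stabilizer G q).FiniteIndex := by
  classical
  obtain ⟨x, hx⟩ : ∃ x : G, (∃ g : G, g • p = q) → x • p = q := by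
    by_cases hx : ∃ g : G, g • p = q
    · exact ⟨hx.choose, fun _ => hx.choose_spec⟩
    · exact ⟨1, fun h => absurd h hx⟩
  obtain ⟨y, hy⟩ : ∃ y : G, (∃ g : G, g • q = p) → y • q = p := by
    by_cases hy : ∃ g : G, g • q = p
    · exact ⟨hy.choose, fun _ => hy.choose_spec⟩
    · exact ⟨1, fun h => absurd h hy⟩
  let S : Fin 4 → Subgroup G :=
    ![MulAction.stabilizer G p, MulAction.stabilizer G p, MulAction.stabilizer G q,
      MulAction.stabilizer G q]
  let c : Fin 4 → G := ![1, x, y, 1]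
  have hcov : ⋃ i ∈ (Finset.univ : Finset (Fin 4)), c i • (S i : Set G) = Set.univ := by
    refine Set.eq_univ_of_forall fun g => ?_
    simp only [Finset.mem_univ, Set.iUnion_true, Set.mem_iUnion, Set.mem_smul_set_iff_inv_smul_mem,
      SetLike.mem_coe, smul_eq_mul]
    rcases h g with h | h | h | h
    · exact ⟨0, by simpa [S, c] using h⟩
    · refine ⟨1, ?_⟩
      simp only [S, c, Matrix.cons_val, MulAction.mem_stabilizer_iff, mul_smul, inv_smul_eq_iff]
      rw [hx ⟨g, h⟩, h]
    · refine ⟨2, ?_⟩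
      simp only [S, c, Matrix.cons_val, MulAction.mem_stabilizer_iff, mul_smul, inv_smul_eq_iff]
      rw [hy ⟨g, h⟩, h]
    · exact ⟨3, by simpa [S, c] using h⟩
  obtain ⟨i, -, hi⟩ := Subgroup.exists_finiteIndex_of_leftCoset_cover hcov
  fin_cases i
  · exact .inl hi
  · exact .inl hi
  · exact .inr hi
  · exact .inr hi

end GroupTheory

section PingPong

variable {G X : Type*} [Group G] [MulAction G X]

/-- `g` has north-south dynamics with attracting filter `φ` and repelling filter `ψ`. -/
def NorthSouth (g : G) (φ ψ : Filter X) : Prop :=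
  ∀ U ∈ φ, ∀ V ∈ ψ, ∃ N : ℕ, ∀ n ≥ N, ∀ x ∉ V, g ^ n • x ∈ U

theorem containsNonabelianFree_of_pingPong (a b : G) (A A' B B' : Set X)
    (hA : A.Nonempty) (hB : B.Nonempty) (hAB : Disjoint A B) (hAB' : Disjoint A' B')
    (h₁ : Disjoint A A') (h₂ : Disjoint A B') (h₃ : Disjoint B A') (h₄ : Disjoint B B')
    (ha : ∀ x ∉ A', a • x ∈ A) (hb : ∀ x ∉ B', b • x ∈ B) : ContainsNonabelianFree G := by
  have key : ∀ (c : G) (C C' : Set X), (∀ x ∉ C', c • x ∈ C) → ∀ x ∉ C, c⁻¹ • x ∈ C' := by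
    intro c C C' h x hx
    by_contra hx'
    exact hx (by simpa using h _ hx')
  let c : ULift (Fin 2) → G := fun i => ![a, b] i.down
  have hinj : Function.Injective (FreeGroup.lift c) := by
    refine FreeGroup.injective_lift_of_ping_pong c (fun i => ![A, B] i.down)
      (fun i => ![A', B'] i.down) ?_ ?_ ?_ ?_ ?_ ?_
    · rintro ⟨i⟩
      fin_cases i
      · exact hA
      · exact hB
    · rintro ⟨i⟩ ⟨j⟩ hij
      fin_cases i <;> fin_cases j
      · exact absurd rfl hij
      · exact hAB
      · exact hAB.symm
      · exact absurd rfl hij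
    · rintro ⟨i⟩ ⟨j⟩ hij
      fin_cases i <;> fin_cases j
      · exact absurd rfl hij
      · exact hAB'
      · exact hAB'.symm
      · exact absurd rfl hij
    · rintro ⟨i⟩ ⟨j⟩
      fin_cases i <;> fin_cases j
      · exact h₁
      · exact h₂
      · exact h₃
      · exact h₄
    · rintro ⟨i⟩ _ ⟨x, hx, rfl⟩
      fin_cases i
      · exact ha x hx
      · exact hb x hx
    · rintro ⟨i⟩ _ ⟨x, hx, rfl⟩
      fin_cases i
      · exact key _ _ _ ha x hx
      · exact key _ _ _ hb x hx
  refine containsNonabelianFree_of_injective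
    ((FreeGroup.lift c).comp (FreeGroup.freeGroupCongr Equiv.ulift.symm).toMonoidHom) ?_
  exact hinj.comp (MulEquiv.injective _)

theorem containsNonabelianFree_of_northSouth {g h : G} {φ ψ : Filter X} [φ.NeBot]
    (hns : NorthSouth g φ ψ) (hd : Disjoint φ ψ) (h₁ : Disjoint (h • φ) φ)
    (h₂ : Disjoint (h • φ) ψ) (h₃ : Disjoint (h • ψ) φ) (h₄ : Disjoint (h • ψ) ψ) :
    ContainsNonabelianFree G := by
  have mem : ∀ {χ : Filter X} {S : Set X}, S ∈ h • χ → (h • ·) ⁻¹' S ∈ χ := fun hS => hS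
  rw [Filter.disjoint_iff] at hd h₁ h₂ h₃ h₄
  obtain ⟨U₀, hU₀, V₀, hV₀, d₀⟩ := hd
  obtain ⟨P₁, hP₁, U₁, hU₁, d₁⟩ := h₁
  obtain ⟨P₂, hP₂, V₂, hV₂, d₂⟩ := h₂
  obtain ⟨Q₃, hQ₃, U₃, hU₃, d₃⟩ := h₃
  obtain ⟨Q₄, hQ₄, V₄, hV₄, d₄⟩ := h₄
  let A := U₀ ∩ U₁ ∩ U₃ ∩ (h • ·) ⁻¹' (P₁ ∩ P₂)
  let A' := V₀ ∩ V₂ ∩ V₄ ∩ (h • ·) ⁻¹' (Q₃ ∩ Q₄)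
  have hA : A ∈ φ := Filter.inter_mem (Filter.inter_mem (Filter.inter_mem hU₀ hU₁) hU₃)
    (Filter.inter_mem (mem hP₁) (mem hP₂))
  have hA' : A' ∈ ψ := Filter.inter_mem (Filter.inter_mem (Filter.inter_mem hV₀ hV₂) hV₄)
    (Filter.inter_mem (mem hQ₃) (mem hQ₄))
  obtain ⟨N, hN⟩ := hns A hA A' hA'
  have hne : A.Nonempty := Filter.nonempty_of_mem hA
  rw [Set.disjoint_left] at d₀ d₁ d₂ d₃ d₄
  refine containsNonabelianFree_of_pingPong (g ^ N) (h * g ^ N * h⁻¹) A A' (h • A) (h • A') hne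
    hne.smul_set ?_ ?_ ?_ ?_ ?_ ?_ (hN N le_rfl) fun x hx => ?_
  · rw [Set.disjoint_right]
    rintro _ ⟨x, hx, rfl⟩ hx'
    exact d₁ hx.2.1 hx'.1.1.2
  · rw [Set.disjoint_right]
    rintro _ ⟨x, hx, rfl⟩ hx'
    exact d₄ hx.2.2 hx'.1.2
  · exact Set.disjoint_left.2 fun x hx hx' => d₀ hx.1.1.1 hx'.1.1.1
  · rw [Set.disjoint_right]
    rintro _ ⟨x, hx, rfl⟩ hx'
    exact d₃ hx.2.1 hx'.1.2
  · rw [Set.disjoint_left]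
    rintro _ ⟨x, hx, rfl⟩ hx'
    exact d₂ hx.2.2 hx'.1.1.2
  · refine Set.disjoint_left.2 ?_
    rintro _ ⟨x, hx, rfl⟩ ⟨y, hy, hxy⟩
    obtain rfl : y = x := smul_left_cancel h hxy
    exact d₀ hx.1.1.1 hy.1.1.1
  · rw [mul_smul, mul_smul]
    refine Set.smul_mem_smul_set (hN N le_rfl _ fun h' => hx ?_)
    exact ⟨_, h', by simp⟩

/-- A group with an element of north-south dynamics contains a free group, unless the stabilizer
of one of the two poles has finite index. -/
theorem alternative_of_northSouth {g : G} {φ ψ : Filter X} [φ.NeBot]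
    (hns : NorthSouth g φ ψ) (hd : Disjoint φ ψ)
    (hsep : ∀ h : G, ∀ χ ∈ ({φ, ψ} : Set (Filter X)), ∀ χ' ∈ ({φ, ψ} : Set (Filter X)),
      h • χ = χ' ∨ Disjoint (h • χ) χ')
    (hφ : Group.IsSolvable (MulAction.stabilizer G φ))
    (hψ : Group.IsSolvable (MulAction.stabilizer G ψ)) :
    ContainsNonabelianFree G ∨ IsVirtuallySolvable G := by
  by_cases h : ∀ g : G, g • φ = φ ∨ g • φ = ψ ∨ g • ψ = φ ∨ g • ψ = ψ
  · right
    rcases finiteIndex_stabilizer_of_meets φ ψ h with h | h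
    · exact ⟨_, h, hφ⟩
    · exact ⟨_, h, hψ⟩
  · left
    push Not at h
    obtain ⟨h, h₁, h₂, h₃, h₄⟩ := h
    refine containsNonabelianFree_of_northSouth (h := h) hns hd
      ((hsep h φ ?_ φ ?_).resolve_left h₁) ((hsep h φ ?_ ψ ?_).resolve_left h₂)
      ((hsep h ψ ?_ φ ?_).resolve_left h₃) ((hsep h ψ ?_ ψ ?_).resolve_left h₄) <;> simp

end PingPong

end TitsAlternative

namespace TitsAlternative

section TreeGeometry

variable {X : Type*} {T : SimpleGraph X}

theorem exists_adj_dist_add_one (hT : T.IsTree) {x y : X} (h : x ≠ y) :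
    ∃ a, T.Adj x a ∧ T.dist a y + 1 = T.dist x y := by
  obtain ⟨p, -, hp⟩ := hT.connected.exists_path_of_dist x y
  cases p with
  | nil => exact absurd rfl h
  | @cons _ a _ hadj q =>
    refine ⟨a, hadj, ?_⟩
    have h1 := T.dist_le q
    have h2 := (hadj.diff_dist_adj (u := y))
    rw [SimpleGraph.Walk.length_cons] at hp
    rw [T.dist_comm (u := y) (v := a), T.dist_comm (u := y) (v := x)] at h2
    omega

theorem eq_of_adj_of_dist_lt (hT : T.IsTree) {x y a b : X} (ha : T.Adj x a) (hb : T.Adj x b)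
    (ha' : T.dist a y < T.dist x y) (hb' : T.dist b y < T.dist x y) : a = b := by
  obtain ⟨p, -, hp⟩ := hT.connected.exists_path_of_dist a y
  obtain ⟨q, -, hq⟩ := hT.connected.exists_path_of_dist b y
  have h1 := T.dist_le (SimpleGraph.Walk.cons ha p)
  have h2 := T.dist_le (SimpleGraph.Walk.cons hb q)
  simp only [SimpleGraph.Walk.length_cons] at h1 h2
  have hP : (SimpleGraph.Walk.cons ha p).IsPath :=
    SimpleGraph.Walk.isPath_of_length_eq_dist _ (by simp only [SimpleGraph.Walk.length_cons]; omega)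
  have hQ : (SimpleGraph.Walk.cons hb q).IsPath :=
    SimpleGraph.Walk.isPath_of_length_eq_dist _ (by simp only [SimpleGraph.Walk.length_cons]; omega)
  have := congrArg (fun w : T.Path x y => w.1.snd)
    ((hT.isAcyclic.subsingleton_path x y).elim ⟨_, hP⟩ ⟨_, hQ⟩)
  simpa using this

variable (T) in
open Classical in
/-- The neighbour of `x` on the way to `y`; it is `x` itself when `x = y`. -/
noncomputable def dir (x y : X) : X :=
  if h : ∃ a, T.Adj x a ∧ T.dist a y + 1 = T.dist x y then h.choose else x

@[simp] theorem dir_self (x : X) : dir T x x = x := by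
  simp [dir]

theorem adj_dir (hT : T.IsTree) {x y : X} (h : x ≠ y) : T.Adj x (dir T x y) := by
  rw [dir, dif_pos (exists_adj_dist_add_one hT h)]
  exact (exists_adj_dist_add_one hT h).choose_spec.1

theorem dist_dir (hT : T.IsTree) {x y : X} (h : x ≠ y) :
    T.dist (dir T x y) y + 1 = T.dist x y := by
  rw [dir, dif_pos (exists_adj_dist_add_one hT h)]
  exact (exists_adj_dist_add_one hT h).choose_spec.2

theorem dir_eq (hT : T.IsTree) {x y a : X} (ha : T.Adj x a) (h : T.dist a y < T.dist x y) :
    dir T x y = a := by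
  have hne : x ≠ y := by
    rintro rfl
    simp at h
  exact eq_of_adj_of_dist_lt hT (adj_dir hT hne) ha (by have := dist_dir hT hne; omega) h

theorem dist_of_ne_dir (hT : T.IsTree) {x y a : X} (ha : T.Adj x a) (h : dir T x y ≠ a) :
    T.dist a y = T.dist x y + 1 := by
  have h1 := hT.dist_eq_dist_add_one_of_adj y ha
  rw [T.dist_comm (u := y) (v := a), T.dist_comm (u := y) (v := x)] at h1
  rcases h1 with h1 | h1
  · exact absurd (dir_eq hT ha (by omega)) h
  · exact h1

theorem dist_eq_add_of_dir_ne (hT : T.IsTree) {x y z : X} (h : dir T x y ≠ dir T x z) :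
    T.dist y z = T.dist y x + T.dist x z := by
  induction hn : T.dist x y generalizing x with
  | zero =>
    obtain rfl := hT.connected.dist_eq_zero_iff.1 hn
    simp
  | succ n ih =>
    have hxy : x ≠ y := by
      rintro rfl
      simp at hn
    have h1 := dist_dir hT hxy
    have hadj := adj_dir hT hxy
    have h2 := dist_of_ne_dir hT hadj h.symm
    have h3 : dir T (dir T x y) z = x := dir_eq hT hadj.symm (by omega)
    have h4 : dir T (dir T x y) y ≠ x := by
      rcases eq_or_ne (dir T x y) y with h5 | h5
      · rw [h5, dir_self]
        exact hxy.symm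
      · intro h6
        have := dist_dir hT h5
        rw [h6] at this
        omega
    have h5 := ih (x := dir T x y) (by rwa [h3]) (by omega)
    rw [T.dist_comm (u := y) (v := x)]
    rw [T.dist_comm (u := y) (v := dir T x y)] at h5
    omega

theorem dir_eq_dir_of_dir_ne (hT : T.IsTree) {x y z : X} (hxy : y ≠ x)
    (h : dir T x y ≠ dir T x z) : dir T y z = dir T y x := by
  refine dir_eq hT (adj_dir hT hxy) ?_
  have h1 := dist_eq_add_of_dir_ne hT h
  have h2 := dist_dir hT hxy
  have h3 := hT.connected.dist_triangle (u := dir T y x) (v := x) (w := z)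
  omega

variable (T) in
/-- The half-tree of the vertices on the side of `a`, for an edge from `v` to `a`. -/
def half (v a : X) : Set X := {y | T.dist a y < T.dist v y}

theorem mem_half_iff (hT : T.IsTree) {v a y : X} (h : T.Adj v a) :
    y ∈ half T v a ↔ dir T v y = a := by
  refine ⟨fun hy => dir_eq hT h hy, fun hy => ?_⟩
  by_contra hc
  have hne : v ≠ y := by
    rintro rfl
    rw [dir_self] at hy
    exact h.ne hy
  have := dist_dir hT hne
  rw [hy] at this
  exact hc (show T.dist a y < T.dist v y by omega)

theorem compl_half (hT : T.IsTree) {v a : X} (h : T.Adj v a) : (half T v a)ᶜ = half T a v := by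
  ext y
  have h1 := hT.dist_eq_dist_add_one_of_adj y h
  rw [T.dist_comm (u := y) (v := a), T.dist_comm (u := y) (v := v)] at h1
  simp only [half, Set.mem_compl_iff, Set.mem_ofPred_eq]
  omega

theorem half_subset_half_or (hT : T.IsTree) {v a w b : X} (h : T.Adj v a) (hw : T.Adj w b)
    (hv : v ∉ half T w b) (ha : a ∉ half T w b) :
    half T w b ⊆ half T v a ∨ half T w b ⊆ half T a v := by
  rw [mem_half_iff hT hw] at hv ha
  have key : ∀ y ∈ half T w b, T.dist v y = T.dist v w + T.dist w y ∧
      T.dist a y = T.dist a w + T.dist w y := by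
    intro y hy
    rw [mem_half_iff hT hw] at hy
    exact ⟨dist_eq_add_of_dir_ne hT (by rwa [hy]), dist_eq_add_of_dir_ne hT (by rwa [hy])⟩
  have h1 := hT.dist_eq_dist_add_one_of_adj w h
  rw [T.dist_comm (u := w) (v := a), T.dist_comm (u := w) (v := v)] at h1
  rcases h1 with h1 | h1
  · refine Or.inl fun y hy => ?_
    have := key y hy
    change T.dist a y < T.dist v y
    omega
  · refine Or.inr fun y hy => ?_
    have := key y hy
    change T.dist v y < T.dist a y
    omega

end TreeGeometry

section TreeEnds

variable {X : Type*} {T : SimpleGraph X}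

variable (T) in
/-- A filter on the vertices of a tree that converges to an end of the tree. -/
structure IsEnd (φ : Filter X) : Prop where
  neBot : φ.NeBot
  exists_half : ∀ U ∈ φ, ∃ v a, T.Adj v a ∧ half T v a ∈ φ ∧ half T v a ⊆ U
  compl_singleton_mem : ∀ v, {v}ᶜ ∈ φ

theorem IsEnd.half_mem_or (hT : T.IsTree) {φ : Filter X} (hφ : IsEnd T φ) {v a : X}
    (h : T.Adj v a) : half T v a ∈ φ ∨ half T a v ∈ φ := by
  obtain ⟨w, b, hwb, hmem, hsub⟩ := hφ.exists_half _
    (Filter.inter_mem (hφ.compl_singleton_mem v) (hφ.compl_singleton_mem a))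
  rcases half_subset_half_or hT h hwb (fun hv => (hsub hv).1 rfl) (fun ha => (hsub ha).2 rfl)
    with h1 | h1
  · exact Or.inl (Filter.mem_of_superset hmem h1)
  · exact Or.inr (Filter.mem_of_superset hmem h1)

theorem IsEnd.le_of_not_disjoint (hT : T.IsTree) {φ χ : Filter X} (hφ : IsEnd T φ)
    (hχ : IsEnd T χ) (h : ¬ Disjoint φ χ) : φ ≤ χ := by
  intro U hU
  obtain ⟨v, a, hva, hmem, hsub⟩ := hχ.exists_half U hU
  rcases hφ.half_mem_or hT hva with h1 | h1
  · exact Filter.mem_of_superset h1 hsub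
  · refine absurd (Filter.disjoint_iff.2 ⟨_, h1, _, hmem, ?_⟩) h
    rw [← compl_half hT hva]
    exact disjoint_compl_left

theorem IsEnd.eq_or_disjoint (hT : T.IsTree) {φ χ : Filter X} (hφ : IsEnd T φ)
    (hχ : IsEnd T χ) : φ = χ ∨ Disjoint φ χ := by
  by_cases h : Disjoint φ χ
  · exact Or.inr h
  · exact Or.inl (le_antisymm (hφ.le_of_not_disjoint hT hχ h)
      (hχ.le_of_not_disjoint hT hφ fun h' => h h'.symm))

theorem IsEnd.exists_adj_half_mem (hT : T.IsTree) {φ : Filter X} (hφ : IsEnd T φ) (v : X) :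
    ∃ a, T.Adj v a ∧ half T v a ∈ φ := by
  obtain ⟨w, b, hwb, hmem, hsub⟩ := hφ.exists_half _ (hφ.compl_singleton_mem v)
  rcases eq_or_ne v w with rfl | hne
  · exact ⟨b, hwb, hmem⟩
  · refine ⟨dir T v w, adj_dir hT hne, Filter.mem_of_superset hmem fun y hy => ?_⟩
    have hv : v ∉ half T w b := fun hv => hsub hv rfl
    rw [mem_half_iff hT hwb] at hy hv
    have h1 : T.dist v y = T.dist v w + T.dist w y := dist_eq_add_of_dir_ne hT (by rwa [hy])
    have h2 := dist_dir hT hne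
    have h3 := hT.connected.dist_triangle (u := dir T v w) (v := w) (w := y)
    change T.dist (dir T v w) y < T.dist v y
    omega

theorem IsEnd.adj_half_mem_unique (hT : T.IsTree) {φ : Filter X} (hφ : IsEnd T φ) {v a b : X}
    (ha : T.Adj v a) (hb : T.Adj v b) (ha' : half T v a ∈ φ) (hb' : half T v b ∈ φ) : a = b := by
  have := hφ.neBot
  obtain ⟨y, hya, hyb⟩ := φ.nonempty_of_mem (Filter.inter_mem ha' hb')
  rw [mem_half_iff hT ha] at hya
  rw [mem_half_iff hT hb] at hyb
  rw [← hya, hyb]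

end TreeEnds

section TreeActions

variable {X H : Type*} {T : SimpleGraph X} [Group H] [MulAction H X]

theorem dist_smul (hadj : ∀ (h : H) (x y : X), T.Adj (h • x) (h • y) ↔ T.Adj x y) (h : H)
    (x y : X) : T.dist (h • x) (h • y) = T.dist x y := by
  let e : T ≃g T := ⟨MulAction.toPerm h, fun {x y} => hadj h x y⟩
  have key : ∀ (e : T ≃g T) (x y : X), T.Reachable x y → T.dist (e x) (e y) ≤ T.dist x y := by
    intro e x y hr
    obtain ⟨p, hp⟩ := hr.exists_walk_length_eq_dist
    rw [← hp, ← SimpleGraph.Walk.length_map e.toHom p]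
    exact T.dist_le _
  by_cases hr : T.Reachable x y
  · refine le_antisymm (key e x y hr) ?_
    have := key e.symm (h • x) (h • y) (hr.map e.toHom)
    rwa [show e.symm (h • x) = x from e.symm_apply_apply x,
      show e.symm (h • y) = y from e.symm_apply_apply y] at this
  · rw [SimpleGraph.dist_eq_zero_of_not_reachable hr, SimpleGraph.dist_eq_zero_of_not_reachable]
    exact fun h' => hr ((e.reachable_iff (u := x) (v := y)).1 h')

theorem dir_smul (hT : T.IsTree)
    (hadj : ∀ (h : H) (x y : X), T.Adj (h • x) (h • y) ↔ T.Adj x y) (h : H) (x y : X) :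
    dir T (h • x) (h • y) = h • dir T x y := by
  rcases eq_or_ne x y with rfl | hne
  · simp
  · refine dir_eq hT ((hadj h _ _).2 (adj_dir hT hne)) ?_
    rw [dist_smul hadj, dist_smul hadj, ← dist_dir hT hne]
    omega

theorem smul_mem_half (hadj : ∀ (h : H) (x y : X), T.Adj (h • x) (h • y) ↔ T.Adj x y) (h : H)
    {v a y : X} : h • y ∈ half T (h • v) (h • a) ↔ y ∈ half T v a := by
  simp only [half, Set.mem_ofPred_eq, dist_smul hadj]

theorem half_mem_smul (hadj : ∀ (h : H) (x y : X), T.Adj (h • x) (h • y) ↔ T.Adj x y) (h : H)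
    {v a : X} {φ : Filter X} : half T (h • v) (h • a) ∈ h • φ ↔ half T v a ∈ φ := by
  change (h • ·) ⁻¹' half T (h • v) (h • a) ∈ φ ↔ _
  rw [show (h • ·) ⁻¹' half T (h • v) (h • a) = half T v a from
    Set.ext fun y => smul_mem_half hadj h]

theorem IsEnd.smul (hadj : ∀ (h : H) (x y : X), T.Adj (h • x) (h • y) ↔ T.Adj x y) (h : H)
    {φ : Filter X} (hφ : IsEnd T φ) : IsEnd T (h • φ) where
  neBot := by
    have := hφ.neBot
    exact Filter.map_neBot
  exists_half U hU := by
    obtain ⟨v, a, hva, hmem, hsub⟩ := hφ.exists_half _ hU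
    refine ⟨h • v, h • a, (hadj h v a).2 hva, (half_mem_smul hadj h).2 hmem, fun y hy => ?_⟩
    rw [← smul_inv_smul h y] at hy ⊢
    exact hsub ((smul_mem_half hadj h).1 hy)
  compl_singleton_mem v := by
    change (h • ·) ⁻¹' {v}ᶜ ∈ φ
    refine Filter.mem_of_superset (hφ.compl_singleton_mem (h⁻¹ • v)) fun y hy hc => hy ?_
    exact eq_inv_smul_iff.2 hc

/-- The stabilizer of an end is solvable as soon as the edge stabilizers are uniformly so. -/
theorem IsEnd.isSolvable_stabilizer (hT : T.IsTree)
    (hadj : ∀ (h : H) (x y : X), T.Adj (h • x) (h • y) ↔ T.Adj x y) {n : ℕ}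
    (hedge : ∀ x y : X, T.Adj x y → derivedSeries
      ↥(MulAction.stabilizer H x ⊓ MulAction.stabilizer H y) n = ⊥)
    {φ : Filter X} (hφ : IsEnd T φ) : Group.IsSolvable (MulAction.stabilizer H φ) := by
  choose e he hmem using fun v => hφ.exists_adj_half_mem hT v
  set P := MulAction.stabilizer H φ with hP
  have hcomm : ∀ (h : P) (v : X), e (h • v) = h • e v := by
    intro h v
    refine hφ.adj_half_mem_unique hT (he _) ((hadj h _ _).2 (he v)) (hmem _) ?_
    have := (half_mem_smul hadj (h : H)).2 (hmem v)
    rwa [show (h : H) • φ = φ from h.2] at this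
  have hiter : ∀ (i : ℕ) (h : P) (v : X), e^[i] (h • v) = h • e^[i] v := by
    intro i h v
    exact (Function.Semiconj.iterate_right (f := fun w : X => h • w)
      (fun w => (hcomm h w).symm) i v).symm
  have hcoal : ∀ v w : X, ∃ i j, e^[i] v = e^[j] w := by
    intro v w
    obtain ⟨p⟩ := hT.connected.preconnected v w
    induction p with
    | nil => exact ⟨0, 0, rfl⟩
    | @cons a b c hab q ih =>
      obtain ⟨i, j, hij⟩ := ih
      rcases hφ.half_mem_or hT hab with h1 | h1
      · refine ⟨i + 1, j, ?_⟩
        rw [Function.iterate_succ_apply, hφ.adj_half_mem_unique hT (he a) hab (hmem a) h1, hij]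
      · refine ⟨i, j + 1, ?_⟩
        rw [← hφ.adj_half_mem_unique hT (he b) hab.symm (hmem b) h1,
          ← Function.iterate_succ_apply e, Function.iterate_succ_apply', hij,
          ← Function.iterate_succ_apply' e]
  obtain ⟨v⟩ := hT.connected.nonempty
  have hmono : ∀ (h : P) (i j : ℕ), i ≤ j → h • e^[i] v = e^[i] v → h • e^[j] v = e^[j] v := by
    intro h i j hij hi
    obtain ⟨l, rfl⟩ := Nat.exists_eq_add_of_le' hij
    rw [Function.iterate_add_apply, ← hiter, hi]
  let K : Subgroup P :=
    { carrier := {h | ∃ i, h • e^[i] v = e^[i] v}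
      one_mem' := ⟨0, one_smul _ _⟩
      mul_mem' := by
        rintro a b ⟨i, hi⟩ ⟨j, hj⟩
        refine ⟨max i j, ?_⟩
        rw [mul_smul, hmono b j _ (le_max_right i j) hj, hmono a i _ (le_max_left i j) hi]
      inv_mem' := by
        rintro a ⟨i, hi⟩
        exact ⟨i, by rw [inv_smul_eq_iff, hi]⟩ }
  refine isSolvable_of_commutator_le (K := K) ((Group.isSolvable_def _).2 ⟨n, ?_⟩) ?_
  · refine derivedSeries_eq_bot_of_locally n fun S => ?_
    choose i hi using fun h : K => h.2
    let N := S.sup i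
    let B : Subgroup K := (MulAction.stabilizer P (e^[N] v)).comap K.subtype
    refine ⟨B, fun h hh => hmono h (i h) N (Finset.le_sup hh) (hi h), ?_⟩
    let f : B →* ↥(MulAction.stabilizer H (e^[N] v) ⊓ MulAction.stabilizer H (e (e^[N] v))) :=
      (P.subtype.comp (K.subtype.comp B.subtype)).codRestrict _ fun b => by
        have hb : (b : K).1 • e^[N] v = e^[N] v := b.2
        refine ⟨hb, ?_⟩
        change (b : K).1 • e (e^[N] v) = e (e^[N] v)
        rw [← hcomm, hb]
    refine derivedSeries_eq_bot_of_injective f (fun a b hab => ?_) (hedge _ _ (he _))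
    have hab' : (f a : H) = f b := by rw [hab]
    exact Subtype.ext (Subtype.ext (Subtype.ext hab'))
  · intro a b
    have key : ∀ a b : P, ∃ N₀, ∀ N ≥ N₀, (a * b) • e^[N] v = (b * a) • e^[N] v := by
      intro a b
      obtain ⟨p, q, hpq⟩ := hcoal (a • v) v
      obtain ⟨r, s, hrs⟩ := hcoal (b • v) v
      have h1 : ∀ (c : P) (i j : ℕ), e^[i] (c • v) = e^[j] v → ∀ m,
          c • e^[m + i] v = e^[m + j] v := by
        intro c i j hc m
        rw [← hiter, Function.iterate_add_apply, hc, Function.iterate_add_apply]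
      refine ⟨p + r, fun N hN => ?_⟩
      obtain ⟨m, rfl⟩ := Nat.exists_eq_add_of_le' hN
      rw [mul_smul, mul_smul, ← add_assoc, h1 b r s hrs, add_right_comm, h1 a p q hpq,
        add_right_comm m p r, h1 a p q hpq, add_right_comm m r q, h1 b r s hrs,
        add_right_comm m s q]
    obtain ⟨N, hN⟩ := key a⁻¹ b⁻¹
    refine ⟨N, ?_⟩
    have h2 := hN N le_rfl
    rw [show ⁅a, b⁆ = (b⁻¹ * a⁻¹)⁻¹ * (a⁻¹ * b⁻¹) by simp [commutatorElement_def, mul_assoc],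
      mul_smul, h2, inv_smul_smul]


theorem dist_smul_of_dir_eq (hT : T.IsTree)
    (hadj : ∀ (h : H) (x y : X), T.Adj (h • x) (h • y) ↔ T.Adj x y)
    (hinv : ∀ (h : H) (x : X), ¬ T.Adj x (h • x)) {g : H} {x : X} (hx : g • x ≠ x)
    (h : dir T x (g • x) = dir T x (g⁻¹ • x)) :
    T.dist (dir T x (g • x)) (g • dir T x (g • x)) + 2 = T.dist x (g • x) := by
  set x' := dir T x (g • x) with hx'
  have h1 := dist_dir hT hx.symm
  have hadj' := adj_dir hT hx.symm
  rw [← hx'] at h1 hadj'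
  have h2 : dir T (g • x) x = g • x' := by
    rw [h, ← dir_smul hT hadj, smul_inv_smul]
  have hne : g • x ≠ x' := by
    intro h3
    rw [← h3] at hadj'
    exact hinv g x hadj'
  have h4 : dir T (g • x) x' = g • x' := by
    by_contra h5
    rw [← h2] at h5
    have h6 := dist_eq_add_of_dir_ne hT h5
    have h7 := hT.connected.pos_dist_of_ne hne
    rw [SimpleGraph.dist_comm, SimpleGraph.dist_eq_one_iff_adj.2 hadj',
      SimpleGraph.dist_comm] at h6
    have h8 := hT.connected.pos_dist_of_ne hx
    omega
  have h5 := dist_dir hT hne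
  rw [h4, T.dist_comm (u := g • x') (v := x'), T.dist_comm (u := g • x) (v := x')] at h5
  omega

/-- A finite set of elements of a group acting on a tree without hyperbolic elements has a
common fixed vertex. -/
theorem exists_forall_mem_smul_eq (hT : T.IsTree)
    (hadj : ∀ (h : H) (x y : X), T.Adj (h • x) (h • y) ↔ T.Adj x y)
    (hinv : ∀ (h : H) (x : X), ¬ T.Adj x (h • x))
    (hell : ∀ (g : H) (x : X), dir T x (g • x) = dir T x (g⁻¹ • x)) (S : Finset H) :
    ∃ x : X, ∀ g ∈ S, g • x = x := by
  have := hT.connected.nonempty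
  let f : X → ℕ := fun x => ∑ g ∈ S, T.dist x (g • x)
  let x := Function.argmin f
  refine ⟨x, ?_⟩
  by_contra! hc
  obtain ⟨g₁, hg₁, hx⟩ := hc
  set x' := dir T x (g₁ • x) with hx'
  have key : ∀ g ∈ S, g • x = x ∧ g • x' = x' ∨ g • x ≠ x ∧ dir T x (g • x) = x' := by
    intro g hg
    by_cases hgx : g • x = x
    · refine Or.inl ⟨hgx, ?_⟩
      have h1 := hell (g₁ * g) x
      rw [mul_smul, hgx, mul_inv_rev, mul_smul, ← hx'] at h1
      have h2 := dir_smul hT hadj g⁻¹ x (g₁⁻¹ • x)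
      rw [inv_smul_eq_iff.2 hgx.symm, ← h1, ← hell, ← hx', eq_inv_smul_iff] at h2
      exact h2
    · refine Or.inr ⟨hgx, ?_⟩
      by_contra hne
      have h1 := hell (g₁ * g) x
      have hgx' : g⁻¹ • x ≠ x := fun h => hgx (inv_smul_eq_iff.1 h).symm
      rw [mul_smul, mul_inv_rev, mul_smul,
        dir_eq_dir_of_dir_ne hT (x := g₁ • x) (y := x) (z := g₁ • g • x) hx.symm,
        dir_eq_dir_of_dir_ne hT (x := g⁻¹ • x) (y := x) (z := g⁻¹ • g₁⁻¹ • x) hgx'.symm,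
        ← hell] at h1
      · exact hne h1.symm
      · rw [dir_smul hT hadj, ← hell g₁, ← hx']
        nth_rewrite 2 [← inv_smul_smul g x]
        rw [dir_smul hT hadj]
        exact fun h => hne (smul_left_cancel _ h)
      · rw [dir_smul hT hadj]
        nth_rewrite 2 [← smul_inv_smul g₁ x]
        rw [dir_smul hT hadj, ← hell, ← hx']
        exact fun h => hne (smul_left_cancel _ h).symm
  have hlt : f x' < f x := by
    refine Finset.sum_lt_sum (fun g hg => ?_) ⟨g₁, hg₁, ?_⟩
    · rcases key g hg with ⟨h1, h2⟩ | ⟨h1, h2⟩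
      · rw [h1, h2, SimpleGraph.dist_self, SimpleGraph.dist_self]
      · have := dist_smul_of_dir_eq hT hadj hinv h1 (hell g x)
        rw [h2] at this
        omega
    · have := dist_smul_of_dir_eq hT hadj hinv hx (hell g₁ x)
      rw [← hx'] at this
      omega
  exact absurd hlt (Function.not_lt_argmin f x')

/-- A hyperbolic element `g` moves the complement of its repelling half-tree into its attracting
half-tree, away from the base point. -/
theorem smul_mem_half_of_notMem (hT : T.IsTree)
    (hadj : ∀ (h : H) (x y : X), T.Adj (h • x) (h • y) ↔ T.Adj x y) {g : H} {x : X}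
    (hg : dir T x (g • x) ≠ dir T x (g⁻¹ • x)) {y : X}
    (hy : y ∉ half T x (dir T x (g⁻¹ • x))) :
    g • y ∈ half T x (dir T x (g • x)) ∧ T.dist x y < T.dist x (g • y) := by
  have hx : g • x ≠ x := by
    intro hx
    rw [hx, inv_smul_eq_iff.2 hx.symm] at hg
    exact hg rfl
  have hx' : g⁻¹ • x ≠ x := fun h => hx (inv_smul_eq_iff.1 h).symm
  rw [mem_half_iff hT (adj_dir hT hx'.symm)] at hy
  have h1 := dist_eq_add_of_dir_ne hT hy
  rw [← dist_smul hadj g, smul_inv_smul, ← dist_smul hadj g x, smul_inv_smul,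
    T.dist_comm (u := g • y), T.dist_comm (u := g • x)] at h1
  have h2 := dist_dir hT hx.symm
  have h3 := hT.connected.dist_triangle (u := dir T x (g • x)) (v := g • x) (w := g • y)
  rw [dist_smul hadj, T.dist_comm (u := x) (v := y)] at h3
  have h4 := hT.connected.pos_dist_of_ne hx.symm
  rw [T.dist_comm (u := x) (v := y)]
  refine ⟨?_, by omega⟩
  change T.dist _ _ < T.dist _ _
  omega

/-- The filter generated by the translates `gⁿ • S`. -/
def iterFilter (g : H) (S : Set X) : Filter X := ⨅ n : ℕ, Filter.principal (g ^ n • S)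

theorem hasBasis_iterFilter {g : H} {S : Set X} (h : ∀ y ∈ S, g • y ∈ S) :
    (iterFilter g S).HasBasis (fun _ : ℕ => True) fun n => g ^ n • S := by
  refine Filter.hasBasis_iInf_principal (directed_of_isDirected_le ?_)
  refine antitone_nat_of_succ_le fun n => ?_
  rw [pow_succ, mul_smul]
  refine Set.smul_set_mono ?_
  rintro _ ⟨y, hy, rfl⟩
  exact h y hy

theorem isEnd_iterFilter (hT : T.IsTree)
    (hadj : ∀ (h : H) (x y : X), T.Adj (h • x) (h • y) ↔ T.Adj x y) {g : H} {x : X}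
    (hg : dir T x (g • x) ≠ dir T x (g⁻¹ • x)) :
    IsEnd T (iterFilter g (half T x (dir T x (g • x)))) := by
  have hx : g • x ≠ x := by
    intro hx
    rw [hx, inv_smul_eq_iff.2 hx.symm] at hg
    exact hg rfl
  have hx' : g⁻¹ • x ≠ x := fun h => hx (inv_smul_eq_iff.1 h).symm
  have hadj' := adj_dir hT hx.symm
  have hdisj : ∀ y ∈ half T x (dir T x (g • x)), y ∉ half T x (dir T x (g⁻¹ • x)) := by
    intro y hy hy'
    rw [mem_half_iff hT hadj'] at hy
    rw [mem_half_iff hT (adj_dir hT hx'.symm), hy] at hy'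
    exact hg hy'
  have hstep : ∀ y ∈ half T x (dir T x (g • x)), g • y ∈ half T x (dir T x (g • x)) :=
    fun y hy => (smul_mem_half_of_notMem hT hadj hg (hdisj y hy)).1
  have hb := hasBasis_iterFilter hstep
  have hsmul : ∀ n : ℕ, g ^ n • half T x (dir T x (g • x)) =
      half T (g ^ n • x) (g ^ n • dir T x (g • x)) := by
    intro n
    ext y
    rw [Set.mem_smul_set_iff_inv_smul_mem]
    nth_rewrite 2 [← smul_inv_smul (g ^ n) y]
    rw [smul_mem_half hadj]
  refine ⟨?_, fun U hU => ?_, fun v => ?_⟩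
  · refine hb.neBot_iff.2 fun {n} _ => Set.Nonempty.smul_set ⟨dir T x (g • x), ?_⟩
    change T.dist _ _ < T.dist _ _
    rw [SimpleGraph.dist_self, SimpleGraph.dist_eq_one_iff_adj.2 hadj']
    exact one_pos
  · obtain ⟨n, -, hn⟩ := hb.mem_iff.1 hU
    refine ⟨g ^ n • x, g ^ n • dir T x (g • x), (hadj _ _ _).2 hadj', ?_, ?_⟩
    · rw [← hsmul]
      exact hb.mem_of_mem trivial
    · rwa [← hsmul]
  · have hfar : ∀ (n : ℕ), ∀ y ∈ half T x (dir T x (g • x)),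
        g ^ n • y ∈ half T x (dir T x (g • x)) ∧ n ≤ T.dist x (g ^ n • y) := by
      intro n y hy
      induction n with
      | zero => simpa using hy
      | succ n ih =>
        rw [pow_succ', mul_smul]
        have := smul_mem_half_of_notMem hT hadj hg (hdisj _ ih.1)
        exact ⟨this.1, by omega⟩
    refine hb.mem_iff.2 ⟨T.dist x v + 1, trivial, ?_⟩
    rintro _ ⟨y, hy, rfl⟩ hv
    have := (hfar (T.dist x v + 1) y hy).2
    rw [show g ^ (T.dist x v + 1) • y = v from hv] at this
    omega

/-- A group acting without inversions on a tree with uniformly solvable edge stabilizers satisfies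
the alternative or fixes a vertex. -/
theorem alternative_of_isTree (hT : T.IsTree)
    (hadj : ∀ (h : H) (x y : X), T.Adj (h • x) (h • y) ↔ T.Adj x y)
    (hinv : ∀ (h : H) (x : X), ¬ T.Adj x (h • x)) {n : ℕ}
    (hedge : ∀ x y : X, T.Adj x y → derivedSeries
      ↥(MulAction.stabilizer H x ⊓ MulAction.stabilizer H y) n = ⊥) :
    (ContainsNonabelianFree H ∨ IsVirtuallySolvable H) ∨ ∃ x : X, ∀ h : H, h • x = x := by
  by_cases hell : ∀ (g : H) (x : X), dir T x (g • x) = dir T x (g⁻¹ • x)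
  · by_cases hfix : ∃ x : X, ∀ h : H, h • x = x
    · exact Or.inr hfix
    refine Or.inl (Or.inr (isVirtuallySolvable_of_isSolvable ((Group.isSolvable_def _).2 ⟨n, ?_⟩)))
    push Not at hfix
    classical
    refine derivedSeries_eq_bot_of_locally n fun S => ?_
    obtain ⟨v, hv⟩ := exists_forall_mem_smul_eq hT hadj hinv hell S
    obtain ⟨h, hh⟩ := hfix v
    obtain ⟨w, hw⟩ := exists_forall_mem_smul_eq hT hadj hinv hell (insert h S)
    have hne : v ≠ w := by
      rintro rfl
      exact hh (hw h (Finset.mem_insert_self _ _))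
    refine ⟨MulAction.stabilizer H v ⊓ MulAction.stabilizer H (dir T v w),
      fun g hg => ⟨hv g hg, ?_⟩, hedge _ _ (adj_dir hT hne)⟩
    change g • dir T v w = dir T v w
    rw [← dir_smul hT hadj, hv g hg, hw g (Finset.mem_insert_of_mem hg)]
  · push Not at hell
    obtain ⟨g, x, hg⟩ := hell
    left
    have hg' : dir T x (g⁻¹ • x) ≠ dir T x (g⁻¹⁻¹ • x) := by
      rw [inv_inv]
      exact hg.symm
    have hφ := isEnd_iterFilter hT hadj hg
    have hψ := isEnd_iterFilter hT hadj hg'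
    have hx : g • x ≠ x := by
      intro hx
      rw [hx, inv_smul_eq_iff.2 hx.symm] at hg
      exact hg rfl
    have hx' : g⁻¹ • x ≠ x := fun h => hx (inv_smul_eq_iff.1 h).symm
    have hdisj : Disjoint (half T x (dir T x (g • x))) (half T x (dir T x (g⁻¹ • x))) := by
      rw [Set.disjoint_left]
      intro y hy hy'
      rw [mem_half_iff hT (adj_dir hT hx.symm)] at hy
      rw [mem_half_iff hT (adj_dir hT hx'.symm), hy] at hy'
      exact hg hy'
    have hstep : ∀ y, y ∉ half T x (dir T x (g⁻¹ • x)) → g • y ∈ half T x (dir T x (g • x)) :=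
      fun y hy => (smul_mem_half_of_notMem hT hadj hg hy).1
    have hstep' : ∀ y, y ∉ half T x (dir T x (g • x)) → g⁻¹ • y ∈ half T x (dir T x (g⁻¹ • x)) := by
      intro y hy
      refine (smul_mem_half_of_notMem hT hadj hg' ?_).1
      rwa [inv_inv]
    have hbφ := hasBasis_iterFilter (g := g) fun y hy => hstep y (Set.disjoint_left.1 hdisj hy)
    have hbψ := hasBasis_iterFilter (g := g⁻¹) fun y hy => hstep' y (Set.disjoint_right.1 hdisj hy)
    have := hφ.neBot
    refine alternative_of_northSouth (g := g)
      (φ := iterFilter g (half T x (dir T x (g • x))))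
      (ψ := iterFilter g⁻¹ (half T x (dir T x (g⁻¹ • x)))) ?_ ?_ ?_
      (hφ.isSolvable_stabilizer hT hadj hedge) (hψ.isSolvable_stabilizer hT hadj hedge)
    · intro U hU V hV
      obtain ⟨n, -, hn⟩ := hbφ.mem_iff.1 hU
      obtain ⟨m, -, hm⟩ := hbψ.mem_iff.1 hV
      refine ⟨n + 1 + m, fun l hl y hy => hn ?_⟩
      obtain ⟨j, rfl⟩ := Nat.exists_eq_add_of_le hl
      rw [show n + 1 + m + j = n + (j + (1 + m)) by ring, pow_add, mul_smul]
      refine Set.smul_mem_smul_set ?_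
      induction j with
      | zero =>
        rw [zero_add, pow_add, pow_one, mul_smul]
        refine hstep _ fun hc => hy (hm ?_)
        rw [Set.mem_smul_set_iff_inv_smul_mem, inv_pow, inv_inv]
        exact hc
      | succ j ih =>
        rw [add_right_comm, pow_succ', mul_smul]
        exact hstep _ (Set.disjoint_left.1 hdisj (ih (by omega)))
    · refine Filter.disjoint_iff.2 ⟨_, hbφ.mem_of_mem (i := 0) trivial, _,
        hbψ.mem_of_mem (i := 0) trivial, ?_⟩
      simpa using hdisj
    · have hends : ∀ χ ∈ ({iterFilter g (half T x (dir T x (g • x))),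
          iterFilter g⁻¹ (half T x (dir T x (g⁻¹ • x)))} : Set (Filter X)), IsEnd T χ := by
        rintro χ (rfl | rfl)
        exacts [hφ, hψ]
      exact fun h χ hχ χ' hχ' => ((hends χ hχ).smul hadj h).eq_or_disjoint hT (hends χ' hχ')

end TreeActions

section TreeCriterion

/-- A graph with a height function for which every vertex but the root has a unique lower
neighbour, and adjacent vertices have different heights, is a tree. -/
theorem isTree_of_height {X : Type*} {T : SimpleGraph X} (κ : X → ℕ) (r : X)
    (hne : ∀ x y, T.Adj x y → κ x ≠ κ y)
    (hex : ∀ x, x ≠ r → ∃ y, T.Adj x y ∧ κ y < κ x)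
    (huniq : ∀ x y z, T.Adj x y → T.Adj x z → κ y < κ x → κ z < κ x → y = z) : T.IsTree := by
  have hr : ∀ x, T.Reachable x r := by
    intro x
    induction hn : κ x using Nat.strong_induction_on generalizing x with
    | _ n ih =>
      rcases eq_or_ne x r with rfl | hx
      · exact SimpleGraph.Reachable.refl x
      · obtain ⟨y, hxy, hy⟩ := hex x hx
        exact hxy.reachable.trans (ih (κ y) (hn ▸ hy) y rfl)
  have : Nonempty X := ⟨r⟩
  refine ⟨⟨fun x y => (hr x).trans (hr y).symm⟩, fun v c hc => ?_⟩
  classical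
  obtain ⟨m, hm, hmax⟩ := c.support.toFinset.exists_max_image κ ⟨v, by simp⟩
  have hm' : m ∈ c.support := by simpa using hm
  have hc' : (c.rotate m hm').IsCycle := hc.rotate hm'
  have hlow : ∀ y, y ∈ (c.rotate m hm').support → T.Adj m y → κ y < κ m := by
    intro y hy hadj
    refine lt_of_le_of_ne (hmax y ?_) (hne _ _ hadj).symm
    simpa using hy
  refine hc'.snd_ne_penultimate (huniq m _ _ ?_ ?_ ?_ ?_)
  · exact SimpleGraph.Walk.adj_snd hc'.not_nil
  · exact (SimpleGraph.Walk.adj_penultimate hc'.not_nil).symm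
  · exact hlow _ (SimpleGraph.Walk.getVert_mem_support _ _) (SimpleGraph.Walk.adj_snd hc'.not_nil)
  · exact hlow _ (SimpleGraph.Walk.getVert_mem_support _ _)
      (SimpleGraph.Walk.adj_penultimate hc'.not_nil).symm

end TreeCriterion

end TitsAlternative

namespace TitsAlternative

open MvPolynomial

/-- The coordinate ring of the affine plane. -/
abbrev Plane (k : Type*) [Field k] := MvPolynomial (Fin 2) k

/-- The automorphism group of the affine plane. -/
abbrev PlaneAut (k : Type*) [Field k] := Plane k ≃ₐ[k] Plane k

section Jacobian

variable {k : Type*} [Field k]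

/-- The Jacobian determinant of two polynomials. -/
noncomputable def jac (f g : Plane k) : Plane k :=
  pderiv 0 f * pderiv 1 g - pderiv 1 f * pderiv 0 g

theorem derivation_algHom (D : Derivation k (Plane k) (Plane k)) (φ : Plane k →ₐ[k] Plane k)
    (G : Plane k) :
    D (φ G) = φ (pderiv 0 G) * D (φ (X 0)) + φ (pderiv 1 G) * D (φ (X 1)) := by
  induction G using MvPolynomial.induction_on with
  | C a =>
    have : φ (C a) = C a := φ.commutes a
    rw [this]
    simp
  | add p q hp hq =>
    simp only [map_add, hp, hq]
    ring
  | mul_X p i hp =>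
    simp only [map_mul, Derivation.leibniz, hp, map_add, smul_eq_mul]
    fin_cases i <;> simp <;> ring

theorem jac_algHom_right (φ : Plane k →ₐ[k] Plane k) (G : Plane k) :
    jac (φ (X 0)) (φ G) = φ (pderiv 1 G) * jac (φ (X 0)) (φ (X 1)) := by
  simp only [jac, derivation_algHom _ φ G]
  ring

theorem jac_algHom (φ : Plane k →ₐ[k] Plane k) (F G : Plane k) :
    jac (φ F) (φ G) = φ (jac F G) * jac (φ (X 0)) (φ (X 1)) := by
  simp only [jac, derivation_algHom _ φ G, derivation_algHom _ φ F, map_sub, map_mul]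
  ring

theorem exists_jac_eq_C (φ : PlaneAut k) : ∃ c : k, c ≠ 0 ∧ jac (φ (X 0)) (φ (X 1)) = C c := by
  have h := jac_algHom (φ : Plane k →ₐ[k] Plane k) (φ.symm (X 0)) (φ.symm (X 1))
  simp only [AlgEquiv.coe_toAlgHom, AlgEquiv.apply_symm_apply] at h
  have h1 : jac (X 0 : Plane k) (X 1) = 1 := by
    simp [jac]
  rw [h1] at h
  have hu : IsUnit (jac (φ (X 0)) (φ (X 1))) := IsUnit.of_mul_eq_one_right _ h.symm
  obtain ⟨c, hc, hc'⟩ := isUnit_iff_eq_C_of_isReduced.1 hu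
  exact ⟨c, hc.ne_zero, hc'⟩

end Jacobian

section Degrees

variable {k : Type*} [Field k]

theorem totalDegree_pderiv_le (i : Fin 2) (f : Plane k) :
    (pderiv i f).totalDegree ≤ f.totalDegree - 1 := by
  refine Finset.sup_le fun s hs => ?_
  rw [mem_support_iff, coeff_pderiv] at hs
  have h := le_totalDegree (mem_support_iff.2 (left_ne_zero_of_mul hs))
  rw [Finsupp.sum_add_index' (fun _ => rfl) (fun _ _ _ => rfl), Finsupp.sum_single_index rfl] at h
  omega

theorem totalDegree_mul_jac_le {f : Plane k} (hf : 1 ≤ f.totalDegree) (g u : Plane k) :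
    (g * jac f u).totalDegree ≤ g.totalDegree + f.totalDegree + u.totalDegree - 2 := by
  rcases Nat.eq_zero_or_pos u.totalDegree with hu | hu
  · rw [totalDegree_eq_zero_iff_eq_C.1 hu]
    simp [jac]
  · have h : (jac f u).totalDegree ≤ f.totalDegree + u.totalDegree - 2 := by
      refine (totalDegree_sub _ _).trans (max_le ?_ ?_)
      all_goals
        refine (totalDegree_mul _ _).trans ?_
        have h0 := totalDegree_pderiv_le 0 f
        have h1 := totalDegree_pderiv_le 1 f
        have h2 := totalDegree_pderiv_le 0 u
        have h3 := totalDegree_pderiv_le 1 u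
        omega
    have := totalDegree_mul g (jac f u)
    omega

theorem totalDegree_X_aut_pos (φ : PlaneAut k) (i : Fin 2) : 1 ≤ (φ (X i)).totalDegree := by
  by_contra h
  have h0 : (φ (X i)).totalDegree = 0 := by omega
  have h1 : φ (X i) = φ (C (coeff 0 (φ (X i)))) := by
    conv_lhs => rw [totalDegree_eq_zero_iff_eq_C.1 h0]
    exact (φ.commutes _).symm
  have h2 := congrArg totalDegree (φ.injective h1)
  rw [totalDegree_X, totalDegree_C] at h2
  exact one_ne_zero h2

theorem aut_monomial (φ : PlaneAut k) (s : Fin 2 →₀ ℕ) (c : k) :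
    φ (monomial s c) = C c * (φ (X 0) ^ s 0 * φ (X 1) ^ s 1) := by
  rw [monomial_eq, map_mul, show φ (C c) = C c from φ.commutes c, Finsupp.prod_fintype _ _ (by simp)]
  simp

theorem totalDegree_pow_eq {f : Plane k} (hf : f ≠ 0) (n : ℕ) :
    (f ^ n).totalDegree = n * f.totalDegree := by
  induction n with
  | zero => simp
  | succ n ih =>
    rw [pow_succ, totalDegree_mul_of_isDomain (pow_ne_zero _ hf) hf, ih]
    ring

theorem totalDegree_aut_monomial (φ : PlaneAut k) (s : Fin 2 →₀ ℕ) {c : k} (hc : c ≠ 0) :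
    (φ (monomial s c)).totalDegree =
      s 0 * (φ (X 0)).totalDegree + s 1 * (φ (X 1)).totalDegree := by
  have h : ∀ i, φ (X i) ≠ 0 := fun i => by simp
  rw [aut_monomial, totalDegree_mul_of_isDomain (by simpa using hc)
    (mul_ne_zero (pow_ne_zero _ (h 0)) (pow_ne_zero _ (h 1))), totalDegree_C,
    totalDegree_mul_of_isDomain (pow_ne_zero _ (h 0)) (pow_ne_zero _ (h 1)),
    totalDegree_pow_eq (h 0), totalDegree_pow_eq (h 1), zero_add]

theorem totalDegree_aut_le (φ : PlaneAut k) (G : Plane k) {W : ℕ}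
    (h : ∀ s ∈ G.support, s 0 * (φ (X 0)).totalDegree + s 1 * (φ (X 1)).totalDegree ≤ W) :
    (φ G).totalDegree ≤ W := by
  rw [G.as_sum, map_sum]
  refine totalDegree_finsetSum_le fun s hs => ?_
  rw [totalDegree_aut_monomial φ s (mem_support_iff.1 hs)]
  exact h s hs

theorem le_totalDegree_aut (φ : PlaneAut k) (G : Plane k) {t : Fin 2 →₀ ℕ} (ht : t ∈ G.support)
    (h : ∀ s ∈ G.support, s ≠ t →
      s 0 * (φ (X 0)).totalDegree + s 1 * (φ (X 1)).totalDegree <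
        t 0 * (φ (X 0)).totalDegree + t 1 * (φ (X 1)).totalDegree) :
    t 0 * (φ (X 0)).totalDegree + t 1 * (φ (X 1)).totalDegree ≤ (φ G).totalDegree := by
  set W := t 0 * (φ (X 0)).totalDegree + t 1 * (φ (X 1)).totalDegree with hW
  rcases Nat.eq_zero_or_pos W with h0 | h0
  · omega
  have h1 := totalDegree_aut_monomial φ t (mem_support_iff.1 ht)
  have h2 : (φ (G - monomial t (coeff t G))).totalDegree ≤ W - 1 := by
    refine totalDegree_aut_le φ _ fun s hs => ?_
    rw [mem_support_iff, coeff_sub, coeff_monomial] at hs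
    split_ifs at hs with hts
    · simp [hts] at hs
    · rw [sub_zero] at hs
      have := h s (mem_support_iff.2 hs) (Ne.symm hts)
      omega
  have h3 : φ G = φ (monomial t (coeff t G)) + φ (G - monomial t (coeff t G)) := by
    rw [← map_add]
    congr 1
    ring
  rw [h3, totalDegree_add_eq_left_of_totalDegree_lt (by omega), h1]

theorem coeff_X_mul_pderiv (i : Fin 2) (G : Plane k) (s : Fin 2 →₀ ℕ) :
    coeff s (X i * pderiv i G) = s i * coeff s G := by
  rw [coeff_X_mul', coeff_pderiv]
  split_ifs with h
  · have h1 : 1 ≤ s i := Nat.one_le_iff_ne_zero.2 (Finsupp.mem_support_iff.1 h)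
    have h2 : s - Finsupp.single i 1 + Finsupp.single i 1 = s :=
      tsub_add_cancel_of_le (Finsupp.single_le_iff.2 h1)
    rw [h2, Finsupp.tsub_apply, Finsupp.single_eq_same, Nat.cast_sub h1]
    push_cast
    ring
  · rw [Finsupp.notMem_support_iff.1 h]
    simp

/-- Killing the coefficients whose exponent of `X 1` lies in a finite set raises the degree of the
image under an automorphism in a controlled way. -/
theorem exists_coeff_eq_prod_mul (φ : PlaneAut k) (G : Plane k) (J : Finset ℕ) :
    ∃ G' : Plane k, (∀ s, coeff s G' = (∏ j ∈ J, ((s 1 : k) - j)) * coeff s G) ∧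
      (φ G').totalDegree ≤ (φ G).totalDegree +
        J.card * ((φ (X 0)).totalDegree + (φ (X 1)).totalDegree - 2) := by
  classical
  induction J using Finset.induction_on with
  | empty => exact ⟨G, by simp, by simp⟩
  | insert j J hj ih =>
    obtain ⟨G', h1, h2⟩ := ih
    refine ⟨X 1 * pderiv 1 G' - C (j : k) * G', fun s => ?_, ?_⟩
    · rw [coeff_sub, coeff_X_mul_pderiv, coeff_C_mul, h1, Finset.prod_insert hj]
      ring
    · obtain ⟨c, hc, hc'⟩ := exists_jac_eq_C φ
      have h3 := jac_algHom_right (φ : Plane k →ₐ[k] Plane k) G'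
      simp only [AlgEquiv.coe_toAlgHom] at h3
      rw [hc'] at h3
      have h4 : φ (pderiv 1 G') = C c⁻¹ * jac (φ (X 0)) (φ G') := by
        rw [h3, mul_comm (φ _), ← mul_assoc, ← C_mul, inv_mul_cancel₀ hc, C_1, one_mul]
      have h5 := totalDegree_mul_jac_le (totalDegree_X_aut_pos φ 0) (C c⁻¹ * φ (X 1)) (φ G')
      have h6 := totalDegree_X_aut_pos φ 0
      have h7 := totalDegree_X_aut_pos φ 1
      have h8 := totalDegree_mul (C (j : k)) (φ G')
      have h9 := totalDegree_mul (C c⁻¹) (φ (X 1))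
      rw [totalDegree_C] at h8 h9
      rw [Finset.card_insert_of_notMem hj, map_sub, map_mul, map_mul, h4,
        show φ (C (j : k)) = C (j : k) from φ.commutes _, Nat.succ_mul,
        show φ (X 1) * (C c⁻¹ * jac (φ (X 0)) (φ G')) = C c⁻¹ * φ (X 1) * jac (φ (X 0)) (φ G') by
          ring]
      refine (totalDegree_sub _ _).trans (max_le ?_ ?_)
      · omega
      · omega

/-- The degrees of the components of an automorphism of the plane divide one another. -/
theorem totalDegree_dvd_or_dvd [CharZero k] (φ : PlaneAut k) :
    (φ (X 0)).totalDegree ∣ (φ (X 1)).totalDegree ∨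
      (φ (X 1)).totalDegree ∣ (φ (X 0)).totalDegree := by
  classical
  by_contra! hcon
  set m := (φ (X 0)).totalDegree with hm
  set n := (φ (X 1)).totalDegree with hn
  have hm0 : 1 ≤ m := totalDegree_X_aut_pos φ 0
  have hn0 : 1 ≤ n := totalDegree_X_aut_pos φ 1
  obtain ⟨e, a, b, he, hab, hma, hnb⟩ := Nat.exists_coprime' (m := m) (n := n)
    (Nat.gcd_pos_of_pos_left n hm0)
  have ha : 2 ≤ a := by
    have h1 : a ≠ 1 := fun h => hcon.1 (by rw [hma, hnb, h, one_mul]; exact dvd_mul_left _ _)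
    have h0 : a ≠ 0 := fun h => by rw [h, zero_mul] at hma; omega
    omega
  have hb : 2 ≤ b := by
    have h1 : b ≠ 1 := fun h => hcon.2 (by rw [hma, hnb, h, one_mul]; exact dvd_mul_left _ _)
    have h0 : b ≠ 0 := fun h => by rw [h, zero_mul] at hnb; omega
    omega
  let G := φ.symm (X 0)
  have hG : φ G = X 0 := φ.apply_symm_apply _
  let w : (Fin 2 →₀ ℕ) → ℕ := fun s => s 0 * m + s 1 * n
  let W := G.support.sup w
  let J := (G.support.filter fun s => w s = W).image fun s => s 1
  have hGne : G.support.Nonempty := by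
    rw [Finset.nonempty_iff_ne_empty, Ne, support_eq_empty]
    intro h
    rw [h, map_zero] at hG
    exact X_ne_zero 0 hG.symm
  have hJne : J.Nonempty := by
    obtain ⟨s, hs, hsW⟩ := Finset.exists_mem_eq_sup _ hGne w
    exact ⟨s 1, Finset.mem_image_of_mem _ (Finset.mem_filter.2 ⟨hs, hsW.symm⟩)⟩
  let j₀ := J.max' hJne
  obtain ⟨t, ht, htj⟩ := Finset.mem_image.1 (J.max'_mem hJne)
  obtain ⟨htG, htW⟩ := Finset.mem_filter.1 ht
  obtain ⟨G', hG', hdeg⟩ := exists_coeff_eq_prod_mul φ G (J.erase j₀)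
  have htG' : t ∈ G'.support := by
    rw [mem_support_iff, hG']
    refine mul_ne_zero (Finset.prod_ne_zero_iff.2 fun j hj => ?_) (mem_support_iff.1 htG)
    rw [sub_ne_zero, Ne, Nat.cast_inj, htj]
    exact (Finset.ne_of_mem_erase hj).symm
  have hdom : w t ≤ (φ G').totalDegree := by
    refine le_totalDegree_aut φ G' htG' fun s hs hst => ?_
    rw [mem_support_iff, hG'] at hs
    have hsG := mem_support_iff.2 (right_ne_zero_of_mul hs)
    have hle : w s ≤ W := Finset.le_sup hsG
    change w s < w t
    rw [htW]
    refine lt_of_le_of_ne hle fun hsW => hst ?_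
    have hsJ : s 1 ∈ J := Finset.mem_image_of_mem _ (Finset.mem_filter.2 ⟨hsG, hsW⟩)
    have hs1 : s 1 = t 1 := by
      rw [htj]
      by_contra hne
      refine left_ne_zero_of_mul hs (Finset.prod_eq_zero (Finset.mem_erase.2 ⟨hne, hsJ⟩) ?_)
      exact sub_self _
    have hs0 : s 0 * m + s 1 * n = t 0 * m + t 1 * n := hsW.trans htW.symm
    rw [hs1] at hs0
    have : s 0 = t 0 := Nat.eq_of_mul_eq_mul_right hm0 (by omega)
    ext i
    fin_cases i
    exacts [this, hs1]
  rw [htW] at hdom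
  rw [hG, totalDegree_X, Finset.card_erase_of_mem (J.max'_mem hJne)] at hdeg
  have hcard : J.card ≤ j₀ / a + 1 := by
    rw [← Finset.card_range (j₀ / a + 1)]
    refine Finset.card_le_card_of_injOn (· / a) (fun j hj => ?_) fun i hi j hj hij => ?_
    · have := Nat.div_le_div_right (c := a) (J.le_max' j hj)
      simpa [Nat.lt_succ_iff] using this
    · obtain ⟨p, hp, rfl⟩ := Finset.mem_image.1 hi
      obtain ⟨q, hq, rfl⟩ := Finset.mem_image.1 hj
      have hpq : p 0 * m + p 1 * n = q 0 * m + q 1 * n :=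
        (Finset.mem_filter.1 hp).2.trans (Finset.mem_filter.1 hq).2.symm
      have hmod : p 1 ≡ q 1 [MOD a] := by
        have h1 : b * p 1 ≡ b * q 1 [MOD a] := by
          have h2 : p 0 * a + b * p 1 = q 0 * a + b * q 1 := by
            rw [hma, hnb] at hpq
            refine Nat.eq_of_mul_eq_mul_right he ?_
            linarith
          have h3 : p 0 * a + b * p 1 ≡ q 0 * a + b * q 1 [MOD a] := by rw [h2]
          simpa [Nat.ModEq] using h3
        exact Nat.ModEq.cancel_left_of_coprime hab h1
      rw [← Nat.div_add_mod (p 1) a, ← Nat.div_add_mod (q 1) a, hmod,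
        show p 1 / a = q 1 / a from hij]
  have hW1 : j₀ * n ≤ W := by
    rw [← htW, ← show t 1 = j₀ from htj]
    exact Nat.le_add_left _ _
  have hlow : ∀ s ∈ G.support, w s ≤ W := fun s hs => Finset.le_sup hs
  obtain ⟨T, hT⟩ : ∃ T, J.card = T + 1 := ⟨J.card - 1, by have := hJne.card_pos; omega⟩
  rw [hT, Nat.add_sub_cancel] at hdeg
  have hTa : T * a ≤ j₀ := (Nat.le_div_iff_mul_le (by omega)).1 (by omega)
  have hkey : T * a * n ≤ 1 + T * (m + n - 2) :=
    (Nat.mul_le_mul_right n hTa).trans (hW1.trans (hdom.trans hdeg))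
  rcases Nat.eq_zero_or_pos T with hT0 | hT0
  · rw [hT0, zero_mul, add_zero] at hdeg
    have hm2 : 2 ≤ m := ha.trans (hma ▸ Nat.le_mul_of_pos_right a he)
    have hn2 : 2 ≤ n := hb.trans (hnb ▸ Nat.le_mul_of_pos_right b he)
    have hW0 : W = 0 := by
      have h1 : t 0 * m + t 1 * n ≤ 1 := htW.trans_le (hdom.trans hdeg)
      have h2 : t 0 = 0 := by
        by_contra h
        have := Nat.mul_le_mul (Nat.one_le_iff_ne_zero.2 h) hm2
        omega
      have h3 : t 1 = 0 := by
        by_contra h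
        have := Nat.mul_le_mul (Nat.one_le_iff_ne_zero.2 h) hn2
        omega
      rw [← htW]
      simp [w, h2, h3]
    have := totalDegree_aut_le φ G (W := 0) fun s hs => (hlow s hs).trans_eq hW0
    rw [hG, totalDegree_X] at this
    omega
  · obtain ⟨r, hr⟩ : ∃ r, m + n = r + 2 := ⟨m + n - 2, by omega⟩
    rw [hr, Nat.add_sub_cancel] at hkey
    have h1 : a + b ≤ a * b := by nlinarith
    have h2 : m + n ≤ a * n := by
      rw [hma, hnb]
      nlinarith
    nlinarith

end Degrees

end TitsAlternative

namespace TitsAlternative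

open MvPolynomial MonomialOrder

section Elementary

variable {k : Type*} [Field k]

theorem algEquiv_C (φ : PlaneAut k) (a : k) : φ (C a) = C a := φ.commutes a

theorem aut_ext {φ ψ : PlaneAut k} (h0 : φ (X 0) = ψ (X 0)) (h1 : φ (X 1) = ψ (X 1)) :
    φ = ψ := by
  have h : (φ : Plane k →ₐ[k] Plane k) = ψ := by
    refine MvPolynomial.algHom_ext fun i => ?_
    fin_cases i
    exacts [h0, h1]
  exact AlgEquiv.ext fun x => DFunLike.congr_fun h x

/-- The automorphism exchanging the coordinates. -/
noncomputable def flip (k : Type*) [Field k] : PlaneAut k := renameEquiv k (Equiv.swap 0 1)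

@[simp]
theorem flip_X_zero : flip k (X 0) = X 1 := by simp [flip]

@[simp]
theorem flip_X_one : flip k (X 1) = X 0 := by simp [flip]

/-- The endomorphism `X 0 ↦ X 0`, `X 1 ↦ γ X 1 + p (X 0)`. -/
noncomputable def shearHom (γ : k) (p : Polynomial k) : Plane k →ₐ[k] Plane k :=
  aeval ![X 0, C γ * X 1 + Polynomial.aeval (X 0) p]

theorem shearHom_comp (γ γ' : k) (p p' : Polynomial k) (h : γ' * γ = 1)
    (hp : Polynomial.C γ' * p + p' = 0) : (shearHom γ p).comp (shearHom γ' p') = AlgHom.id k _ := by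
  refine MvPolynomial.algHom_ext fun i => ?_
  have h1 : Polynomial.aeval (X 0 : Plane k) (Polynomial.C γ' * p + p') = 0 := by rw [hp, map_zero]
  rw [map_add, map_mul, Polynomial.aeval_C, algebraMap_eq] at h1
  fin_cases i
  · simp [shearHom]
  · simp only [shearHom, AlgHom.comp_apply, Fin.mk_one, aeval_X, Matrix.cons_val_one,
      Matrix.cons_val_fin_one, map_add, map_mul, algHom_C, algebraMap_eq,
      ← Polynomial.aeval_algHom_apply, Matrix.cons_val_zero, AlgHom.id_apply]
    rw [mul_add, ← mul_assoc, ← C_mul, h, C_1, one_mul, add_assoc, h1, add_zero]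

/-- The triangular automorphism `X 0 ↦ X 0`, `X 1 ↦ γ X 1 + p (X 0)`. -/
noncomputable def shear (γ : k) (hγ : γ ≠ 0) (p : Polynomial k) : PlaneAut k :=
  AlgEquiv.ofAlgHom (shearHom γ p) (shearHom γ⁻¹ (-(Polynomial.C γ⁻¹ * p)))
    (shearHom_comp _ _ _ _ (inv_mul_cancel₀ hγ) (by ring))
    (shearHom_comp _ _ _ _ (mul_inv_cancel₀ hγ) (by
      rw [mul_neg, ← mul_assoc, ← Polynomial.C_mul, mul_inv_cancel₀ hγ]
      simp))

@[simp]
theorem shear_X_zero (γ : k) (hγ : γ ≠ 0) (p : Polynomial k) : shear γ hγ p (X 0) = X 0 := by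
  simp [shear, shearHom]

@[simp]
theorem shear_X_one (γ : k) (hγ : γ ≠ 0) (p : Polynomial k) :
    shear γ hγ p (X 1) = C γ * X 1 + Polynomial.aeval (X 0) p := by
  simp [shear, shearHom]

end Elementary

section Reduction

variable {k : Type*} [Field k]

theorem degree_X_mul_pderiv_le (i : Fin 2) (f : Plane k) :
    degLex.degree (X i * pderiv i f) ≼[degLex] degLex.degree f := by
  refine degree_le_degree_of_support_subset fun s hs => ?_
  rw [mem_support_iff, coeff_X_mul_pderiv] at hs
  exact mem_support_iff.2 (right_ne_zero_of_mul hs)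

variable [CharZero k]

/-- The leading exponents of two polynomials with constant Jacobian are proportional. -/
theorem degree_parallel {f g : Plane k} {c : k} (h : jac f g = C c)
    (hd : 2 < f.totalDegree + g.totalDegree) :
    degLex.degree f 0 * degLex.degree g 1 = degLex.degree f 1 * degLex.degree g 0 := by
  classical
  rcases eq_or_ne f 0 with rfl | hf
  · simp
  rcases eq_or_ne g 0 with rfl | hg
  · simp
  have h1 : X 0 * pderiv 0 f * (X 1 * pderiv 1 g) - X 1 * pderiv 1 f * (X 0 * pderiv 0 g) =
      C c * (X 0 * X 1) := by
    rw [← h, jac]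
    ring
  have h2 := congrArg (coeff (degLex.degree f + degLex.degree g)) h1
  rw [coeff_sub, coeff_mul_of_add_of_degree_le (degree_X_mul_pderiv_le 0 f)
    (degree_X_mul_pderiv_le 1 g), coeff_mul_of_add_of_degree_le (degree_X_mul_pderiv_le 1 f)
    (degree_X_mul_pderiv_le 0 g), coeff_X_mul_pderiv, coeff_X_mul_pderiv, coeff_X_mul_pderiv,
    coeff_X_mul_pderiv] at h2
  have h3 : coeff (degLex.degree f + degLex.degree g) (C c * (X 0 * X 1) : Plane k) = 0 := by
    refine coeff_eq_zero_of_totalDegree_lt ?_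
    refine lt_of_le_of_lt ((totalDegree_mul _ _).trans (add_le_add_right
      (totalDegree_mul _ _) _)) ?_
    rw [totalDegree_C, totalDegree_X, totalDegree_X]
    change 0 + (1 + 1) < Finsupp.degree (degLex.degree f + degLex.degree g)
    rw [map_add, degree_degLexDegree, degree_degLexDegree]
    omega
  rw [h3] at h2
  have hf' := degLex.coeff_degree_ne_zero_iff.2 hf
  have hg' := degLex.coeff_degree_ne_zero_iff.2 hg
  have h4 : ((degLex.degree f 0 : k) * degLex.degree g 1 - degLex.degree f 1 * degLex.degree g 0) *
      (coeff (degLex.degree f) f * coeff (degLex.degree g) g) = 0 := by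
    rw [← h2]
    ring
  have h5 := (mul_eq_zero.1 h4).resolve_right (mul_ne_zero hf' hg')
  exact_mod_cast sub_eq_zero.1 h5

theorem degree_eq_smul {f g : Plane k} {c : k} (h : jac f g = C c) {d : ℕ}
    (hf : 1 ≤ f.totalDegree) (hg : 2 ≤ g.totalDegree) (hd : g.totalDegree = d * f.totalDegree) :
    degLex.degree g = d • degLex.degree f := by
  have h1 := degree_parallel h (by omega)
  rw [← degree_degLexDegree, ← degree_degLexDegree, Finsupp.degree_eq_sum, Finsupp.degree_eq_sum,
    Fin.sum_univ_two, Fin.sum_univ_two] at hd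
  rw [← degree_degLexDegree, Finsupp.degree_eq_sum, Fin.sum_univ_two] at hf
  generalize degLex.degree f = p at *
  generalize degLex.degree g = q at *
  ext i
  simp only [Finsupp.smul_apply, smul_eq_mul]
  fin_cases i
  · refine Nat.eq_of_mul_eq_mul_right hf ?_
    calc q 0 * (p 0 + p 1) = q 0 * p 0 + p 1 * q 0 := by ring
      _ = p 0 * (q 0 + q 1) := by rw [← h1]; ring
      _ = d * p 0 * (p 0 + p 1) := by rw [hd]; ring
  · refine Nat.eq_of_mul_eq_mul_right hf ?_
    calc q 1 * (p 0 + p 1) = q 1 * p 1 + p 0 * q 1 := by ring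
      _ = p 1 * (q 0 + q 1) := by rw [h1]; ring
      _ = d * p 1 * (p 0 + p 1) := by rw [hd]; ring

/-- The degree of an automorphism of the plane can be lowered by a triangular automorphism. -/
theorem exists_totalDegree_sub_lt (φ : PlaneAut k)
    (h : (φ (X 0)).totalDegree ≤ (φ (X 1)).totalDegree) (h2 : 2 ≤ (φ (X 1)).totalDegree) :
    ∃ (c : k) (d : ℕ), (φ (X 1)).totalDegree = d * (φ (X 0)).totalDegree ∧
      (φ (X 1) - C c * φ (X 0) ^ d).totalDegree < (φ (X 1)).totalDegree := by
  have hm := totalDegree_X_aut_pos φ 0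
  obtain ⟨d, hd⟩ : (φ (X 0)).totalDegree ∣ (φ (X 1)).totalDegree := by
    rcases totalDegree_dvd_or_dvd φ with h' | h'
    · exact h'
    · exact dvd_of_eq (le_antisymm h (Nat.le_of_dvd hm h'))
  rw [mul_comm] at hd
  obtain ⟨c₀, -, hc₀⟩ := exists_jac_eq_C φ
  have hD := degree_eq_smul hc₀ hm h2 hd
  have hf0 : φ (X 0) ≠ 0 := by simp
  have hlf := degLex.leadingCoeff_ne_zero_iff.2 hf0
  set c := degLex.leadingCoeff (φ (X 1)) / degLex.leadingCoeff (φ (X 0)) ^ d with hc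
  refine ⟨c, d, hd, ?_⟩
  set g := φ (X 1) - C c * φ (X 0) ^ d with hg
  by_contra! hlt
  have hle : g.totalDegree ≤ (φ (X 1)).totalDegree := by
    refine (totalDegree_sub _ _).trans (max_le le_rfl ((totalDegree_mul _ _).trans ?_))
    rw [totalDegree_C, zero_add, totalDegree_pow_eq hf0, hd]
  let ψ := φ * shear 1 one_ne_zero (-(Polynomial.C c * Polynomial.X ^ d))
  have hψ0 : ψ (X 0) = φ (X 0) := by simp [ψ]
  have hψ1 : ψ (X 1) = g := by
    simp [ψ, hg, sub_eq_add_neg, algEquiv_C]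
  obtain ⟨c₁, -, hc₁⟩ := exists_jac_eq_C ψ
  rw [hψ0, hψ1] at hc₁
  have hgdeg := le_antisymm hle hlt
  have hD' := degree_eq_smul hc₁ hm (hgdeg ▸ h2) (hgdeg.trans hd)
  have hg0 : g ≠ 0 := by
    rw [← hψ1]
    simp
  refine degLex.coeff_degree_ne_zero_iff.2 hg0 ?_
  have hlp := leadingCoeff_pow (m := degLex) (φ (X 0)) d
  rw [leadingCoeff, degree_pow, ← hD] at hlp
  rw [hD', ← hD, hg, coeff_sub, coeff_C_mul, hlp, hc, div_mul_cancel₀ _ (pow_ne_zero _ hlf)]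
  exact sub_self _

end Reduction

end TitsAlternative

namespace TitsAlternative

open MvPolynomial Module

section Vertices

variable (k : Type*) [Field k]

/-- The space of polynomials of degree at most one. -/
noncomputable def planeSpan : Submodule k (Plane k) := Submodule.span k {1, X 0, X 1}

/-- The space of polynomials of degree at most one in the first coordinate. -/
noncomputable def lineSpan : Submodule k (Plane k) := Submodule.span k {1, X 0}

variable {k}

theorem mem_smul_planeSpan {φ : PlaneAut k} {g : Plane k} :
    g ∈ φ • planeSpan k ↔ ∃ a b c : k, C a + C b * φ (X 0) + C c * φ (X 1) = g := by
  rw [Submodule.mem_smul_pointwise_iff_exists]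
  constructor
  · rintro ⟨s, hs, rfl⟩
    obtain ⟨a, b, c, rfl⟩ := Submodule.mem_span_triple.1 hs
    exact ⟨a, b, c, by simp [smul_eq_C_mul, algEquiv_C]⟩
  · rintro ⟨a, b, c, rfl⟩
    exact ⟨a • 1 + b • X 0 + c • X 1, Submodule.mem_span_triple.2 ⟨a, b, c, rfl⟩,
      by simp [smul_eq_C_mul, algEquiv_C]⟩

theorem mem_smul_lineSpan {φ : PlaneAut k} {g : Plane k} :
    g ∈ φ • lineSpan k ↔ ∃ a b : k, C a + C b * φ (X 0) = g := by
  rw [Submodule.mem_smul_pointwise_iff_exists]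
  constructor
  · rintro ⟨s, hs, rfl⟩
    obtain ⟨a, b, rfl⟩ := Submodule.mem_span_pair.1 hs
    exact ⟨a, b, by simp [smul_eq_C_mul, algEquiv_C]⟩
  · rintro ⟨a, b, rfl⟩
    exact ⟨a • 1 + b • X 0, Submodule.mem_span_pair.2 ⟨a, b, rfl⟩,
      by simp [smul_eq_C_mul, algEquiv_C]⟩

theorem smul_planeSpan_le {φ : PlaneAut k} {S : Submodule k (Plane k)} :
    φ • planeSpan k ≤ S ↔ (1 : Plane k) ∈ S ∧ φ (X 0) ∈ S ∧ φ (X 1) ∈ S := by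
  constructor
  · intro h
    exact ⟨h (mem_smul_planeSpan.2 ⟨1, 0, 0, by simp⟩), h (mem_smul_planeSpan.2 ⟨0, 1, 0, by simp⟩),
      h (mem_smul_planeSpan.2 ⟨0, 0, 1, by simp⟩)⟩
  · rintro ⟨h, h0, h1⟩ g hg
    obtain ⟨a, b, c, rfl⟩ := mem_smul_planeSpan.1 hg
    rw [← mul_one (C a), ← smul_eq_C_mul, ← smul_eq_C_mul, ← smul_eq_C_mul]
    exact S.add_mem (S.add_mem (S.smul_mem _ h) (S.smul_mem _ h0)) (S.smul_mem _ h1)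

theorem smul_lineSpan_le {φ : PlaneAut k} {S : Submodule k (Plane k)} :
    φ • lineSpan k ≤ S ↔ (1 : Plane k) ∈ S ∧ φ (X 0) ∈ S := by
  constructor
  · intro h
    exact ⟨h (mem_smul_lineSpan.2 ⟨1, 0, by simp⟩), h (mem_smul_lineSpan.2 ⟨0, 1, by simp⟩)⟩
  · rintro ⟨h, h0⟩ g hg
    obtain ⟨a, b, rfl⟩ := mem_smul_lineSpan.1 hg
    rw [← mul_one (C a), ← smul_eq_C_mul, ← smul_eq_C_mul]
    exact S.add_mem (S.smul_mem _ h) (S.smul_mem _ h0)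

theorem one_mem_smul_planeSpan (φ : PlaneAut k) : (1 : Plane k) ∈ φ • planeSpan k :=
  (smul_planeSpan_le.1 le_rfl).1

theorem one_mem_smul_lineSpan (φ : PlaneAut k) : (1 : Plane k) ∈ φ • lineSpan k :=
  (smul_lineSpan_le.1 le_rfl).1

theorem linearIndependent_one_X : LinearIndependent k ![(1 : Plane k), X 0, X 1] := by
  rw [Fintype.linearIndependent_iff]
  intro g hg
  rw [Fin.sum_univ_three] at hg
  simp only [Matrix.cons_val_zero, Matrix.cons_val_one, Matrix.cons_val] at hg
  have h0 := congrArg (coeff 0) hg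
  have h1 := congrArg (coeff (Finsupp.single 0 1)) hg
  have h2 := congrArg (coeff (Finsupp.single 1 1)) hg
  have h3 : ∀ i : Fin 2, (0 : Fin 2 →₀ ℕ) ≠ Finsupp.single i 1 := fun i => by
    simp [eq_comm (a := (0 : Fin 2 →₀ ℕ))]
  simp [coeff_one, coeff_X, Finsupp.single_left_inj, h3] at h0 h1 h2
  intro i
  fin_cases i
  exacts [h0, h1, h2]

theorem finrank_planeSpan : finrank k (planeSpan k) = 3 := by
  have h := finrank_span_eq_card (linearIndependent_one_X (k := k))
  rwa [Matrix.range_cons, Matrix.range_cons, Matrix.range_cons, Matrix.range_empty,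
    Set.union_empty, Set.singleton_union, Set.singleton_union, Fintype.card_fin] at h

theorem finrank_lineSpan : finrank k (lineSpan k) = 2 := by
  have h1 : LinearIndependent k ![(1 : Plane k), X 0] := by
    have := (linearIndependent_one_X (k := k)).comp ![0, 1] (by decide)
    convert this using 1
    ext i
    fin_cases i <;> rfl
  have h := finrank_span_eq_card h1
  rwa [Matrix.range_cons, Matrix.range_cons, Matrix.range_empty,
    Set.union_empty, Set.singleton_union, Fintype.card_fin] at h

theorem finrank_smul (φ : PlaneAut k) (S : Submodule k (Plane k)) :
    finrank k ↥(φ • S) = finrank k S :=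
  LinearEquiv.finrank_map_eq φ.toLinearEquiv S

theorem finrank_smul_planeSpan (φ : PlaneAut k) : finrank k ↥(φ • planeSpan k) = 3 := by
  rw [finrank_smul, finrank_planeSpan]

theorem finrank_smul_lineSpan (φ : PlaneAut k) : finrank k ↥(φ • lineSpan k) = 2 := by
  rw [finrank_smul, finrank_lineSpan]

instance finiteDimensional_smul_planeSpan (φ : PlaneAut k) :
    FiniteDimensional k ↥(φ • planeSpan k) :=
  Module.finite_of_finrank_pos (by rw [finrank_smul_planeSpan]; omega)

instance finiteDimensional_smul_lineSpan (φ : PlaneAut k) :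
    FiniteDimensional k ↥(φ • lineSpan k) :=
  Module.finite_of_finrank_pos (by rw [finrank_smul_lineSpan]; omega)

theorem smul_planeSpan_eq_of_le {φ ψ : PlaneAut k} (h : φ • planeSpan k ≤ ψ • planeSpan k) :
    φ • planeSpan k = ψ • planeSpan k :=
  Submodule.eq_of_le_of_finrank_le h (by rw [finrank_smul_planeSpan, finrank_smul_planeSpan])

theorem smul_lineSpan_eq_of_le {φ ψ : PlaneAut k} (h : φ • lineSpan k ≤ ψ • lineSpan k) :
    φ • lineSpan k = ψ • lineSpan k :=
  Submodule.eq_of_le_of_finrank_le h (by rw [finrank_smul_lineSpan, finrank_smul_lineSpan])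

theorem mul_flip_smul_planeSpan (φ : PlaneAut k) :
    (φ * flip k) • planeSpan k = φ • planeSpan k := by
  refine smul_planeSpan_eq_of_le (smul_planeSpan_le.2 ⟨one_mem_smul_planeSpan φ, ?_, ?_⟩)
  · exact mem_smul_planeSpan.2 ⟨0, 0, 1, by simp⟩
  · exact mem_smul_planeSpan.2 ⟨0, 1, 0, by simp⟩

theorem mul_shear_smul_planeSpan (φ : PlaneAut k) {γ : k} (hγ : γ ≠ 0) (a b : k) :
    (φ * shear γ hγ (Polynomial.C a * Polynomial.X + Polynomial.C b)) • planeSpan k =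
      φ • planeSpan k := by
  refine smul_planeSpan_eq_of_le (smul_planeSpan_le.2 ⟨one_mem_smul_planeSpan φ, ?_, ?_⟩)
  · exact mem_smul_planeSpan.2 ⟨0, 1, 0, by simp⟩
  · refine mem_smul_planeSpan.2 ⟨b, a, γ, ?_⟩
    simp [algEquiv_C]
    ring

theorem mul_shear_smul_lineSpan (φ : PlaneAut k) {γ : k} (hγ : γ ≠ 0) (p : Polynomial k) :
    (φ * shear γ hγ p) • lineSpan k = φ • lineSpan k := by
  refine smul_lineSpan_eq_of_le (smul_lineSpan_le.2 ⟨one_mem_smul_lineSpan φ, ?_⟩)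
  exact mem_smul_lineSpan.2 ⟨0, 1, by simp⟩

theorem lineSpan_lt_planeSpan (φ : PlaneAut k) : φ • lineSpan k < φ • planeSpan k := by
  refine lt_of_le_of_ne (smul_lineSpan_le.2 ⟨one_mem_smul_planeSpan φ,
    mem_smul_planeSpan.2 ⟨0, 1, 0, by simp⟩⟩) fun h => ?_
  have h1 := finrank_smul_planeSpan φ
  rw [← h, finrank_smul_lineSpan] at h1
  omega

/-- Nested translates of the two standard spaces are simultaneous translates. -/
theorem exists_aut_of_le {φ φ' : PlaneAut k} (h : φ • lineSpan k ≤ φ' • planeSpan k) :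
    ∃ ψ : PlaneAut k, ψ • lineSpan k = φ • lineSpan k ∧ ψ • planeSpan k = φ' • planeSpan k := by
  obtain ⟨c, a, b, habc⟩ := mem_smul_planeSpan.1 (smul_lineSpan_le.1 h).2
  have key : ∀ θ : PlaneAut k, (φ' * θ) (X 0) = φ (X 0) →
      (φ' * θ) • lineSpan k = φ • lineSpan k := fun θ hθ =>
    smul_lineSpan_eq_of_le (smul_lineSpan_le.2 ⟨one_mem_smul_lineSpan φ,
      hθ ▸ mem_smul_lineSpan.2 ⟨0, 1, by simp⟩⟩)
  by_cases ha : a = 0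
  · have hb : b ≠ 0 := by
      rintro rfl
      have h0 := totalDegree_X_aut_pos φ 0
      rw [← habc, ha, map_zero, zero_mul, zero_mul, add_zero, add_zero, totalDegree_C] at h0
      omega
    refine ⟨φ' * (shear b hb (Polynomial.C 0 * Polynomial.X + Polynomial.C c) * flip k),
      key _ ?_, ?_⟩
    · rw [← habc, ha]
      simp [algEquiv_C, add_comm]
    · rw [← mul_assoc, mul_flip_smul_planeSpan, mul_shear_smul_planeSpan]
  · refine ⟨φ' * (flip k * shear a ha (Polynomial.C b * Polynomial.X + Polynomial.C c) * flip k),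
      key _ ?_, ?_⟩
    · rw [← habc]
      simp [algEquiv_C]
      ring
    · rw [← mul_assoc, mul_flip_smul_planeSpan, ← mul_assoc, mul_shear_smul_planeSpan,
        mul_flip_smul_planeSpan]

end Vertices

section Form

variable {k : Type*} [Field k] [CharZero k]

theorem exists_aeval_eq_of_pderiv_eq_zero {g : Plane k} (h : pderiv 1 g = 0) :
    ∃ p : Polynomial k, Polynomial.aeval (X 0) p = g := by
  refine ⟨∑ s ∈ g.support, Polynomial.monomial (s 0) (coeff s g), ?_⟩
  conv_rhs => rw [g.as_sum]
  rw [map_sum]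
  refine Finset.sum_congr rfl fun s hs => ?_
  have h1 := coeff_X_mul_pderiv 1 g s
  rw [h, mul_zero, coeff_zero, eq_comm, mul_eq_zero, Nat.cast_eq_zero] at h1
  have h2 := h1.resolve_right (mem_support_iff.1 hs)
  rw [Polynomial.aeval_monomial, algebraMap_eq, monomial_eq, Finsupp.prod_fintype _ _ (by simp),
    Fin.prod_univ_two, h2, pow_zero, mul_one]

/-- The form of the automorphisms stabilizing the line span. -/
theorem exists_form_of_smul_lineSpan {θ : PlaneAut k} (h : θ • lineSpan k = lineSpan k) :
    ∃ (α β γ : k) (p : Polynomial k), α ≠ 0 ∧ γ ≠ 0 ∧ θ (X 0) = C α * X 0 + C β ∧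
      θ (X 1) = C γ * X 1 + Polynomial.aeval (X 0) p := by
  have h0 : θ • lineSpan k ≤ (1 : PlaneAut k) • lineSpan k := by rw [h, one_smul]
  obtain ⟨β, α, hαβ⟩ := mem_smul_lineSpan.1 (smul_lineSpan_le.1 h0).2
  rw [AlgEquiv.one_apply] at hαβ
  have hα : α ≠ 0 := by
    rintro rfl
    have h0 := totalDegree_X_aut_pos θ 0
    rw [← hαβ, map_zero, zero_mul, add_zero, totalDegree_C] at h0
    omega
  obtain ⟨c, hc, hjac⟩ := exists_jac_eq_C θ
  have hder : pderiv 1 (θ (X 1)) = C (c / α) := by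
    have h1 : C α * pderiv 1 (θ (X 1)) = C c := by
      rw [← hjac, jac, ← hαβ]
      simp
    rw [div_eq_mul_inv, mul_comm c, C_mul, ← h1, ← mul_assoc, ← C_mul, inv_mul_cancel₀ hα, C_1,
      one_mul]
  obtain ⟨p, hp⟩ := exists_aeval_eq_of_pderiv_eq_zero (g := θ (X 1) - C (c / α) * X 1)
    (by simp [hder])
  refine ⟨α, β, c / α, p, hα, div_ne_zero hc hα, ?_, ?_⟩
  · rw [← hαβ, add_comm]
  · rw [hp]
    ring

theorem exists_form_of_smul_lineSpan_eq {φ ψ : PlaneAut k}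
    (h : ψ • lineSpan k = φ • lineSpan k) :
    ∃ (γ : k) (p : Polynomial k), ψ (X 1) = C γ * φ (X 1) + Polynomial.aeval (φ (X 0)) p := by
  obtain ⟨-, -, γ, p, -, -, -, h1⟩ := exists_form_of_smul_lineSpan (θ := φ⁻¹ * ψ)
    (by rw [mul_smul, h, inv_smul_smul])
  refine ⟨γ, p, ?_⟩
  have h2 := congrArg φ h1
  rw [← AlgEquiv.mul_apply, mul_inv_cancel_left, map_add, map_mul, algEquiv_C] at h2
  rw [h2, ← show _ = φ (Polynomial.aeval (X 0) p) from
    Polynomial.aeval_algHom_apply (φ : Plane k →ₐ[k] Plane k) (X 0) p]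
  rfl

end Form

end TitsAlternative

namespace TitsAlternative

open MvPolynomial Module

section Heights

variable {k : Type*} [Field k]

/-- The least bound for the degrees of the elements of a space of polynomials. -/
noncomputable def degreeBound (S : Submodule k (Plane k)) : ℕ :=
  sInf {d | S ≤ restrictTotalDegree (Fin 2) k d}

theorem degreeBound_eq {S : Submodule k (Plane k)} {n : ℕ}
    (h : ∀ d, S ≤ restrictTotalDegree (Fin 2) k d ↔ n ≤ d) : degreeBound S = n := by
  have : {d | S ≤ restrictTotalDegree (Fin 2) k d} = Set.Ici n := Set.ext h
  rw [degreeBound, this, csInf_Ici]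

theorem smul_planeSpan_le_restrictTotalDegree {φ : PlaneAut k} {d : ℕ} :
    φ • planeSpan k ≤ restrictTotalDegree (Fin 2) k d ↔
      max (φ (X 0)).totalDegree (φ (X 1)).totalDegree ≤ d := by
  simp [smul_planeSpan_le, mem_restrictTotalDegree]

theorem smul_lineSpan_le_restrictTotalDegree {φ : PlaneAut k} {d : ℕ} :
    φ • lineSpan k ≤ restrictTotalDegree (Fin 2) k d ↔ (φ (X 0)).totalDegree ≤ d := by
  simp [smul_lineSpan_le, mem_restrictTotalDegree]

/-- The height of a space of polynomials, which orients the tree of the plane towards its root. -/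
noncomputable def height (S : Submodule k (Plane k)) : ℕ := 2 * degreeBound S + (3 - finrank k S)

theorem height_smul_planeSpan (φ : PlaneAut k) :
    height (φ • planeSpan k) = 2 * max (φ (X 0)).totalDegree (φ (X 1)).totalDegree := by
  rw [height, finrank_smul_planeSpan,
    degreeBound_eq fun d => smul_planeSpan_le_restrictTotalDegree, Nat.sub_self, add_zero]

theorem height_smul_lineSpan (φ : PlaneAut k) :
    height (φ • lineSpan k) = 2 * (φ (X 0)).totalDegree + 1 := by
  rw [height, finrank_smul_lineSpan,
    degreeBound_eq fun d => smul_lineSpan_le_restrictTotalDegree]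

theorem totalDegree_eq_of_smul_lineSpan_eq {φ ψ : PlaneAut k}
    (h : φ • lineSpan k = ψ • lineSpan k) :
    (φ (X 0)).totalDegree = (ψ (X 0)).totalDegree := by
  have h1 := congrArg height h
  rw [height_smul_lineSpan, height_smul_lineSpan] at h1
  omega

theorem smul_planeSpan_eq_of_totalDegree_le {φ : PlaneAut k}
    (h : ∀ i, (φ (X i)).totalDegree ≤ 1) : φ • planeSpan k = planeSpan k := by
  have key : ∀ g : Plane k, g.totalDegree ≤ 1 → g ∈ (1 : PlaneAut k) • planeSpan k := by
    intro g hg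
    rw [one_smul, g.as_sum]
    refine Submodule.sum_mem _ fun s hs => ?_
    have h1 := (le_totalDegree hs).trans hg
    rw [Finsupp.sum_fintype _ _ (by simp), Fin.sum_univ_two] at h1
    rw [monomial_eq, Finsupp.prod_fintype _ _ (by simp), Fin.prod_univ_two, ← smul_eq_C_mul]
    refine Submodule.smul_mem _ _ (Submodule.subset_span ?_)
    have h2 : (s 0 = 0 ∧ s 1 = 0) ∨ (s 0 = 1 ∧ s 1 = 0) ∨ (s 0 = 0 ∧ s 1 = 1) := by omega
    rcases h2 with ⟨h2, h3⟩ | ⟨h2, h3⟩ | ⟨h2, h3⟩ <;> simp [h2, h3]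
  conv_rhs => rw [← one_smul (PlaneAut k) (planeSpan k)]
  exact smul_planeSpan_eq_of_le (smul_planeSpan_le.2 ⟨one_mem_smul_planeSpan 1, key _ (h 0),
    key _ (h 1)⟩)

theorem totalDegree_aeval {f : Plane k} (hf : 1 ≤ f.totalDegree) (p : Polynomial k) :
    (Polynomial.aeval f p).totalDegree = p.natDegree * f.totalDegree := by
  have hf0 : f ≠ 0 := by
    rintro rfl
    simp at hf
  have hterm : ∀ i, (p.coeff i • f ^ i).totalDegree ≤ i * f.totalDegree := fun i =>
    (totalDegree_smul_le _ _).trans (totalDegree_pow_eq hf0 i).le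
  rcases Nat.eq_zero_or_pos p.natDegree with h0 | h0
  · rw [Polynomial.eq_C_of_natDegree_eq_zero h0]
    simp
  rw [Polynomial.aeval_eq_sum_range, Finset.sum_range_succ]
  have hp : p.coeff p.natDegree ≠ 0 := by
    have : p ≠ 0 := by
      rintro rfl
      simp at h0
    simpa using this
  have htop : (p.coeff p.natDegree • f ^ p.natDegree).totalDegree =
      p.natDegree * f.totalDegree := by
    rw [smul_eq_C_mul, totalDegree_mul_of_isDomain (by simpa using hp) (pow_ne_zero _ hf0),
      totalDegree_C, zero_add, totalDegree_pow_eq hf0]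
  rw [totalDegree_add_eq_right_of_totalDegree_lt, htop]
  rw [htop]
  refine lt_of_le_of_lt (totalDegree_finsetSum_le (d := (p.natDegree - 1) * f.totalDegree)
    fun i hi => (hterm i).trans (Nat.mul_le_mul_right _ ?_)) ?_
  · have := Finset.mem_range.1 hi
    omega
  · exact Nat.mul_lt_mul_of_pos_right (by omega) hf

end Heights

section Neighbours

variable {k : Type*} [Field k]

theorem lower_lineSpan_unique {φ ψ : PlaneAut k} (h : ψ • planeSpan k = φ • planeSpan k)
    (hφ : (φ (X 0)).totalDegree < (φ (X 1)).totalDegree)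
    (hψ : (ψ (X 0)).totalDegree < (ψ (X 1)).totalDegree) :
    ψ • lineSpan k = φ • lineSpan k := by
  by_contra hne
  have hmax := congrArg height h
  rw [height_smul_planeSpan, height_smul_planeSpan, max_eq_right hφ.le, max_eq_right hψ.le] at hmax
  have hle : ψ • lineSpan k ⊔ φ • lineSpan k ≤ φ • planeSpan k :=
    sup_le ((lineSpan_lt_planeSpan ψ).le.trans h.le) (lineSpan_lt_planeSpan φ).le
  have hlt : φ • lineSpan k < ψ • lineSpan k ⊔ φ • lineSpan k := by
    refine lt_of_le_of_ne le_sup_right fun heq => hne (smul_lineSpan_eq_of_le ?_)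
    rw [heq]
    exact le_sup_left
  have hrank := Submodule.finrank_lt_finrank_of_lt hlt
  rw [finrank_smul_lineSpan] at hrank
  have heq : ψ • lineSpan k ⊔ φ • lineSpan k = φ • planeSpan k :=
    Submodule.eq_of_le_of_finrank_le hle (by rw [finrank_smul_planeSpan]; omega)
  have hbd : φ • planeSpan k ≤ restrictTotalDegree (Fin 2) k ((φ (X 1)).totalDegree - 1) := by
    rw [← heq]
    exact sup_le (smul_lineSpan_le_restrictTotalDegree.2 (by omega))
      (smul_lineSpan_le_restrictTotalDegree.2 (by omega))
  have := (le_max_right _ _).trans (smul_planeSpan_le_restrictTotalDegree.1 hbd)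
  omega

variable [CharZero k]

theorem exists_lower_lineSpan {φ : PlaneAut k} (h : φ • planeSpan k ≠ planeSpan k) :
    ∃ ψ : PlaneAut k, ψ • planeSpan k = φ • planeSpan k ∧
      (ψ (X 0)).totalDegree < (ψ (X 1)).totalDegree := by
  rcases lt_trichotomy (φ (X 0)).totalDegree (φ (X 1)).totalDegree with hlt | heq | hgt
  · exact ⟨φ, rfl, hlt⟩
  · have h2 : 2 ≤ (φ (X 1)).totalDegree := by
      by_contra hcon
      refine h (smul_planeSpan_eq_of_totalDegree_le fun i => ?_)
      fin_cases i
      · exact heq.trans_le (by omega)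
      · exact (show (φ (X 1)).totalDegree ≤ 1 by omega)
    obtain ⟨c, d, hd, hc⟩ := exists_totalDegree_sub_lt φ heq.le h2
    have hd1 : d = 1 := by
      rw [heq] at hd
      exact (Nat.eq_of_mul_eq_mul_right (show 0 < (φ (X 1)).totalDegree by omega)
        (by rw [one_mul]; exact hd)).symm
    let θ : PlaneAut k :=
      φ * shear 1 one_ne_zero (Polynomial.C (-c) * Polynomial.X + Polynomial.C 0) * flip k
    have hθ0 : θ (X 0) = φ (X 1) - C c * φ (X 0) := by
      simp [θ, algEquiv_C, sub_eq_add_neg]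
    have hθ1 : θ (X 1) = φ (X 0) := by
      simp [θ]
    refine ⟨θ, ?_, ?_⟩
    · rw [mul_flip_smul_planeSpan, mul_shear_smul_planeSpan]
    · rw [hθ0, hθ1, heq]
      rwa [hd1, pow_one] at hc
  · exact ⟨φ * flip k, mul_flip_smul_planeSpan φ, by simpa using hgt⟩

theorem exists_lower_planeSpan (φ : PlaneAut k) :
    ∃ ψ : PlaneAut k, ψ • lineSpan k = φ • lineSpan k ∧
      (ψ (X 1)).totalDegree ≤ (ψ (X 0)).totalDegree := by
  induction hn : (φ (X 1)).totalDegree using Nat.strong_induction_on generalizing φ with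
  | _ n ih =>
    rcases le_or_gt (φ (X 1)).totalDegree (φ (X 0)).totalDegree with hle | hlt
    · exact ⟨φ, rfl, hle⟩
    · have h1 := totalDegree_X_aut_pos φ 0
      obtain ⟨c, d, hd, hc⟩ := exists_totalDegree_sub_lt φ hlt.le (by omega)
      let θ := φ * shear 1 one_ne_zero (-(Polynomial.C c * Polynomial.X ^ d))
      have hθ1 : θ (X 1) = φ (X 1) - C c * φ (X 0) ^ d := by
        simp [θ, sub_eq_add_neg, algEquiv_C]
      obtain ⟨ψ, hψ, hψ'⟩ := ih _ (hn ▸ hθ1 ▸ hc) θ rfl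
      exact ⟨ψ, hψ.trans (mul_shear_smul_lineSpan _ _ _), hψ'⟩

theorem lower_planeSpan_unique {φ ψ : PlaneAut k} (h : ψ • lineSpan k = φ • lineSpan k)
    (hφ : (φ (X 1)).totalDegree ≤ (φ (X 0)).totalDegree)
    (hψ : (ψ (X 1)).totalDegree ≤ (ψ (X 0)).totalDegree) :
    ψ • planeSpan k = φ • planeSpan k := by
  have hle : φ • lineSpan k ≤ φ • planeSpan k := (lineSpan_lt_planeSpan φ).le
  obtain ⟨γ, p, hp⟩ := exists_form_of_smul_lineSpan_eq h
  have hdeg := totalDegree_eq_of_smul_lineSpan_eq h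
  have hp1 : p.natDegree ≤ 1 := by
    have h1 : (Polynomial.aeval (φ (X 0)) p).totalDegree ≤ (φ (X 0)).totalDegree := by
      rw [show Polynomial.aeval (φ (X 0)) p = ψ (X 1) - C γ * φ (X 1) by rw [hp]; ring]
      refine (totalDegree_sub _ _).trans (max_le (hψ.trans hdeg.le) ?_)
      refine (totalDegree_mul _ _).trans ?_
      rw [totalDegree_C, zero_add]
      exact hφ
    have h2 := totalDegree_X_aut_pos φ 0
    rw [totalDegree_aeval h2] at h1
    by_contra hcon
    have := Nat.mul_le_mul_right (φ (X 0)).totalDegree (show 2 ≤ p.natDegree by omega)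
    omega
  refine smul_planeSpan_eq_of_le (smul_planeSpan_le.2 ⟨one_mem_smul_planeSpan φ, ?_, ?_⟩)
  · exact hle (h ▸ (smul_lineSpan_le.1 le_rfl).2)
  · rw [hp, Polynomial.eq_X_add_C_of_natDegree_le_one hp1]
    refine mem_smul_planeSpan.2 ⟨p.coeff 0, p.coeff 1, γ, ?_⟩
    simp [algebraMap_eq]
    ring

end Neighbours

section Tree

variable (k : Type*) [Field k]

/-- The translates of the two standard spaces of polynomials. -/
noncomputable def vertices : SubMulAction (PlaneAut k) (Submodule k (Plane k)) where
  carrier := {S | (∃ φ : PlaneAut k, S = φ • planeSpan k) ∨ ∃ φ : PlaneAut k, S = φ • lineSpan k}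
  smul_mem' := by
    rintro ψ _ (⟨φ, rfl⟩ | ⟨φ, rfl⟩)
    · exact Or.inl ⟨ψ * φ, smul_smul _ _ _⟩
    · exact Or.inr ⟨ψ * φ, smul_smul _ _ _⟩

/-- The tree of the plane: two vertices are adjacent when one properly contains the other. -/
noncomputable def tree : SimpleGraph (vertices k) where
  Adj x y := (x : Submodule k (Plane k)) < y ∨ (y : Submodule k (Plane k)) < x
  symm := ⟨fun _ _ => Or.symm⟩
  loopless := ⟨fun _ h => h.elim (lt_irrefl _) (lt_irrefl _)⟩

variable {k}

theorem exists_aut_of_lt {x y : vertices k} (h : (x : Submodule k (Plane k)) < y) :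
    ∃ ψ : PlaneAut k, (x : Submodule k (Plane k)) = ψ • lineSpan k ∧
      (y : Submodule k (Plane k)) = ψ • planeSpan k := by
  obtain ⟨x, hx⟩ := x
  obtain ⟨y, hy⟩ := y
  have h : x < y := h
  rcases hx with ⟨φ, rfl⟩ | ⟨φ, rfl⟩ <;> rcases hy with ⟨φ', rfl⟩ | ⟨φ', rfl⟩
  · exact absurd (smul_planeSpan_eq_of_le h.le) h.ne
  · have := Submodule.finrank_lt_finrank_of_lt h
    rw [finrank_smul_planeSpan, finrank_smul_lineSpan] at this
    omega
  · obtain ⟨ψ, h1, h2⟩ := exists_aut_of_le h.le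
    exact ⟨ψ, h1.symm, h2.symm⟩
  · exact absurd (smul_lineSpan_eq_of_le h.le) h.ne

theorem smul_planeSpan_ne_smul_lineSpan (φ ψ : PlaneAut k) :
    φ • planeSpan k ≠ ψ • lineSpan k := fun h => by
  have := finrank_smul_planeSpan φ
  rw [h, finrank_smul_lineSpan] at this
  omega

theorem tree_adj_smul (h : PlaneAut k) (x y : vertices k) :
    (tree k).Adj (h • x) (h • y) ↔ (tree k).Adj x y := by
  have key : ∀ (g : PlaneAut k) (x y : vertices k), (x : Submodule k (Plane k)) < y →
      ((g • x : vertices k) : Submodule k (Plane k)) < (g • y : vertices k) := by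
    intro g x y hxy
    obtain ⟨ψ, h1, h2⟩ := exists_aut_of_lt hxy
    rw [SubMulAction.val_smul, SubMulAction.val_smul, h1, h2, smul_smul, smul_smul]
    exact lineSpan_lt_planeSpan _
  refine ⟨fun hxy => ?_, fun hxy => hxy.imp (key h x y) (key h y x)⟩
  have := hxy.imp (key h⁻¹ _ _) (key h⁻¹ _ _)
  rwa [inv_smul_smul, inv_smul_smul] at this

theorem tree_not_adj_smul (h : PlaneAut k) (x : vertices k) : ¬ (tree k).Adj x (h • x) := by
  rintro (hlt | hlt) <;> obtain ⟨ψ, h1, h2⟩ := exists_aut_of_lt hlt <;>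
    rw [SubMulAction.val_smul] at *
  · rw [h1, smul_smul] at h2
    exact smul_planeSpan_ne_smul_lineSpan _ _ h2.symm
  · rw [h2, smul_smul] at h1
    exact smul_planeSpan_ne_smul_lineSpan _ _ h1

variable [CharZero k]

theorem isTree_tree : (tree k).IsTree := by
  have hlt : ∀ {x y : vertices k}, (tree k).Adj x y → ∃ ψ : PlaneAut k,
      ((x : Submodule k (Plane k)) = ψ • lineSpan k ∧
        (y : Submodule k (Plane k)) = ψ • planeSpan k) ∨
      ((x : Submodule k (Plane k)) = ψ • planeSpan k ∧
        (y : Submodule k (Plane k)) = ψ • lineSpan k) := by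
    rintro x y (h | h) <;> obtain ⟨ψ, h1, h2⟩ := exists_aut_of_lt h
    · exact ⟨ψ, Or.inl ⟨h1, h2⟩⟩
    · exact ⟨ψ, Or.inr ⟨h2, h1⟩⟩
  refine isTree_of_height (fun x => height (x : Submodule k (Plane k)))
    ⟨planeSpan k, Or.inl ⟨1, (one_smul _ _).symm⟩⟩ ?_ ?_ ?_
  · intro x y hxy
    obtain ⟨ψ, ⟨h1, h2⟩ | ⟨h1, h2⟩⟩ := hlt hxy <;>
      simp only [h1, h2, height_smul_planeSpan, height_smul_lineSpan] <;> omega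
  · rintro ⟨x, ⟨φ, rfl⟩ | ⟨φ, rfl⟩⟩ hx
    · obtain ⟨ψ, h1, h2⟩ := exists_lower_lineSpan (φ := φ) fun h => hx (Subtype.ext h)
      refine ⟨⟨ψ • lineSpan k, Or.inr ⟨ψ, rfl⟩⟩, Or.inr ?_, ?_⟩
      · exact (lineSpan_lt_planeSpan ψ).trans_eq h1
      · simp only [← h1, height_smul_planeSpan, height_smul_lineSpan]
        omega
    · obtain ⟨ψ, h1, h2⟩ := exists_lower_planeSpan φ
      refine ⟨⟨ψ • planeSpan k, Or.inl ⟨ψ, rfl⟩⟩, Or.inl ?_, ?_⟩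
      · exact h1.symm.trans_lt (lineSpan_lt_planeSpan ψ)
      · simp only [← h1, height_smul_planeSpan, height_smul_lineSpan]
        omega
  · intro x y z hxy hxz hy hz
    obtain ⟨ψ, ⟨h1, h2⟩ | ⟨h1, h2⟩⟩ := hlt hxy <;> obtain ⟨θ, ⟨h3, h4⟩ | ⟨h3, h4⟩⟩ := hlt hxz
    · refine Subtype.ext ?_
      simp only [h1, h2, height_smul_planeSpan, height_smul_lineSpan] at hy
      simp only [h3, h4, height_smul_planeSpan, height_smul_lineSpan] at hz
      rw [h2, h4]
      exact lower_planeSpan_unique (h1.symm.trans h3) (by omega) (by omega)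
    · exact absurd (h3.symm.trans h1) (smul_planeSpan_ne_smul_lineSpan _ _)
    · exact absurd (h1.symm.trans h3) (smul_planeSpan_ne_smul_lineSpan _ _)
    · refine Subtype.ext ?_
      simp only [h1, h2, height_smul_planeSpan, height_smul_lineSpan] at hy
      simp only [h3, h4, height_smul_planeSpan, height_smul_lineSpan] at hz
      rw [h2, h4]
      exact lower_lineSpan_unique (h1.symm.trans h3) (by omega) (by omega)

end Tree

end TitsAlternative

namespace TitsAlternative

open MvPolynomial

section Solvable

theorem isSolvable_of_isSolvable_ker {G A : Type*} [Group G] [CommMonoid A] (f : G →* A)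
    (h : Group.IsSolvable f.ker) : Group.IsSolvable G := by
  refine isSolvable_of_commutator_le h fun a b => ?_
  rw [MonoidHom.mem_ker, commutatorElement_def, map_mul, map_mul, map_mul]
  calc f a * f b * f a⁻¹ * f b⁻¹ = (f a * f a⁻¹) * (f b * f b⁻¹) := by ac_rfl
    _ = 1 := by rw [← map_mul, ← map_mul, mul_inv_cancel, mul_inv_cancel, map_one, mul_one]

end Solvable

section LineStabilizer

variable {k : Type*} [Field k] [CharZero k]

theorem pderiv_zero_mul_apply {θ θ' : PlaneAut k} (h' : θ' • lineSpan k = lineSpan k) :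
    constantCoeff (pderiv 0 ((θ * θ') (X 0))) =
      constantCoeff (pderiv 0 (θ (X 0))) * constantCoeff (pderiv 0 (θ' (X 0))) := by
  obtain ⟨α, β, -, -, -, -, h1, -⟩ := exists_form_of_smul_lineSpan h'
  rw [AlgEquiv.mul_apply, h1]
  simp [algEquiv_C, mul_comm]

theorem pderiv_one_mul_apply {θ θ' : PlaneAut k} (h : θ • lineSpan k = lineSpan k)
    (h' : θ' • lineSpan k = lineSpan k) :
    constantCoeff (pderiv 1 ((θ * θ') (X 1))) =
      constantCoeff (pderiv 1 (θ (X 1))) * constantCoeff (pderiv 1 (θ' (X 1))) := by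
  obtain ⟨α, β, -, -, -, -, h1, -⟩ := exists_form_of_smul_lineSpan h
  obtain ⟨-, -, γ', p', -, -, -, h2⟩ := exists_form_of_smul_lineSpan h'
  have h3 : pderiv 1 (Polynomial.aeval (X 0 : Plane k) p') = 0 := by
    rw [Derivation.map_aeval]
    simp
  have h4 : pderiv 1 (θ' (X 1)) = C γ' := by
    rw [h2]
    simp [h3]
  have h5 : pderiv 1 (θ (X 0)) = 0 := by
    rw [h1]
    simp
  have h6 := derivation_algHom (pderiv 1) (θ : Plane k →ₐ[k] Plane k) (θ' (X 1))
  simp only [AlgEquiv.coe_toAlgHom] at h6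
  rw [AlgEquiv.mul_apply, h6, h5, h4, algEquiv_C]
  simp [mul_comm]

variable (k)

/-- The diagonal part of the automorphisms stabilizing the line span. -/
noncomputable def lineDiagonal :
    MulAction.stabilizer (PlaneAut k) (lineSpan k) →* k × k where
  toFun θ := (constantCoeff (pderiv 0 (θ.1 (X 0))), constantCoeff (pderiv 1 (θ.1 (X 1))))
  map_one' := by simp
  map_mul' θ θ' := Prod.ext (pderiv_zero_mul_apply θ'.2) (pderiv_one_mul_apply θ.2 θ'.2)

variable {k}

theorem form_of_mem_ker_lineDiagonal {θ : MulAction.stabilizer (PlaneAut k) (lineSpan k)}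
    (h : θ ∈ (lineDiagonal k).ker) : ∃ (β : k) (p : Polynomial k), θ.1 (X 0) = X 0 + C β ∧
      θ.1 (X 1) = X 1 + Polynomial.aeval (X 0) p := by
  obtain ⟨α, β, γ, p, -, -, h1, h2⟩ := exists_form_of_smul_lineSpan θ.2
  have h3 : pderiv 1 (Polynomial.aeval (X 0 : Plane k) p) = 0 := by
    rw [Derivation.map_aeval]
    simp
  have h4 := (Prod.ext_iff.1 (MonoidHom.mem_ker.1 h)).1
  have h5 := (Prod.ext_iff.1 (MonoidHom.mem_ker.1 h)).2
  simp only [lineDiagonal, MonoidHom.coe_mk, OneHom.coe_mk] at h4 h5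
  rw [h1] at h4
  rw [h2] at h5
  simp [h3] at h4 h5
  refine ⟨β, p, ?_, ?_⟩
  · rw [h1, h4, C_1, one_mul]
  · rw [h2, h5, C_1, one_mul]

variable (k)

/-- The translation part of the unipotent automorphisms stabilizing the line span. -/
noncomputable def lineTranslation : (lineDiagonal k).ker →* Multiplicative k where
  toFun θ := Multiplicative.ofAdd (constantCoeff (θ.1.1 (X 0)))
  map_one' := by simp
  map_mul' θ θ' := by
    obtain ⟨β, -, h1, -⟩ := form_of_mem_ker_lineDiagonal θ.2
    obtain ⟨β', -, h2, -⟩ := form_of_mem_ker_lineDiagonal θ'.2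
    rw [← ofAdd_add]
    simp [h1, h2, algEquiv_C]

theorem isSolvable_stabilizer_lineSpan :
    Group.IsSolvable (MulAction.stabilizer (PlaneAut k) (lineSpan k)) := by
  refine isSolvable_of_isSolvable_ker (lineDiagonal k)
    (isSolvable_of_isSolvable_ker (lineTranslation k) (Group.isSolvable_of_comm ?_))
  have key : ∀ θ : (lineTranslation k).ker, θ.1.1.1 (X 0) = X 0 ∧
      ∃ p : Polynomial k, θ.1.1.1 (X 1) = X 1 + Polynomial.aeval (X 0) p := by
    rintro ⟨θ, hθ⟩
    obtain ⟨β, p, h1, h2⟩ := form_of_mem_ker_lineDiagonal θ.2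
    refine ⟨?_, p, h2⟩
    have h3 : constantCoeff (θ.1.1 (X 0)) = 0 := Multiplicative.ofAdd.injective hθ
    rw [h1] at h3
    simp only [map_add, constantCoeff_X, constantCoeff_C, zero_add] at h3
    rw [h1, h3, map_zero, add_zero]
  intro a b
  obtain ⟨ha0, p, ha1⟩ := key a
  obtain ⟨hb0, q, hb1⟩ := key b
  have hap : ∀ r : Polynomial k, ∀ θ : PlaneAut k, θ (X 0) = X 0 →
      θ (Polynomial.aeval (X 0) r) = Polynomial.aeval (X 0) r := fun r θ hθ => by
    have := Polynomial.aeval_algHom_apply (θ : Plane k →ₐ[k] Plane k) (X 0) r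
    simp only [AlgEquiv.coe_toAlgHom, hθ] at this
    exact this.symm
  refine Subtype.ext (Subtype.ext (Subtype.ext (aut_ext ?_ ?_)))
  · change a.1.1.1 (b.1.1.1 (X 0)) = b.1.1.1 (a.1.1.1 (X 0))
    rw [ha0, hb0, ha0]
  · change a.1.1.1 (b.1.1.1 (X 1)) = b.1.1.1 (a.1.1.1 (X 1))
    rw [ha1, hb1, map_add, map_add, ha1, hb1, hap _ _ ha0, hap _ _ hb0]
    ring

end LineStabilizer

section PlaneStabilizer

variable {k : Type*} [Field k]

theorem exists_form_of_smul_planeSpan {θ : PlaneAut k} (h : θ • planeSpan k = planeSpan k)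
    (i : Fin 2) : ∃ (a : k) (b : Fin 2 → k), θ (X i) = C a + C (b 0) * X 0 + C (b 1) * X 1 := by
  have h0 : θ • planeSpan k ≤ (1 : PlaneAut k) • planeSpan k := by rw [h, one_smul]
  have h1 : θ (X i) ∈ (1 : PlaneAut k) • planeSpan k := by
    fin_cases i
    exacts [(smul_planeSpan_le.1 h0).2.1, (smul_planeSpan_le.1 h0).2.2]
  obtain ⟨a, b, c, habc⟩ := mem_smul_planeSpan.1 h1
  exact ⟨a, ![b, c], by simp [← habc]⟩

theorem pderiv_eq_C_of_smul_planeSpan {θ : PlaneAut k} (h : θ • planeSpan k = planeSpan k)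
    (i j : Fin 2) : pderiv j (θ (X i)) = C (constantCoeff (pderiv j (θ (X i)))) := by
  obtain ⟨a, b, hab⟩ := exists_form_of_smul_planeSpan h i
  rw [hab]
  fin_cases j <;> simp

variable (k)

/-- The linear part of the affine automorphisms. -/
noncomputable def linearPart :
    MulAction.stabilizer (PlaneAut k) (planeSpan k) →* Matrix (Fin 2) (Fin 2) k where
  toFun θ := Matrix.of fun j i => constantCoeff (pderiv j (θ.1 (X i)))
  map_one' := by
    ext i j
    fin_cases i <;> fin_cases j <;> simp
  map_mul' θ θ' := by
    ext j i
    have h := derivation_algHom (pderiv j) (θ.1 : Plane k →ₐ[k] Plane k) (θ'.1 (X i))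
    simp only [AlgEquiv.coe_toAlgHom] at h
    rw [pderiv_eq_C_of_smul_planeSpan θ'.2 i 0, pderiv_eq_C_of_smul_planeSpan θ'.2 i 1,
      algEquiv_C, algEquiv_C] at h
    simp only [Matrix.of_apply, Matrix.mul_apply, Fin.sum_univ_two, Subgroup.coe_mul,
      AlgEquiv.mul_apply, h, map_add, map_mul, constantCoeff_C]
    ring

theorem isSolvable_ker_linearPart : Group.IsSolvable (linearPart k).toHomUnits.ker := by
  have key : ∀ (θ : (linearPart k).toHomUnits.ker) (i : Fin 2), ∃ a : k,
      θ.1.1 (X i) = X i + C a := by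
    rintro ⟨θ, hθ⟩ i
    obtain ⟨a, b, hab⟩ := exists_form_of_smul_planeSpan θ.2 i
    have h1 : linearPart k θ = 1 := congrArg Units.val hθ
    have h2 := congrFun (congrFun h1 0) i
    have h3 := congrFun (congrFun h1 1) i
    simp only [linearPart, MonoidHom.coe_mk, OneHom.coe_mk, Matrix.of_apply, hab] at h2 h3
    refine ⟨a, ?_⟩
    change θ.1 (X i) = _
    rw [hab]
    obtain rfl | rfl : i = 0 ∨ i = 1 := by fin_cases i <;> simp
    all_goals
      simp at h2 h3
      simp [h2, h3, add_comm]
  refine Group.isSolvable_of_comm fun a b => ?_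
  have hcomm : ∀ i, a.1.1 (b.1.1 (X i)) = b.1.1 (a.1.1 (X i)) := by
    intro i
    obtain ⟨s, hs⟩ := key a i
    obtain ⟨t, ht⟩ := key b i
    rw [hs, ht, map_add, map_add, hs, ht, algEquiv_C, algEquiv_C]
    ring
  exact Subtype.ext (Subtype.ext (aut_ext (hcomm 0) (hcomm 1)))

end PlaneStabilizer

section Reduction

variable {k : Type*} [Field k]

/-- Conjugation carries the automorphisms fixing a translate of `S` into the stabilizer of `S`. -/
noncomputable def conjStabilizer {H : Type*} [Group H] (j : H →* PlaneAut k) (ψ : PlaneAut k)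
    (S : Submodule k (Plane k)) (h : ∀ g, j g • ψ • S = ψ • S) :
    H →* MulAction.stabilizer (PlaneAut k) S :=
  ((MulAut.conj ψ⁻¹).toMonoidHom.comp j).codRestrict _ fun g => by
    simp [MulAction.mem_stabilizer_iff, mul_smul, h]

theorem conjStabilizer_injective {H : Type*} [Group H] {j : H →* PlaneAut k}
    (hj : Function.Injective j) (ψ : PlaneAut k) (S : Submodule k (Plane k))
    (h : ∀ g, j g • ψ • S = ψ • S) : Function.Injective (conjStabilizer j ψ S h) := fun _ _ hab =>
  hj ((MulAut.conj ψ⁻¹).injective (congrArg Subtype.val hab))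

theorem alternative_planeAut [CharZero k] (hGL : StrongTitsAlternative (GL (Fin 2) k)) :
    StrongTitsAlternative (PlaneAut k) := by
  intro H
  obtain ⟨n, hn⟩ := (Group.isSolvable_def _).1 (isSolvable_stabilizer_lineSpan k)
  have hedge : ∀ x y, (tree k).Adj x y →
      derivedSeries ↥(MulAction.stabilizer H x ⊓ MulAction.stabilizer H y) n = ⊥ := by
    intro x y hxy
    obtain ⟨ψ, hψ⟩ : ∃ ψ : PlaneAut k, (x : Submodule k (Plane k)) = ψ • lineSpan k ∨
        (y : Submodule k (Plane k)) = ψ • lineSpan k := by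
      rcases hxy with h | h <;> obtain ⟨ψ, h1, -⟩ := exists_aut_of_lt h
      · exact ⟨ψ, Or.inl h1⟩
      · exact ⟨ψ, Or.inr h1⟩
    let K := MulAction.stabilizer H x ⊓ MulAction.stabilizer H y
    have hK : Function.Injective (H.subtype.comp K.subtype) :=
      Function.Injective.comp (g := H.subtype) (f := K.subtype) H.subtype_injective
        K.subtype_injective
    refine derivedSeries_eq_bot_of_injective
      (conjStabilizer (H.subtype.comp K.subtype) ψ (lineSpan k) fun g => ?_)
      (conjStabilizer_injective hK _ _ _) hn
    rcases hψ with h | h <;> rw [← h]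
    · exact congrArg Subtype.val g.2.1
    · exact congrArg Subtype.val g.2.2
  rcases alternative_of_isTree (H := H) isTree_tree (fun h x y => tree_adj_smul (h : PlaneAut k) x y)
    (fun h x => tree_not_adj_smul (h : PlaneAut k) x) hedge with h | ⟨⟨x, hx⟩, hfix⟩
  · exact h
  have hfix' : ∀ h : H, (h : PlaneAut k) • x = x := fun h => congrArg Subtype.val (hfix h)
  rcases hx with ⟨ψ, rfl⟩ | ⟨ψ, rfl⟩
  · let f := (linearPart k).toHomUnits.comp (conjStabilizer H.subtype ψ (planeSpan k) hfix')
    refine alternative_of_range f ?_ (hGL _)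
    have := isSolvable_ker_linearPart k
    refine Group.isSolvable_of_isSolvable_injective
      (f := (conjStabilizer H.subtype ψ (planeSpan k) hfix').subgroupComap
        (linearPart k).toHomUnits.ker) fun a b hab => Subtype.ext ?_
    exact conjStabilizer_injective H.subtype_injective _ _ hfix' (congrArg Subtype.val hab)
  · right
    have := isSolvable_stabilizer_lineSpan k
    exact isVirtuallySolvable_of_isSolvable (Group.isSolvable_of_isSolvable_injective
      (conjStabilizer_injective H.subtype_injective _ _ hfix'))

end Reduction

end TitsAlternative

namespace TitsAlternative

section LinearGroups

variable {Γ K : Type*} [Group Γ] [Field K]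

theorem isSolvable_of_apply_eq_zero (ρ : Γ →* GL (Fin 2) K) (hρ : Function.Injective ρ)
    {i j : Fin 2} (hij : i ≠ j) (h : ∀ g, ρ g i j = 0) : Group.IsSolvable Γ := by
  have hmul : ∀ g g' (m n : Fin 2), ρ (g * g') m n = ρ g m 0 * ρ g' 0 n + ρ g m 1 * ρ g' 1 n := by
    intro g g' m n
    simp [Matrix.mul_apply, Fin.sum_univ_two]
  have hzero : ∀ g g', ρ g 0 1 * ρ g' 1 0 = 0 := by
    fin_cases i <;> fin_cases j <;> simp_all
  let f : Γ →* K × K :=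
    { toFun := fun g => (ρ g 0 0, ρ g 1 1)
      map_one' := by simp
      map_mul' := fun g g' => by
        simp only [hmul, hzero, add_zero, Prod.mk_mul_mk, mul_comm (ρ g 1 0), zero_add] }
  refine isSolvable_of_isSolvable_ker f (Group.isSolvable_of_comm ?_)
  rintro ⟨a, ha⟩ ⟨b, hb⟩
  have ha' : ρ a 0 0 = 1 ∧ ρ a 1 1 = 1 := by simpa [f] using ha
  have hb' : ρ b 0 0 = 1 ∧ ρ b 1 1 = 1 := by simpa [f] using hb
  refine Subtype.ext (hρ (Units.ext (Matrix.ext fun m n => ?_)))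
  change ρ (a * b) m n = ρ (b * a) m n
  have h₁ := hzero a b
  have h₂ := hzero b a
  rw [hmul, hmul]
  rw [mul_comm] at h₂
  fin_cases m <;> fin_cases n <;> simp [ha', hb', h₁, h₂, add_comm, mul_comm (ρ b 1 0)]
  exact (mul_eq_zero.1 h₂).symm

theorem isVirtuallySolvable_of_prod_eq_zero (ρ : Γ →* GL (Fin 2) K) (hρ : Function.Injective ρ)
    (h : ∀ g, ρ g 0 0 * ρ g 0 1 * ρ g 1 0 * ρ g 1 1 = 0) : IsVirtuallySolvable Γ := by
  classical
  let : MulAction Γ (OnePoint K) := MulAction.compHom _ ρ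
  have hsmul : ∀ (g : Γ) (x : OnePoint K), g • x = ρ g • x := fun _ _ => rfl
  have hinf : ∀ g : Γ, g • (OnePoint.infty : OnePoint K) = OnePoint.infty ↔ ρ g 1 0 = 0 :=
    fun g => OnePoint.smul_infty_eq_self_iff
  have hzero : ∀ g : Γ, g • ((0 : K) : OnePoint K) = (0 : K) ↔ ρ g 0 1 = 0 := by
    intro g
    have hdet := (ρ g).det.ne_zero
    rw [Matrix.GeneralLinearGroup.val_det_apply, Matrix.det_fin_two] at hdet
    rw [hsmul, OnePoint.smul_some_eq_ite]
    by_cases hd : ρ g 1 1 = 0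
    · simp [hd]
      rintro hb
      simp [hd, hb] at hdet
    · simp [hd]
  have key := finiteIndex_stabilizer_of_meets (G := Γ) (OnePoint.infty : OnePoint K) ((0 : K)) ?_
  · have sol : ∀ (x : OnePoint K) (i j : Fin 2), i ≠ j →
        (∀ g : Γ, g • x = x → ρ g i j = 0) → Group.IsSolvable (MulAction.stabilizer Γ x) :=
      fun x i j hij hx => isSolvable_of_apply_eq_zero (ρ.comp (Subgroup.subtype _))
        (hρ.comp (Subgroup.subtype_injective _)) hij fun g => hx g g.2
    rcases key with hk | hk
    · exact ⟨_, hk, sol _ 1 0 (by simp) fun g => (hinf g).1⟩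
    · exact ⟨_, hk, sol _ 0 1 (by simp) fun g => (hzero g).1⟩
  · intro g
    rw [hinf, hzero]
    rcases mul_eq_zero.1 (h g) with h | hd
    · rcases mul_eq_zero.1 h with h | hc
      · rcases mul_eq_zero.1 h with ha | hb
        · by_cases hc : ρ g 1 0 = 0
          · exact Or.inl hc
          · right; left
            rw [hsmul, OnePoint.smul_infty_eq_ite]
            simp [hc, ha]
        · exact Or.inr (Or.inr (Or.inr hb))
      · exact Or.inl hc
    · right; right; left
      rw [hsmul, OnePoint.smul_some_eq_ite]
      simp [hd]

end LinearGroups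

section PingPong

variable {L : Type*} [NormedField L]

theorem nonzeroVector_smul_apply (g : GL (Fin 2) L) (v : {v : Fin 2 → L // v ≠ 0}) (i j : Fin 2) :
    (g • v).1 j = g j i * v.1 i + g j (i + 1) * v.1 (i + 1) := by
  have : (g • v).1 j = g j 0 * v.1 0 + g j 1 * v.1 1 := by
    change (g • v.1) j = _
    rw [Matrix.GeneralLinearGroup.fin_two_smul]
    fin_cases j <;> rfl
  rw [this]
  fin_cases i
  · rfl
  · exact add_comm _ _

/-- The nonzero vectors making a small angle with the `i`-th coordinate axis. -/
def sector (i : Fin 2) (ε : ℝ) : Set {v : Fin 2 → L // v ≠ 0} :=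
  {v | ‖v.1 (i + 1)‖ < ε * ‖v.1 i‖}

theorem sector_mono (i : Fin 2) {ε ε' : ℝ} (h : ε ≤ ε') :
    (sector i ε : Set {v : Fin 2 → L // v ≠ 0}) ⊆ sector i ε' := fun v hv =>
  lt_of_lt_of_le (b := ε * ‖v.1 i‖) hv (by gcongr)

/-- The filter of neighbourhoods of the `i`-th coordinate axis. -/
def axisFilter (L : Type*) [NormedField L] (i : Fin 2) : Filter {v : Fin 2 → L // v ≠ 0} where
  sets := {s | ∃ ε > 0, sector i ε ⊆ s}
  univ_sets := ⟨1, one_pos, Set.subset_univ _⟩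
  sets_of_superset := fun ⟨ε, hε, h⟩ hst => ⟨ε, hε, h.trans hst⟩
  inter_sets := fun ⟨ε, hε, h⟩ ⟨ε', hε', h'⟩ => ⟨min ε ε', lt_min hε hε', Set.subset_inter
    ((sector_mono i (min_le_left _ _)).trans h) ((sector_mono i (min_le_right _ _)).trans h')⟩

theorem mem_axisFilter {i : Fin 2} {s : Set {v : Fin 2 → L // v ≠ 0}} :
    s ∈ axisFilter L i ↔ ∃ ε > 0, sector i ε ⊆ s := Iff.rfl

instance axisFilter_neBot (i : Fin 2) : (axisFilter L i).NeBot := by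
  refine Filter.neBot_iff.2 fun h => ?_
  obtain ⟨ε, hε, hs⟩ := mem_axisFilter.1 (Filter.empty_mem_iff_bot.2 h)
  refine hs (a := ⟨Pi.single i 1, by simp⟩) ?_
  change ‖(Pi.single i (1 : L) : Fin 2 → L) (i + 1)‖ < ε * ‖(Pi.single i (1 : L) : Fin 2 → L) i‖
  fin_cases i <;> simpa using hε

theorem disjoint_axisFilter : Disjoint (axisFilter L 0) (axisFilter L 1) := by
  refine Filter.disjoint_iff.2 ⟨_, ⟨1, one_pos, subset_rfl⟩, _, ⟨1, one_pos, subset_rfl⟩, ?_⟩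
  refine Set.disjoint_left.2 fun v hv hv' => ?_
  simp [sector] at hv hv'
  linarith

theorem disjoint_smul_axisFilter {h : GL (Fin 2) L} (hh : ∀ i j, h i j ≠ 0) (i j : Fin 2) :
    Disjoint (h • axisFilter L i) (axisFilter L j) := by
  set S := ‖h (j + 1) (i + 1)‖ + ‖h j i‖ + ‖h j (i + 1)‖ + 1 with hS
  have hS' : 1 ≤ S := by simp [hS]; positivity
  have hp : 0 < ‖h (j + 1) i‖ := norm_pos_iff.2 (hh _ _)
  obtain ⟨ε, hε, hε₁, hεS⟩ : ∃ ε : ℝ, 0 < ε ∧ ε ≤ 1 ∧ ε * S ≤ ‖h (j + 1) i‖ :=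
    ⟨min 1 (‖h (j + 1) i‖ / S), by positivity, min_le_left _ _,
      (le_div_iff₀ (by positivity)).1 (min_le_right _ _)⟩
  refine Filter.disjoint_iff.2 ⟨h • sector i ε, Filter.smul_set_mem_smul_filter ⟨ε, hε, subset_rfl⟩,
    sector j ε, ⟨ε, hε, subset_rfl⟩, Set.disjoint_left.2 ?_⟩
  rintro _ ⟨v, hv, rfl⟩ hw
  have hv' : ‖v.1 (i + 1)‖ < ε * ‖v.1 i‖ := hv
  have hw' : ‖(h • v).1 (j + 1)‖ < ε * ‖(h • v).1 j‖ := hw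
  rw [nonzeroVector_smul_apply h v i, nonzeroVector_smul_apply h v i] at hw'
  have h₁ : ‖h (j + 1) i‖ * ‖v.1 i‖ - ‖h (j + 1) (i + 1)‖ * ‖v.1 (i + 1)‖ ≤
      ‖h (j + 1) i * v.1 i + h (j + 1) (i + 1) * v.1 (i + 1)‖ := by
    rw [← norm_mul, ← norm_mul]
    exact norm_sub_le_norm_add _ _
  have h₂ : ‖h j i * v.1 i + h j (i + 1) * v.1 (i + 1)‖ ≤
      ‖h j i‖ * ‖v.1 i‖ + ‖h j (i + 1)‖ * ‖v.1 (i + 1)‖ := by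
    rw [← norm_mul, ← norm_mul]
    exact norm_add_le _ _
  have hx : 0 < ‖v.1 i‖ := pos_of_mul_pos_right ((norm_nonneg _).trans_lt hv') hε.le
  have hy : ‖v.1 (i + 1)‖ ≤ ‖v.1 i‖ := hv'.le.trans (mul_le_of_le_one_left hx.le hε₁)
  have h₃ : ‖h (j + 1) (i + 1)‖ * ‖v.1 (i + 1)‖ ≤ ‖h (j + 1) (i + 1)‖ * (ε * ‖v.1 i‖) := by
    gcongr
  have h₄ : ε * ‖h j i * v.1 i + h j (i + 1) * v.1 (i + 1)‖ ≤
      ε * (‖h j i‖ * ‖v.1 i‖ + ‖h j (i + 1)‖ * ‖v.1 i‖) := by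
    refine mul_le_mul_of_nonneg_left (h₂.trans ?_) hε.le
    gcongr
  have h₅ : ε * S * ‖v.1 i‖ ≤ ‖h (j + 1) i‖ * ‖v.1 i‖ := by gcongr
  have h₆ : 0 < ε * ‖v.1 i‖ := by positivity
  rw [hS] at h₅
  linarith

theorem northSouth_axisFilter {g : GL (Fin 2) L} (h01 : g 0 1 = 0) (h10 : g 1 0 = 0)
    (hlt : ‖g 1 1‖ < ‖g 0 0‖) : NorthSouth g (axisFilter L 0) (axisFilter L 1) := by
  rintro U ⟨ε, hε, hU⟩ V ⟨δ, hδ, hV⟩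
  have h0 : 0 < ‖g 0 0‖ := (norm_nonneg _).trans_lt hlt
  have hlim := tendsto_pow_atTop_nhds_zero_of_lt_one (r := ‖g 1 1‖ / ‖g 0 0‖) (by positivity)
    ((div_lt_one h0).2 hlt)
  obtain ⟨N, hN⟩ := Filter.eventually_atTop.1 (hlim.eventually_lt_const (u := ε * δ) (by positivity))
  refine ⟨N, fun n hn x hx => hU ?_⟩
  have hpow : ∀ n : ℕ, (g ^ n • x).1 0 = g 0 0 ^ n * x.1 0 ∧
      (g ^ n • x).1 1 = g 1 1 ^ n * x.1 1 := by
    intro n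
    induction n with
    | zero => simp
    | succ n ih =>
      rw [pow_succ', mul_smul, nonzeroVector_smul_apply g _ 0, nonzeroVector_smul_apply g _ 0,
        zero_add, h01, h10, ih.1, ih.2]
      constructor <;> ring
  have hx' : δ * ‖x.1 1‖ ≤ ‖x.1 0‖ := not_lt.1 fun h => hx (hV h)
  have hx0 : 0 < ‖x.1 0‖ := by
    refine norm_pos_iff.2 fun h => x.2 (funext fun i => ?_)
    have h1 : x.1 1 = 0 := by
      rw [h, norm_zero] at hx'
      exact norm_le_zero_iff.1 (nonpos_of_mul_nonpos_right hx' hδ)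
    fin_cases i <;> assumption
  change ‖(g ^ n • x).1 1‖ < ε * ‖(g ^ n • x).1 0‖
  rw [(hpow n).1, (hpow n).2, norm_mul, norm_mul, norm_pow, norm_pow]
  have h₁ := hN n hn
  rw [div_pow, div_lt_iff₀ (by positivity)] at h₁
  refine lt_of_mul_lt_mul_left (a := δ) ?_ hδ.le
  calc δ * (‖g 1 1‖ ^ n * ‖x.1 1‖) = ‖g 1 1‖ ^ n * (δ * ‖x.1 1‖) := by ring
    _ ≤ ‖g 1 1‖ ^ n * ‖x.1 0‖ := by gcongr
    _ < ε * δ * ‖g 0 0‖ ^ n * ‖x.1 0‖ := by gcongr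
    _ = _ := by ring

/-- A diagonal matrix with eigenvalues of distinct norms generates, together with a conjugate by
a matrix without zero entries, a group containing a free group. -/
theorem containsNonabelianFree_of_diagonal {G : Type*} [Group G] (ρ : G →* GL (Fin 2) L)
    {g h : G} (h01 : ρ g 0 1 = 0) (h10 : ρ g 1 0 = 0) (hne : ‖ρ g 0 0‖ ≠ ‖ρ g 1 1‖)
    (hh : ∀ i j, ρ h i j ≠ 0) : ContainsNonabelianFree G := by
  let : MulAction G {v : Fin 2 → L // v ≠ 0} := MulAction.compHom _ ρ
  have main : ∀ g : G, ρ g 0 1 = 0 → ρ g 1 0 = 0 → ‖ρ g 1 1‖ < ‖ρ g 0 0‖ →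
      ContainsNonabelianFree G := by
    intro g h01 h10 hlt
    refine containsNonabelianFree_of_northSouth (g := g) (h := h) (φ := axisFilter L 0)
      (ψ := axisFilter L 1) (fun U hU V hV => ?_) disjoint_axisFilter
      (disjoint_smul_axisFilter hh 0 0) (disjoint_smul_axisFilter hh 0 1)
      (disjoint_smul_axisFilter hh 1 0) (disjoint_smul_axisFilter hh 1 1)
    obtain ⟨N, hN⟩ := northSouth_axisFilter h01 h10 hlt U hU V hV
    refine ⟨N, fun n hn x hx => ?_⟩
    have := hN n hn x hx
    rwa [← map_pow] at this
  rcases hne.lt_or_gt with hlt | hlt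
  · have e : ∀ i j, (ρ g * ρ g⁻¹) i j = (1 : Matrix (Fin 2) (Fin 2) L) i j := by
      intro i j
      rw [← map_mul, mul_inv_cancel, map_one, Units.val_one]
    have e00 := e 0 0
    have e01 := e 0 1
    have e10 := e 1 0
    have e11 := e 1 1
    simp [-map_inv, Matrix.mul_apply, Fin.sum_univ_two, h01, h10] at e00 e01 e10 e11
    have h0 : ρ g 0 0 ≠ 0 := left_ne_zero_of_mul_eq_one e00
    have h1 : ρ g 1 1 ≠ 0 := left_ne_zero_of_mul_eq_one e11
    refine main g⁻¹ (e01.resolve_left h0) (e10.resolve_left h1) ?_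
    rw [eq_inv_of_mul_eq_one_right e00, eq_inv_of_mul_eq_one_right e11, norm_inv, norm_inv]
    exact inv_strictAnti₀ (norm_pos_iff.2 h0) hlt
  · exact main g h01 h10 hlt

end PingPong

end TitsAlternative

namespace TitsAlternative

section Embeddings

/-- Embeddings of a countable domain extend from a countable field to any uncountable algebraically
closed field. -/
theorem exists_extension_of_countable {R F L : Type*} [CommRing R] [IsDomain R] [Field F] [Field L]
    [IsAlgClosed L] [Countable R] [Countable F] [Uncountable L] (i : R →+* F) (j : R →+* L)
    (hi : Function.Injective i) (hj : Function.Injective j) : ∃ σ : F →+* L, σ.comp i = j := by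
  let : Algebra R F := i.toAlgebra
  let : Algebra R L := j.toAlgebra
  have : FaithfulSMul R F := (faithfulSMul_iff_algebraMap_injective R F).2 hi
  have : FaithfulSMul R L := (faithfulSMul_iff_algebraMap_injective R L).2 hj
  obtain ⟨s, hs⟩ := exists_isTranscendenceBasis R F
  obtain ⟨t, ht⟩ := exists_isTranscendenceBasis R L
  have hcard := IsAlgClosed.cardinal_eq_cardinal_transcendence_basis_of_aleph0_lt _ ht
    (Cardinal.mk_le_aleph0_iff.2 inferInstance) (Cardinal.aleph0_lt_mk_iff.2 inferInstance)
  rw [Cardinal.lift_inj] at hcard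
  have hinf : Infinite t :=
    Cardinal.infinite_iff.2 (hcard ▸ (Cardinal.aleph0_lt_mk_iff.2 inferInstance).le)
  obtain ⟨c, hc⟩ := exists_injective_nat s
  have hy : AlgebraicIndependent R fun x : s => (Infinite.natEmbedding t (c x) : L) :=
    ht.1.comp _ ((Infinite.natEmbedding t).injective.comp hc)
  let φ : Algebra.adjoin R (Set.range ((↑) : s → F)) →ₐ[R] L :=
    (MvPolynomial.aeval fun x : s => (Infinite.natEmbedding t (c x) : L)).comp
      (hs.1.aevalEquiv.symm : _ →ₐ[R] MvPolynomial s R)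
  have hφ : Function.Injective φ := Function.Injective.comp (g := MvPolynomial.aeval _) hy hs.1.aevalEquiv.symm.injective
  let : Algebra (Algebra.adjoin R (Set.range ((↑) : s → F))) L := φ.toRingHom.toAlgebra
  have : FaithfulSMul (Algebra.adjoin R (Set.range ((↑) : s → F))) L :=
    (faithfulSMul_iff_algebraMap_injective _ L).2 hφ
  have := hs.isAlgebraic
  let σ : F →ₐ[Algebra.adjoin R (Set.range ((↑) : s → F))] L := IsAlgClosed.lift
  refine ⟨σ, RingHom.ext fun x => ?_⟩
  exact (σ.commutes (algebraMap R _ x)).trans (φ.commutes x)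

/-- A number is integral if all its conjugates are integral at all primes. -/
theorem isIntegral_of_norm_le_one {F : Type*} [Field F] [CharZero F] {r : F} (hr : IsIntegral ℚ r)
    (h : ∀ (p : ℕ) [Fact p.Prime] (x : PadicAlgCl p), Polynomial.aeval x (minpoly ℚ r) = 0 →
      ‖x‖ ≤ 1) : IsIntegral ℤ r := by
  set f := minpoly ℚ r with hf
  have hmonic : f.Monic := minpoly.monic hr
  have hcoeff : ∀ (p : ℕ) [Fact p.Prime] (n : ℕ), ‖((f.coeff n : ℚ) : ℚ_[p])‖ ≤ 1 := by
    intro p _ n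
    let P : Polynomial (PadicAlgCl p) → Prop := fun g => ∀ n, ‖g.coeff n‖ ≤ 1
    have hP : P (f.map (algebraMap ℚ (PadicAlgCl p))) := by
      have hsplit := (IsAlgClosed.splits (f.map (algebraMap ℚ (PadicAlgCl p)))).eq_prod_roots
      rw [(hmonic.map _).leadingCoeff, map_one, one_mul] at hsplit
      rw [hsplit]
      refine Multiset.prod_induction P _ (fun a b ha hb n => ?_) (fun n => ?_) fun g hg n => ?_
      · rw [Polynomial.coeff_mul]
        refine IsUltrametricDist.norm_sum_le_of_forall_le_of_nonneg zero_le_one fun x _ => ?_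
        rw [norm_mul]
        exact mul_le_one₀ (ha _) (norm_nonneg _) (hb _)
      · rw [Polynomial.coeff_one]
        split_ifs <;> simp
      · obtain ⟨x, hx, rfl⟩ := Multiset.mem_map.1 hg
        have hx' : ‖x‖ ≤ 1 := by
          refine h p x ?_
          rw [Polynomial.aeval_def, ← Polynomial.eval_map]
          exact Polynomial.isRoot_of_mem_roots hx
        rw [Polynomial.coeff_sub, Polynomial.coeff_X, Polynomial.coeff_C]
        rcases n with _ | _ | n <;> simp [hx']
    have := hP n
    rwa [Polynomial.coeff_map, IsScalarTower.algebraMap_apply ℚ ℚ_[p] (PadicAlgCl p),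
      PadicAlgCl.norm_extends] at this
  have hden : ∀ n, (f.coeff n).den = 1 := by
    intro n
    by_contra hne
    obtain ⟨p, hp, hdvd⟩ := Nat.exists_prime_and_dvd hne
    have : Fact p.Prime := ⟨hp⟩
    have h₁ : ‖((f.coeff n).den : ℚ_[p])‖ < 1 := by
      have := (Padic.norm_intCast_lt_one_iff (p := p) (k := (f.coeff n).den)).2
        (Int.natCast_dvd_natCast.2 hdvd)
      simpa using this
    have h₂ : ‖((f.coeff n).num : ℚ_[p])‖ < 1 := by
      have e : (f.coeff n : ℚ_[p]) * (f.coeff n).den = (f.coeff n).num := by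
        exact_mod_cast congrArg (fun q : ℚ => (q : ℚ_[p])) (Rat.mul_den_eq_num (f.coeff n))
      rw [← e, norm_mul]
      exact mul_lt_one_of_nonneg_of_lt_one_right (hcoeff p n) (norm_nonneg _) h₁
    have h₃ := Int.natCast_dvd.1 (Padic.norm_intCast_lt_one_iff.1 h₂)
    exact hp.one_lt.ne' (Nat.dvd_one.1 ((f.coeff n).reduced ▸ Nat.dvd_gcd h₃ hdvd))
  have hlift : f ∈ Polynomial.lifts (Int.castRingHom ℚ) := by
    refine (Polynomial.lifts_iff_coeff_lifts _).2 fun n => ⟨(f.coeff n).num, ?_⟩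
    exact Rat.den_eq_one_iff _ |>.1 (hden n)
  obtain ⟨q, hq, -, hq'⟩ := Polynomial.lifts_and_natDegree_eq_and_monic hlift hmonic
  refine ⟨q, hq', ?_⟩
  have h₀ := minpoly.aeval ℚ r
  rw [← hf, ← hq, Polynomial.aeval_def, Polynomial.eval₂_map] at h₀
  rwa [RingHom.ext_int (algebraMap ℤ F) ((algebraMap ℚ F).comp (Int.castRingHom ℚ))]

/-- An element of a countable field of characteristic zero which is not a root of unity can be made
of norm different from one. -/
theorem exists_ringHom_norm_ne_one {F : Type*} [Field F] [CharZero F] [Countable F] (r : F)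
    (hr : ∀ n : ℕ, 0 < n → r ^ n ≠ 1) :
    ∃ (L : Type) (_ : NormedField L) (σ : F →+* L), ‖σ r‖ ≠ 1 := by
  have hC : Uncountable ℂ := Cardinal.aleph0_lt_mk_iff.1 (by
    rw [Cardinal.mk_complex]
    exact Cardinal.aleph0_lt_continuum)
  by_cases htr : Transcendental ℚ r
  · obtain ⟨z, hz, hz'⟩ : ∃ z : ℂ, Transcendental ℚ z ∧ ‖z‖ ≠ 1 := by
      obtain ⟨z, hz⟩ : ∃ z : ℂ, Transcendental ℚ z := by
        by_contra! hcon
        refine Set.not_countable_univ (α := ℂ) ?_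
        convert Algebraic.countable ℚ ℂ
        exact (Set.eq_univ_of_forall fun z => not_not.1 (hcon z)).symm
      by_cases h1 : ‖z‖ = 1
      · refine ⟨2 * z, fun halg => hz ?_, by simp [h1]⟩
        have : z = (algebraMap ℚ ℂ (1 / 2)) * (2 * z) := by simp
        rw [this]
        exact (isAlgebraic_algebraMap _).mul halg
      · exact ⟨z, hz, h1⟩
    have : Countable (Polynomial ℚ) := Cardinal.mk_le_aleph0_iff.1 (by
      simp)
    obtain ⟨σ, hσ⟩ := exists_extension_of_countable (Polynomial.aeval r : Polynomial ℚ →ₐ[ℚ] F).toRingHom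
      (Polynomial.aeval z : Polynomial ℚ →ₐ[ℚ] ℂ).toRingHom (transcendental_iff_injective.1 htr)
      (transcendental_iff_injective.1 hz)
    refine ⟨ℂ, inferInstance, σ, ?_⟩
    have := RingHom.congr_fun hσ Polynomial.X
    simp at this
    rwa [this]
  · have hr_integral : IsIntegral ℚ r := (not_not.1 htr : IsAlgebraic ℚ r).isIntegral
    have : FiniteDimensional ℚ (IntermediateField.adjoin ℚ {r}) :=
      IntermediateField.adjoin.finiteDimensional hr_integral
    have : NumberField (IntermediateField.adjoin ℚ {r}) := ⟨⟩
    by_cases hZ : IsIntegral ℤ r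
    · by_cases hall : ∀ φ : IntermediateField.adjoin ℚ {r} →+* ℂ,
          ‖φ (IntermediateField.AdjoinSimple.gen ℚ r)‖ = 1
      · have hZ' : IsIntegral ℤ (IntermediateField.AdjoinSimple.gen ℚ r) := by
          refine (isIntegral_algHom_iff ((IntermediateField.adjoin ℚ {r}).val.restrictScalars ℤ)
            (Subtype.val_injective)).1 hZ
        obtain ⟨n, hn, h⟩ := NumberField.Embeddings.pow_eq_one_of_norm_eq_one _ ℂ hZ' hall
        exact (hr n hn (congrArg Subtype.val h)).elim
      · push Not at hall
        obtain ⟨φ, hφ⟩ := hall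
        obtain ⟨σ, hσ⟩ := exists_extension_of_countable
          (IntermediateField.adjoin ℚ {r}).val.toRingHom φ Subtype.val_injective φ.injective
        refine ⟨ℂ, inferInstance, σ, ?_⟩
        rwa [← hσ] at hφ
    · obtain ⟨p, hp, x, hx, hx'⟩ : ∃ (p : ℕ) (_ : Fact p.Prime) (x : PadicAlgCl p),
          Polynomial.aeval x (minpoly ℚ r) = 0 ∧ 1 < ‖x‖ := by
        by_contra! hcon
        exact hZ (isIntegral_of_norm_le_one hr_integral fun p hp x hx => hcon p hp x hx)
      have : Uncountable (PadicAlgCl p) := by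
        have : Uncountable ℚ_[p] := Cardinal.aleph0_lt_mk_iff.1
          (Cardinal.aleph0_lt_continuum.trans_le (continuum_le_cardinal_of_nontriviallyNormedField _))
        exact (algebraMap ℚ_[p] (PadicAlgCl p)).injective.uncountable
      let φ := (IntermediateField.algHomAdjoinIntegralEquiv ℚ (K := PadicAlgCl p) hr_integral).symm ⟨x,
        (Polynomial.mem_aroots).2 ⟨minpoly.ne_zero hr_integral, hx⟩⟩
      have hφ : φ (IntermediateField.AdjoinSimple.gen ℚ r) = x :=
        IntermediateField.algHomAdjoinIntegralEquiv_symm_apply_gen ..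
      obtain ⟨σ, hσ⟩ := exists_extension_of_countable
        (IntermediateField.adjoin ℚ {r}).val.toRingHom φ.toRingHom Subtype.val_injective
        φ.toRingHom.injective
      refine ⟨PadicAlgCl p, inferInstance, σ, ?_⟩
      have := RingHom.congr_fun hσ (IntermediateField.AdjoinSimple.gen ℚ r)
      have e : σ r = x := this.trans hφ
      rw [e]
      exact hx'.ne'

end Embeddings

end TitsAlternative

namespace TitsAlternative

section RootsOfUnity

/-- An algebraic integer all of whose conjugates have absolute value less than one vanishes. -/
theorem eq_zero_of_norm_lt_one {A : Type*} [Field A] [CharZero A] [Algebra.IsAlgebraic ℚ A] {α : A}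
    (hα : IsIntegral ℤ α) (h : ∀ φ : A →+* ℂ, ‖φ α‖ < 1) : α = 0 := by
  by_contra hne
  have : FiniteDimensional ℚ (IntermediateField.adjoin ℚ {α}) :=
    IntermediateField.adjoin.finiteDimensional (Algebra.IsIntegral.isIntegral α)
  have : NumberField (IntermediateField.adjoin ℚ {α}) := ⟨⟩
  have hα' : IsIntegral ℤ (IntermediateField.AdjoinSimple.gen ℚ α) :=
    (isIntegral_algHom_iff ((IntermediateField.adjoin ℚ {α}).val.restrictScalars ℤ)
      Subtype.val_injective).1 hα
  obtain ⟨n, hn, hpow⟩ := NumberField.Embeddings.pow_eq_one_of_norm_le_one _ ℂ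
    (fun h0 => hne (congrArg Subtype.val h0)) hα' fun φ => by
      let : Algebra (IntermediateField.adjoin ℚ {α}) ℂ := φ.toAlgebra
      have : Algebra.IsAlgebraic (IntermediateField.adjoin ℚ {α}) A :=
        Algebra.IsAlgebraic.tower_top (K := ℚ) _
      let ψ : A →ₐ[IntermediateField.adjoin ℚ {α}] ℂ := IsAlgClosed.lift
      have e : ψ α = φ (IntermediateField.AdjoinSimple.gen ℚ α) :=
        ψ.commutes (IntermediateField.AdjoinSimple.gen ℚ α)
      exact (e ▸ h (ψ : A →+* ℂ)).le
  let ψ : A →ₐ[ℚ] ℂ := IsAlgClosed.lift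
  have h₁ : ψ α ^ n = 1 := by
    rw [← map_pow, show α ^ n = 1 from congrArg Subtype.val hpow, map_one]
  have h₂ := pow_lt_one₀ (norm_nonneg _) (h (ψ : A →+* ℂ)) hn.ne'
  rw [← norm_pow] at h₂
  change ‖ψ α ^ n‖ < 1 at h₂
  simp [h₁] at h₂

/-- The elements `2 - ν - ν⁻¹`, where `ν` is a root of unity. -/
def IsSineSquare {A : Type*} [Field A] (w : A) : Prop :=
  ∃ ν : A, (∃ n : ℕ, 0 < n ∧ ν ^ n = 1) ∧ w = 2 - ν - ν⁻¹

theorem IsSineSquare.isIntegral {A : Type*} [Field A] {w : A} (hw : IsSineSquare w) :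
    IsIntegral ℤ w := by
  obtain ⟨ν, ⟨n, hn, hν⟩, rfl⟩ := hw
  have h₂ : IsIntegral ℤ (2 : A) := by simpa using isIntegral_algebraMap (R := ℤ) (A := A) (x := 2)
  exact (h₂.sub (IsIntegral.of_pow hn (hν ▸ isIntegral_one))).sub
    (IsIntegral.of_pow hn (by rw [inv_pow, hν, inv_one]; exact isIntegral_one))

theorem IsSineSquare.exists_eq_ofReal {A : Type*} [Field A] {w : A} (hw : IsSineSquare w)
    (φ : A →+* ℂ) : ∃ x : ℝ, 0 ≤ x ∧ φ w = x := by
  obtain ⟨ν, ⟨n, hn, hν⟩, rfl⟩ := hw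
  have h₁ : ‖φ ν‖ = 1 :=
    Complex.norm_eq_one_of_pow_eq_one (by rw [← map_pow, hν, map_one]) hn.ne'
  refine ⟨2 - 2 * (φ ν).re, ?_, ?_⟩
  · have := Complex.re_le_norm (φ ν)
    linarith
  · rw [map_sub, map_sub, map_inv₀, Complex.inv_eq_conj h₁, map_ofNat]
    apply Complex.ext
    · simp
      ring
    · simp

theorem prod_two_sub_pow_sub_inv {A : Type*} [Field A] {r : A} {N : ℕ}
    (hr : IsPrimitiveRoot r (N + 1)) :
    ∏ j ∈ Finset.range N, (2 - r ^ (j + 1) - (r ^ (j + 1))⁻¹) = (N + 1) ^ 2 := by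
  have h₁ := hr.prod_one_sub_pow_eq_order
  have h₂ := hr.inv.prod_one_sub_pow_eq_order
  rw [pow_two]
  nth_rw 1 [← h₁]
  rw [← h₂, ← Finset.prod_mul_distrib]
  refine Finset.prod_congr rfl fun j _ => ?_
  have h0 : r ^ (j + 1) ≠ 0 := pow_ne_zero _ (hr.ne_zero (Nat.succ_ne_zero _))
  rw [inv_pow]
  field_simp
  ring

theorem pow_four_lt (N : ℕ) (hN : 6 ≤ N) : (N + 1) ^ 4 < 4 ^ N := by
  induction N, hN using Nat.le_induction with
  | base => norm_num
  | succ N hN ih =>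
    have : (N + 1 + 1) ^ 4 ≤ 4 * (N + 1) ^ 4 := by
      obtain ⟨m, rfl⟩ := Nat.exists_eq_add_of_le hN
      ring_nf
      nlinarith [Nat.zero_le (m ^ 2), Nat.zero_le (m ^ 3), Nat.zero_le (m ^ 4)]
    rw [pow_succ 4]
    linarith

theorem mul_eq_zero_of_isSineSquare_of_isAlgebraic {A : Type*} [Field A] [CharZero A]
    [Algebra.IsAlgebraic ℚ A] {N : ℕ} (hN : 6 ≤ N) {r : A} (hr : IsPrimitiveRoot r (N + 1))
    {u v : A} (huv : u + v = 1)
    (hu : ∀ j < N, IsSineSquare (u * (2 - r ^ (j + 1) - (r ^ (j + 1))⁻¹)))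
    (hv : ∀ j < N, IsSineSquare (v * (2 - r ^ (j + 1) - (r ^ (j + 1))⁻¹))) : u * v = 0 := by
  let t : ℕ → A := fun j => 2 - r ^ (j + 1) - (r ^ (j + 1))⁻¹
  have hprod : ∏ j ∈ Finset.range N, (u * t j * (v * t j)) = (u * v) ^ N * (N + 1) ^ 4 := by
    have hp : ∏ j ∈ Finset.range N, t j = (N + 1) ^ 2 := prod_two_sub_pow_sub_inv hr
    simp only [Finset.prod_mul_distrib, Finset.prod_const, Finset.card_range, hp]
    ring
  have hN0 : ((N : A) + 1) ^ 4 ≠ 0 := pow_ne_zero _ (Nat.cast_add_one_ne_zero N)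
  refine eq_zero_of_pow_eq_zero (n := N) ((mul_eq_zero.1 (eq_zero_of_norm_lt_one
    (α := (u * v) ^ N * (N + 1) ^ 4) ?_ fun φ => ?_)).resolve_right hN0)
  · rw [← hprod]
    exact IsIntegral.prod _ fun j hj => ((hu j (Finset.mem_range.1 hj)).isIntegral).mul
      (hv j (Finset.mem_range.1 hj)).isIntegral
  · have h0 : t 0 ≠ 0 := by
      intro h
      have := prod_two_sub_pow_sub_inv hr
      rw [Finset.prod_eq_zero (Finset.mem_range.2 (by lia : 0 < N)) h] at this
      exact pow_ne_zero 2 (Nat.cast_add_one_ne_zero N) this.symm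
    obtain ⟨x, hx, hx'⟩ := (hu 0 (by lia)).exists_eq_ofReal φ
    obtain ⟨y, hy, hy'⟩ := (hv 0 (by lia)).exists_eq_ofReal φ
    change φ (u * t 0) = x at hx'
    change φ (v * t 0) = y at hy'
    have hsum : φ (t 0) = ((x + y : ℝ) : ℂ) := by
      rw [Complex.ofReal_add, ← hx', ← hy', ← map_add, ← add_mul, huv, one_mul]
    have hxy : x + y ≠ 0 := fun h => h0 (φ.injective (by rw [hsum, h]; simp))
    have hxy' : 0 < x + y := lt_of_le_of_ne (by positivity) hxy.symm
    have hprod : φ (u * v) = ((x * y / (x + y) ^ 2 : ℝ) : ℂ) := by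
      rw [Complex.ofReal_div, eq_div_iff (by exact_mod_cast pow_ne_zero 2 hxy), Complex.ofReal_mul,
        Complex.ofReal_pow, ← hsum, ← hx', ← hy', ← map_mul, ← map_pow, ← map_mul]
      ring_nf
    have hle : x * y / (x + y) ^ 2 ≤ 1 / 4 := by
      rw [div_le_iff₀ (by positivity)]
      nlinarith [sq_nonneg (x - y)]
    have hnorm : ‖φ (u * v)‖ ≤ 1 / 4 := by
      rw [hprod, Complex.norm_real, Real.norm_of_nonneg (by positivity)]
      exact hle
    rw [map_mul, map_pow, norm_mul, norm_pow, map_pow, norm_pow, map_add, map_one, map_natCast]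
    have e : ‖(N : ℂ) + 1‖ = N + 1 := by
      rw [← Nat.cast_add_one, Complex.norm_natCast, Nat.cast_add_one]
    rw [e]
    have h4 : ((N : ℝ) + 1) ^ 4 < 4 ^ N := by exact_mod_cast pow_four_lt N hN
    calc ‖φ (u * v)‖ ^ N * ((N : ℝ) + 1) ^ 4 ≤ (1 / 4) ^ N * ((N : ℝ) + 1) ^ 4 := by gcongr
      _ < (1 / 4) ^ N * 4 ^ N := by gcongr
      _ = 1 := by rw [← mul_pow]; norm_num

theorem mul_eq_zero_of_isSineSquare {K : Type*} [Field K] [CharZero K] {N : ℕ} (hN : 6 ≤ N) {r : K}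
    (hr : IsPrimitiveRoot r (N + 1)) {u v : K} (huv : u + v = 1)
    (hu : ∀ j < N, IsSineSquare (u * (2 - r ^ (j + 1) - (r ^ (j + 1))⁻¹)))
    (hv : ∀ j < N, IsSineSquare (v * (2 - r ^ (j + 1) - (r ^ (j + 1))⁻¹))) : u * v = 0 := by
  let A := algebraicClosure ℚ K
  have : Algebra.IsAlgebraic ℚ A := algebraicClosure.isAlgebraic ℚ K
  have hroot : ∀ (ν : K) (n : ℕ), 0 < n → ν ^ n = 1 → ν ∈ A := fun ν n hn hν =>
    mem_algebraicClosure_iff.2 (IsIntegral.of_pow hn (hν ▸ isIntegral_one)).isAlgebraic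
  have hsine : ∀ w : K, IsSineSquare w → w ∈ A := by
    rintro _ ⟨ν, ⟨n, hn, hν⟩, rfl⟩
    exact sub_mem (sub_mem (ofNat_mem A 2) (hroot ν n hn hν)) (inv_mem (hroot ν n hn hν))
  have hsine' : ∀ w : A, IsSineSquare (w : K) → IsSineSquare w := by
    rintro w ⟨ν, ⟨n, hn, hν⟩, hw⟩
    exact ⟨⟨ν, hroot ν n hn hν⟩, ⟨n, hn, Subtype.ext hν⟩, Subtype.ext hw⟩
  have hrA : r ∈ A := hroot r (N + 1) (Nat.succ_pos _) hr.pow_eq_one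
  have ht0 : (2 - r ^ (0 + 1) - (r ^ (0 + 1))⁻¹) ≠ 0 := by
    intro h
    have := prod_two_sub_pow_sub_inv hr
    rw [Finset.prod_eq_zero (Finset.mem_range.2 (by lia : 0 < N)) h] at this
    exact pow_ne_zero 2 (Nat.cast_add_one_ne_zero N) this.symm
  have huA : u ∈ A := by
    have h₁ := hsine _ (hu 0 (by lia))
    have h₂ : (2 - r ^ (0 + 1) - (r ^ (0 + 1))⁻¹) ∈ A :=
      sub_mem (sub_mem (ofNat_mem A 2) (pow_mem hrA _)) (inv_mem (pow_mem hrA _))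
    rw [← mul_div_cancel_right₀ u ht0]
    exact div_mem h₁ h₂
  have hvA : v ∈ A := by
    rw [eq_sub_of_add_eq' huv]
    exact sub_mem (one_mem _) huA
  have hr' : IsPrimitiveRoot (⟨r, hrA⟩ : A) (N + 1) :=
    IsPrimitiveRoot.of_map_of_injective (f := A.val) hr Subtype.val_injective
  exact congrArg Subtype.val (mul_eq_zero_of_isSineSquare_of_isAlgebraic hN hr'
    (u := ⟨u, huA⟩) (v := ⟨v, hvA⟩) (Subtype.ext huv) (fun j hj => hsine' _ (hu j hj))
    fun j hj => hsine' _ (hv j hj))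

end RootsOfUnity

end TitsAlternative

namespace TitsAlternative

section GeneralLinearGroup

variable {Γ K : Type*} [Group Γ] [Field K]

theorem mul_apply_fin_two (A B : GL (Fin 2) K) (i j : Fin 2) :
    (A * B) i j = A i 0 * B 0 j + A i 1 * B 1 j := by
  simp [Matrix.mul_apply, Fin.sum_univ_two]

theorem det_fin_two_ne_zero (A : GL (Fin 2) K) : A 0 0 * A 1 1 - A 0 1 * A 1 0 ≠ 0 := by
  have := A.det.ne_zero
  rwa [Matrix.GeneralLinearGroup.val_det_apply, Matrix.det_fin_two] at this

theorem inv_apply_fin_two (A : GL (Fin 2) K) :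
    A⁻¹ 0 0 = A 1 1 / (A 0 0 * A 1 1 - A 0 1 * A 1 0) ∧
    A⁻¹ 0 1 = -A 0 1 / (A 0 0 * A 1 1 - A 0 1 * A 1 0) ∧
    A⁻¹ 1 0 = -A 1 0 / (A 0 0 * A 1 1 - A 0 1 * A 1 0) ∧
    A⁻¹ 1 1 = A 0 0 / (A 0 0 * A 1 1 - A 0 1 * A 1 0) := by
  rw [Matrix.coe_units_inv, Matrix.inv_def, Matrix.det_fin_two, Matrix.adjugate_fin_two,
    Ring.inverse_eq_inv']
  simp [div_eq_inv_mul]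

theorem mem_range_map_of_forall_mem {F : Subfield K} (A : GL (Fin 2) K) (h : ∀ i j, A i j ∈ F) :
    A ∈ (Matrix.GeneralLinearGroup.map (n := Fin 2) F.subtype).range := by
  let M : Matrix (Fin 2) (Fin 2) F := fun i j => ⟨A i j, h i j⟩
  have hM : M.map F.subtype = A := rfl
  have hdet : M.det ≠ 0 := by
    intro h0
    have h₁ := congrArg F.subtype h0
    rw [RingHom.map_det, map_zero] at h₁
    exact A.det.ne_zero h₁
  exact ⟨Matrix.GeneralLinearGroup.mkOfDetNeZero M hdet, Units.ext hM⟩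

theorem containsNonabelianFree_of_forall_pow_ne_one [CharZero K] (ρ : Γ →* GL (Fin 2) K) {g h : Γ}
    (h01 : ρ g 0 1 = 0) (h10 : ρ g 1 0 = 0)
    (hr : ∀ n : ℕ, 0 < n → (ρ g 0 0 / ρ g 1 1) ^ n ≠ 1) (hh : ∀ i j, ρ h i j ≠ 0) :
    ContainsNonabelianFree Γ := by
  let S : Set K := Set.range (fun p : Fin 2 × Fin 2 => ρ g p.1 p.2) ∪
    Set.range fun p : Fin 2 × Fin 2 => ρ h p.1 p.2
  let F := Subfield.closure S
  have hg : ∀ i j, ρ g i j ∈ F := fun i j => Subfield.subset_closure (Or.inl ⟨(i, j), rfl⟩)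
  have hh' : ∀ i j, ρ h i j ∈ F := fun i j => Subfield.subset_closure (Or.inr ⟨(i, j), rfl⟩)
  have hcount : Countable F := by
    have hS : Countable S :=
      ((Set.countable_range _).union (Set.countable_range _)).to_subtype
    exact Cardinal.mk_le_aleph0_iff.1 ((Subfield.cardinalMk_closure_le_max S).trans
      (max_le (Cardinal.mk_le_aleph0_iff.2 hS) le_rfl))
  let ι := Matrix.GeneralLinearGroup.map (n := Fin 2) F.subtype
  have hι : Function.Injective ι := by
    intro A B hAB
    refine Units.ext (Matrix.ext fun i j => Subtype.ext ?_)
    exact congrArg (fun C : GL (Fin 2) K => C i j) hAB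
  let G := ι.range.comap ρ
  let f : G →* GL (Fin 2) F :=
    (MonoidHom.ofInjective hι).symm.toMonoidHom.comp (ρ.subgroupComap ι.range)
  have hf : ∀ (x : G) i j, (f x i j : K) = ρ x i j := by
    intro x i j
    have : ι (f x) = ρ x := MonoidHom.apply_ofInjective_symm hι _
    exact congrArg (fun C : GL (Fin 2) K => C i j) this
  let g' : G := ⟨g, mem_range_map_of_forall_mem (ρ g) hg⟩
  let h' : G := ⟨h, mem_range_map_of_forall_mem (ρ h) hh'⟩
  obtain ⟨L, _, σ, hσ⟩ := exists_ringHom_norm_ne_one (f g' 0 0 / f g' 1 1) fun n hn he => by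
    refine hr n hn ?_
    have := congrArg ((↑) : F → K) he
    push_cast at this
    rwa [hf, hf] at this
  have hfz : ∀ (x : G) i j, ρ x i j = 0 → f x i j = 0 := fun x i j h0 =>
    Subtype.ext ((hf x i j).trans h0)
  refine containsNonabelianFree_map G.subtype G.subtype_injective
    (containsNonabelianFree_of_diagonal ((Matrix.GeneralLinearGroup.map σ).comp f) (g := g')
      (h := h') ?_ ?_ ?_ ?_)
  · change σ (f g' 0 1) = 0
    rw [hfz g' 0 1 h01, map_zero]
  · change σ (f g' 1 0) = 0
    rw [hfz g' 1 0 h10, map_zero]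
  · change ‖σ (f g' 0 0)‖ ≠ ‖σ (f g' 1 1)‖
    intro he
    refine hσ ?_
    rw [map_div₀, norm_div, he, div_self]
    rw [norm_ne_zero_iff, map_ne_zero]
    intro h0
    refine det_fin_two_ne_zero (f g') ?_
    rw [h0, hfz g' 0 1 h01]
    ring
  · intro i j
    change σ (f h' i j) ≠ 0
    rw [map_ne_zero]
    exact fun h0 => hh i j ((hf h' i j).symm.trans (congrArg Subtype.val h0))

/-- The numbers `x` and `y` are the eigenvalues of `A`, counted with multiplicity. -/
def IsEigenpair (A : GL (Fin 2) K) (x y : K) : Prop :=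
  x + y = A 0 0 + A 1 1 ∧ x * y = A 0 0 * A 1 1 - A 0 1 * A 1 0

theorem isEigenpair_iff {A : GL (Fin 2) K} {x y : K} :
    IsEigenpair A x y ↔ x + y = A.val.trace ∧ x * y = A.val.det := by
  rw [Matrix.trace_fin_two, Matrix.det_fin_two]
  rfl

theorem exists_isEigenpair [CharZero K] [IsAlgClosed K] (A : GL (Fin 2) K) :
    ∃ x y, IsEigenpair A x y := by
  obtain ⟨s, hs⟩ := IsAlgClosed.exists_eq_mul_self
    (discrim 1 (-(A 0 0 + A 1 1)) (A 0 0 * A 1 1 - A 0 1 * A 1 0))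
  obtain ⟨x, hx⟩ := exists_quadratic_eq_zero one_ne_zero ⟨s, hs⟩
  exact ⟨x, A 0 0 + A 1 1 - x, by ring, by linear_combination -hx⟩

/-- The conjugate of a representation by a matrix. -/
def conjHom (ρ : Γ →* GL (Fin 2) K) (P : GL (Fin 2) K) : Γ →* GL (Fin 2) K :=
  (MulAut.conj P⁻¹).toMonoidHom.comp ρ

theorem conjHom_apply (ρ : Γ →* GL (Fin 2) K) (P : GL (Fin 2) K) (g : Γ) :
    conjHom ρ P g = P⁻¹ * ρ g * P := by
  simp [conjHom]

theorem conjHom_injective {ρ : Γ →* GL (Fin 2) K} (hρ : Function.Injective ρ) (P : GL (Fin 2) K) :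
    Function.Injective (conjHom ρ P) :=
  (MulAut.conj P⁻¹).injective.comp hρ

theorem isEigenpair_conjHom {ρ : Γ →* GL (Fin 2) K} {P : GL (Fin 2) K} {g : Γ} {x y : K} :
    IsEigenpair (conjHom ρ P g) x y ↔ IsEigenpair (ρ g) x y := by
  rw [isEigenpair_iff, isEigenpair_iff, conjHom_apply]
  have h₁ : (P⁻¹ * ρ g * P).val.trace = (ρ g).val.trace := by
    rw [Units.val_mul, Matrix.trace_mul_comm, ← Units.val_mul, ← mul_assoc, mul_inv_cancel, one_mul]
  have h₂ : (P⁻¹ * ρ g * P).val.det = (ρ g).val.det := by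
    rw [Units.val_mul, Matrix.det_mul_comm, ← Units.val_mul, ← mul_assoc, mul_inv_cancel, one_mul]
  rw [h₁, h₂]

theorem exists_val_eq (a b c d : K) (h : a * d - b * c ≠ 0) :
    ∃ P : GL (Fin 2) K, P.val = !![a, b; c, d] :=
  ⟨Matrix.GeneralLinearGroup.mkOfDetNeZero !![a, b; c, d] (by rwa [Matrix.det_fin_two_of]), rfl⟩

theorem conj_eq_of_mul_eq {A P : GL (Fin 2) K} {D : Matrix (Fin 2) (Fin 2) K}
    (h : A.val * P.val = P.val * D) : (P⁻¹ * A * P).val = D := by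
  rw [mul_assoc, Units.val_mul, Units.val_mul, h, ← mul_assoc, ← Units.val_mul, inv_mul_cancel,
    Units.val_one, one_mul]

/-- Matrices with distinct eigenvalues are diagonalizable. -/
theorem exists_conj_eq_diagonal {A : GL (Fin 2) K} {x y : K} (hA : IsEigenpair A x y) (hxy : x ≠ y) :
    ∃ P : GL (Fin 2) K, (P⁻¹ * A * P).val = !![x, 0; 0, y] := by
  obtain ⟨ht, hd⟩ := hA
  have hAe : A.val = !![A 0 0, A 0 1; A 1 0, A 1 1] := Matrix.eta_fin_two _
  have hyx : y - x ≠ 0 := sub_ne_zero.2 hxy.symm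
  set a := A 0 0
  set b := A 0 1
  set c := A 1 0
  set d := A 1 1
  suffices ∃ P : GL (Fin 2) K, A.val * P.val = P.val * !![x, 0; 0, y] from
    this.imp fun P hP => conj_eq_of_mul_eq hP
  by_cases hb : b = 0
  · by_cases hc : c = 0
    · have : (x - a) * (x - d) = 0 := by
        rw [hb] at hd
        linear_combination x * ht - hd
      rcases mul_eq_zero.1 this with h | h
      · refine ⟨1, ?_⟩
        have ha : a = x := (sub_eq_zero.1 h).symm
        have hd' : d = y := by rw [ha] at ht; exact (add_left_cancel ht).symm
        rw [hAe, hb, hc, ha, hd']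
        simp
      · obtain ⟨P, hP⟩ := exists_val_eq (0 : K) 1 1 0 (by simp)
        refine ⟨P, ?_⟩
        have hd' : d = x := (sub_eq_zero.1 h).symm
        have ha : a = y := by rw [hd', add_comm] at ht; exact (add_right_cancel ht).symm
        rw [hAe, hP, hb, hc, ha, hd']
        simp
    · obtain ⟨P, hP⟩ := exists_val_eq (x - d) (y - d) c c (by
        intro h
        exact mul_ne_zero hc hyx (by linear_combination -h))
      refine ⟨P, ?_⟩
      rw [hAe, hP]
      ext i j
      fin_cases i <;> fin_cases j <;> simp
      · linear_combination -x * ht + hd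
      · linear_combination -y * ht + hd
      · ring
      · ring
  · obtain ⟨P, hP⟩ := exists_val_eq b b (x - a) (y - a) (by
      intro h
      exact mul_ne_zero hb hyx (by linear_combination h))
    refine ⟨P, ?_⟩
    rw [hAe, hP]
    ext i j
    fin_cases i <;> fin_cases j <;> simp
    · ring
    · ring
    · linear_combination -x * ht + hd
    · linear_combination -y * ht + hd

/-- A matrix with a double eigenvalue is either scalar or conjugate to a Jordan block. -/
theorem exists_conj_eq_jordan {A : GL (Fin 2) K} {x : K} (hA : IsEigenpair A x x) :
    A.val = !![x, 0; 0, x] ∨ ∃ P : GL (Fin 2) K, (P⁻¹ * A * P).val = !![x, 1; 0, x] := by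
  obtain ⟨ht, hd⟩ := hA
  have hAe : A.val = !![A 0 0, A 0 1; A 1 0, A 1 1] := Matrix.eta_fin_two _
  set a := A 0 0
  set b := A 0 1
  set c := A 1 0
  set d := A 1 1
  by_cases hb : b = 0
  · by_cases hc : c = 0
    · left
      have : (x - a) * (x - d) = 0 := by
        rw [hb] at hd
        linear_combination x * ht - hd
      have ha : a = x := by
        rcases mul_eq_zero.1 this with h | h
        · exact (sub_eq_zero.1 h).symm
        · linear_combination h - ht
      have hd' : d = x := by rw [ha] at ht; exact (add_left_cancel ht).symm
      rw [hAe, hb, hc, ha, hd']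
    · right
      obtain ⟨P, hP⟩ := exists_val_eq (x - d) 1 c 0 (by simpa using hc)
      refine ⟨P, conj_eq_of_mul_eq ?_⟩
      rw [hAe, hP]
      ext i j
      fin_cases i <;> fin_cases j <;> simp
      · linear_combination -x * ht + hd
      · linear_combination -ht
      · ring
  · right
    obtain ⟨P, hP⟩ := exists_val_eq b 0 (x - a) 1 (by simpa using hb)
    refine ⟨P, conj_eq_of_mul_eq ?_⟩
    rw [hAe, hP]
    ext i j
    fin_cases i <;> fin_cases j <;> simp
    · ring
    · linear_combination -x * ht + hd
    · linear_combination -ht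

end GeneralLinearGroup

end TitsAlternative

namespace TitsAlternative

section GeneralLinearGroup

variable {Γ K : Type*} [Group Γ] [Field K]

theorem apply_eq_of_val_eq {A : GL (Fin 2) K} {a b c d : K} (h : A.val = !![a, b; c, d]) :
    A 0 0 = a ∧ A 0 1 = b ∧ A 1 0 = c ∧ A 1 1 = d := by
  rw [h]
  simp

theorem isSolvable_of_forall_eigenvalues_eq [CharZero K] [IsAlgClosed K] (ρ : Γ →* GL (Fin 2) K)
    (hρ : Function.Injective ρ) (h : ∀ g x y, IsEigenpair (ρ g) x y → x = y) :
    Group.IsSolvable Γ := by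
  by_cases hs : ∀ g, ρ g 1 0 = 0
  · exact isSolvable_of_apply_eq_zero ρ hρ (by simp) hs
  push Not at hs
  obtain ⟨u, hu⟩ := hs
  obtain ⟨x, y, hxy⟩ := exists_isEigenpair (ρ u)
  obtain rfl := h u x y hxy
  rcases exists_conj_eq_jordan hxy with hsc | ⟨P, hP⟩
  · exact absurd (apply_eq_of_val_eq hsc).2.2.1 hu
  refine isSolvable_of_apply_eq_zero (conjHom ρ P) (conjHom_injective hρ P) (i := 1) (j := 0)
    (by simp) fun g => ?_
  rw [← conjHom_apply] at hP
  obtain ⟨h00, h01, h10, h11⟩ := apply_eq_of_val_eq hP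
  have hx : x ≠ 0 := by
    rintro rfl
    have := det_fin_two_ne_zero (conjHom ρ P u)
    simp [h00, h10] at this
  have key : ∀ k : Γ, (conjHom ρ P k 0 0 + conjHom ρ P k 1 1) ^ 2 =
      4 * (conjHom ρ P k 0 0 * conjHom ρ P k 1 1 - conjHom ρ P k 0 1 * conjHom ρ P k 1 0) := by
    intro k
    obtain ⟨x, y, hk⟩ := exists_isEigenpair (conjHom ρ P k)
    obtain rfl := h k x y (isEigenpair_conjHom.1 hk)
    rw [← hk.1, ← hk.2]
    ring
  have k₀ := key g
  have k₁ := key (u * g)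
  have k₂ := key (u * (u * g))
  simp only [map_mul, mul_apply_fin_two, h00, h01, h10, h11] at k₁ k₂
  set a := conjHom ρ P g 0 0
  set b := conjHom ρ P g 0 1
  set c := conjHom ρ P g 1 0
  set d := conjHom ρ P g 1 1
  have hc : x ^ 2 * c ^ 2 = 0 := by
    linear_combination k₂ / 2 - x ^ 2 * k₁ + x ^ 4 / 2 * k₀
  exact pow_eq_zero_iff (two_ne_zero) |>.1 ((mul_eq_zero.1 hc).resolve_left (pow_ne_zero _ hx))

theorem pow_apply_of_diagonal {A : GL (Fin 2) K} (h01 : A 0 1 = 0) (h10 : A 1 0 = 0) (n : ℕ) :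
    (A ^ n) 0 0 = A 0 0 ^ n ∧ (A ^ n) 0 1 = 0 ∧ (A ^ n) 1 0 = 0 ∧ (A ^ n) 1 1 = A 1 1 ^ n := by
  induction n with
  | zero => simp
  | succ n ih =>
    rw [pow_succ A]
    simp only [mul_apply_fin_two, ih, h01, h10]
    refine ⟨?_, ?_, ?_, ?_⟩ <;> ring

theorem isSineSquare_of_isEigenpair {x y p w : K} {n : ℕ} (hn : 0 < n) (hxy : x ^ n = y ^ n)
    (hp : p ≠ 0) (hsum : x + y = p * (2 - w)) (hprod : x * y = p ^ 2) : IsSineSquare w := by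
  have hx : x ≠ 0 := left_ne_zero_of_mul (hprod ▸ pow_ne_zero 2 hp)
  refine ⟨x / p, ⟨2 * n, by lia, ?_⟩, ?_⟩
  · rw [div_pow, div_eq_one_iff_eq (pow_ne_zero _ hp), pow_mul p, ← hprod, mul_pow, ← hxy]
    ring
  · rw [inv_div]
    have hy : p / x = y / p := by
      rw [div_eq_div_iff hx hp]
      linear_combination -hprod
    rw [hy]
    field_simp
    linear_combination hsum

theorem prod_eq_zero_of_isPrimitiveRoot [CharZero K] [IsAlgClosed K] (ρ : Γ →* GL (Fin 2) K) {g : Γ}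
    (h01 : ρ g 0 1 = 0) (h10 : ρ g 1 0 = 0) {N : ℕ} (hN : 6 ≤ N)
    (hr : IsPrimitiveRoot (ρ g 0 0 / ρ g 1 1) (N + 1))
    (hT : ∀ k x y, IsEigenpair (ρ k) x y → ∃ n : ℕ, 0 < n ∧ x ^ n = y ^ n) (h : Γ) :
    ρ h 0 0 * ρ h 0 1 * ρ h 1 0 * ρ h 1 1 = 0 := by
  have hdet := det_fin_two_ne_zero (ρ g)
  rw [h01, zero_mul, sub_zero] at hdet
  have hl := left_ne_zero_of_mul hdet
  have hm := right_ne_zero_of_mul hdet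
  have hΔ := det_fin_two_ne_zero (ρ h)
  obtain ⟨i00, i01, i10, i11⟩ := inv_apply_fin_two (ρ h)
  set a := ρ h 0 0
  set b := ρ h 0 1
  set c := ρ h 1 0
  set d := ρ h 1 1
  set Δ := a * d - b * c with hΔdef
  have huv : a * d / Δ + -(b * c) / Δ = 1 := by
    rw [← add_div, ← sub_eq_add_neg, div_self hΔ]
  have key := mul_eq_zero_of_isSineSquare hN hr huv (fun j _ => ?_) fun j _ => ?_
  · rw [div_mul_div_comm, div_eq_zero_iff] at key
    linear_combination -(key.resolve_right (mul_ne_zero hΔ hΔ))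
  all_goals
    obtain ⟨p00, p01, p10, p11⟩ := pow_apply_of_diagonal h01 h10 (j + 1)
    have hl' := pow_ne_zero (j + 1) hl
    have hm' := pow_ne_zero (j + 1) hm
    rw [div_pow]
    set p := ρ g 0 0 ^ (j + 1)
    set q := ρ g 1 1 ^ (j + 1)
  · obtain ⟨x, y, hxy⟩ := exists_isEigenpair (ρ (g ^ (j + 1) * h * g ^ (j + 1) * h⁻¹))
    obtain ⟨n, hn, hpow⟩ := hT _ x y hxy
    obtain ⟨hs, hp⟩ := hxy
    simp only [map_mul, map_inv, map_pow, mul_apply_fin_two, p00, p01, p10, p11, i00, i01, i10,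
      i11] at hs hp
    refine isSineSquare_of_isEigenpair hn hpow (mul_ne_zero hl' hm') (hs.trans ?_) (hp.trans ?_)
    · field_simp
      rw [hΔdef]
      ring
    · field_simp
      rw [hΔdef]
      ring
  · obtain ⟨x, y, hxy⟩ := exists_isEigenpair (ρ (g ^ (j + 1) * h * (g ^ (j + 1))⁻¹ * h⁻¹))
    obtain ⟨n, hn, hpow⟩ := hT _ x y hxy
    obtain ⟨hs, hp⟩ := hxy
    obtain ⟨j00, j01, j10, j11⟩ := inv_apply_fin_two (ρ g ^ (j + 1))
    simp only [map_mul, map_inv, map_pow, mul_apply_fin_two, p00, p01, p10, p11, i00, i01, i10,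
      i11, j00, j01, j10, j11] at hs hp
    refine isSineSquare_of_isEigenpair hn hpow one_ne_zero (hs.trans ?_) (hp.trans ?_)
    · field_simp
      rw [hΔdef]
      ring
    · field_simp
      rw [hΔdef]
      ring

theorem mem_center_of_div_eq {ρ : Γ →* GL (Fin 2) K} (hρ : Function.Injective ρ) {g g' : Γ}
    {δ δ' : K} (hδ : δ ≠ 0) (h : ∀ i j, ρ g i j / δ = ρ g' i j / δ') :
    g'⁻¹ * g ∈ Subgroup.center Γ := by
  have e : (ρ g).val = (δ / δ') • (ρ g').val := by
    ext i j
    have := h i j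
    rw [div_eq_iff hδ] at this
    rw [Matrix.smul_apply, smul_eq_mul, this]
    ring
  have e' : (ρ (g'⁻¹ * g)).val = (δ / δ') • (1 : Matrix (Fin 2) (Fin 2) K) := by
    rw [map_mul, map_inv, Units.val_mul, e, mul_smul_comm, ← Units.val_mul, inv_mul_cancel,
      Units.val_one]
  refine Subgroup.mem_center_iff.2 fun k => hρ (Units.ext ?_)
  rw [map_mul ρ k, map_mul ρ _ k, Units.val_mul, Units.val_mul, e']
  simp

theorem isVirtuallySolvable_of_finite_quotient_center [Finite (Γ ⧸ Subgroup.center Γ)] :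
    IsVirtuallySolvable Γ :=
  ⟨Subgroup.center Γ, Subgroup.finiteIndex_of_finite_quotient,
    Group.isSolvable_of_comm fun a b => Subtype.ext (Subgroup.mem_center_iff.1 b.2 a)⟩

theorem isVirtuallySolvable_of_forall_pow_eq [CharZero K] [IsAlgClosed K] (ρ : Γ →* GL (Fin 2) K)
    (hρ : Function.Injective ρ) {g : Γ} (h01 : ρ g 0 1 = 0) (h10 : ρ g 1 0 = 0)
    (hne : ρ g 0 0 ≠ ρ g 1 1) {B : ℕ} (hB : 0 < B)
    (hT : ∀ k x y, IsEigenpair (ρ k) x y → x ^ B = y ^ B) : IsVirtuallySolvable Γ := by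
  by_cases hN : ∀ h, ρ h 0 0 * ρ h 0 1 * ρ h 1 0 * ρ h 1 1 = 0
  · exact isVirtuallySolvable_of_prod_eq_zero ρ hρ hN
  push Not at hN
  obtain ⟨h, hh⟩ := hN
  have hc : ρ h 1 0 ≠ 0 := right_ne_zero_of_mul (left_ne_zero_of_mul hh)
  have hb : ρ h 0 1 ≠ 0 := right_ne_zero_of_mul (left_ne_zero_of_mul (left_ne_zero_of_mul hh))
  have hsqrt : ∀ k : Γ, ∃ δ : K,
      ρ k 0 0 * ρ k 1 1 - ρ k 0 1 * ρ k 1 0 = δ * δ := fun k => IsAlgClosed.exists_eq_mul_self _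
  choose δ hδ using hsqrt
  have hδ0 : ∀ k, δ k ≠ 0 := fun k h0 => det_fin_two_ne_zero (ρ k) (by rw [hδ, h0, zero_mul])
  let Z : Set K := (fun ν => ν + ν⁻¹) '' {ν | ν ^ (2 * B) = 1}
  have hZ : Z.Finite := by
    refine Set.Finite.image _ ((Polynomial.nthRootsFinset (2 * B) (1 : K)).finite_toSet.subset ?_)
    intro ν hν
    exact (Polynomial.mem_nthRootsFinset (by lia) 1).2 hν
  have htr : ∀ (k : Γ) (ε : K), ρ k 0 0 * ρ k 1 1 - ρ k 0 1 * ρ k 1 0 = ε * ε → ε ≠ 0 →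
      ρ k 0 0 / ε + ρ k 1 1 / ε ∈ Z := by
    intro k ε hε hε0
    obtain ⟨x, y, hxy⟩ := exists_isEigenpair (ρ k)
    have hpow := hT k x y hxy
    obtain ⟨hs, hp⟩ := hxy
    rw [hε] at hp
    have hx : x ≠ 0 := left_ne_zero_of_mul (hp ▸ mul_ne_zero hε0 hε0)
    refine ⟨x / ε, ?_, ?_⟩
    · change (x / ε) ^ (2 * B) = 1
      rw [div_pow, div_eq_one_iff_eq (pow_ne_zero _ hε0), pow_mul ε, pow_two, ← hp, mul_pow, ← hpow]
      ring
    · change x / ε + (x / ε)⁻¹ = _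
      have hy : (x / ε)⁻¹ = y / ε := by
        rw [inv_div, div_eq_div_iff hx hε0, ← hp, mul_comm]
      rw [hy, ← add_div, ← add_div, hs]
  let t := ρ g 0 0 / δ g
  let t' := ρ g 1 1 / δ g
  have htt : t - t' ≠ 0 := by
    rw [← sub_div]
    exact div_ne_zero (sub_ne_zero.2 hne) (hδ0 g)
  let W : Set (K × K) := (fun z : K × K => ((z.2 - t' * z.1) / (t - t'),
    (t * z.1 - z.2) / (t - t'))) '' (Z ×ˢ Z)
  have hW : W.Finite := (hZ.prod hZ).image _
  have hdiag : ∀ (k : Γ) (ε : K), ρ k 0 0 * ρ k 1 1 - ρ k 0 1 * ρ k 1 0 = ε * ε → ε ≠ 0 →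
      (ρ k 0 0 / ε, ρ k 1 1 / ε) ∈ W := by
    intro k ε hε hε0
    have h₂ := htr (g * k) (δ g * ε) (by
      simp only [map_mul, mul_apply_fin_two, h01, h10]
      have := hδ g
      rw [h01] at this
      linear_combination ρ g 0 0 * ρ g 1 1 * hε + ε * ε * this)
      (mul_ne_zero (hδ0 g) hε0)
    simp only [map_mul, mul_apply_fin_two, h01, h10, zero_mul, add_zero, zero_add,
      mul_div_mul_comm] at h₂
    refine ⟨(_, _), ⟨htr k ε hε hε0, h₂⟩, Prod.ext ?_ ?_⟩
    · rw [div_eq_iff htt]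
      simp only [t, t']
      ring
    · rw [div_eq_iff htt]
      simp only [t, t']
      ring
  let M : Γ → Matrix (Fin 2) (Fin 2) K := fun k i j => ρ k i j / δ k
  have hM : (Set.range M).Finite := by
    refine ((hW.prod hW).image fun w : (K × K) × (K × K) =>
      !![w.1.1, (w.2.1 - w.1.1 * M h 0 0) / M h 1 0;
        (w.2.2 - w.1.2 * M h 1 1) / M h 0 1, w.1.2]).subset ?_
    rintro _ ⟨k, rfl⟩
    have h₂ := hdiag (k * h) (δ k * δ h) (by
      simp only [map_mul, mul_apply_fin_two]
      linear_combination (ρ h 0 0 * ρ h 1 1 - ρ h 0 1 * ρ h 1 0) * hδ k + δ k * δ k * hδ h)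
      (mul_ne_zero (hδ0 k) (hδ0 h))
    simp only [map_mul, mul_apply_fin_two, add_div, mul_div_mul_comm] at h₂
    refine ⟨((_, _), (_, _)), ⟨hdiag k (δ k) (hδ k) (hδ0 k), h₂⟩, ?_⟩
    have hc' : ρ h 1 0 / δ h ≠ 0 := div_ne_zero hc (hδ0 h)
    have hb' : ρ h 0 1 / δ h ≠ 0 := div_ne_zero hb (hδ0 h)
    ext i j
    fin_cases i <;> fin_cases j
    · rfl
    · simp only [M]
      exact (div_eq_iff hc').2 (add_sub_cancel_left _ _)
    · simp only [M]
      exact (div_eq_iff hb').2 (add_sub_cancel_right _ _)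
    · rfl
  have : Finite (Set.range M) := hM.to_subtype
  have : Finite (Γ ⧸ Subgroup.center Γ) := by
    refine Finite.of_injective (β := Set.range M) (fun q => ⟨M q.out, q.out, rfl⟩) fun q q' hq => ?_
    have hq' : M q.out = M q'.out := congrArg Subtype.val hq
    rw [← q.out_eq', ← q'.out_eq', eq_comm, QuotientGroup.eq]
    exact mem_center_of_div_eq hρ (hδ0 _) fun i j => congrFun (congrFun hq' i) j
  exact isVirtuallySolvable_of_finite_quotient_center

theorem alternative_of_injective [CharZero K] [IsAlgClosed K] (ρ : Γ →* GL (Fin 2) K)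
    (hρ : Function.Injective ρ) : ContainsNonabelianFree Γ ∨ IsVirtuallySolvable Γ := by
  by_cases hA : ∀ g x y, IsEigenpair (ρ g) x y → x = y
  · exact Or.inr (isVirtuallySolvable_of_isSolvable (isSolvable_of_forall_eigenvalues_eq ρ hρ hA))
  push Not at hA
  obtain ⟨g, x, y, hg, hxy⟩ := hA
  have diag : ∀ g x y, IsEigenpair (ρ g) x y → x ≠ y → ∃ P, conjHom ρ P g 0 0 = x ∧
      conjHom ρ P g 0 1 = 0 ∧ conjHom ρ P g 1 0 = 0 ∧ conjHom ρ P g 1 1 = y := by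
    intro g x y hg hxy
    obtain ⟨P, hP⟩ := exists_conj_eq_diagonal hg hxy
    rw [← conjHom_apply] at hP
    exact ⟨P, apply_eq_of_val_eq hP⟩
  by_cases hNT : ∃ g x y, IsEigenpair (ρ g) x y ∧ ∀ n : ℕ, 0 < n → x ^ n ≠ y ^ n
  · obtain ⟨g, x, y, hg, hxy⟩ := hNT
    obtain ⟨P, h00, h01, h10, h11⟩ := diag g x y hg (by simpa using hxy 1 one_pos)
    by_cases hN : ∀ h, conjHom ρ P h 0 0 * conjHom ρ P h 0 1 * conjHom ρ P h 1 0 *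
        conjHom ρ P h 1 1 = 0
    · exact Or.inr (isVirtuallySolvable_of_prod_eq_zero _ (conjHom_injective hρ P) hN)
    · push Not at hN
      obtain ⟨h, hh⟩ := hN
      refine Or.inl (containsNonabelianFree_of_forall_pow_ne_one (conjHom ρ P) (h := h) h01 h10
        (fun n hn he => hxy n hn ?_) fun i j => ?_)
      · rw [h00, h11, div_pow] at he
        exact eq_of_div_eq_one he
      · fin_cases i <;> fin_cases j <;> simp_all
  · push Not at hNT
    by_cases hbig : ∃ g x y, IsEigenpair (ρ g) x y ∧ ∀ n : ℕ, 0 < n → n < 7 → x ^ n ≠ y ^ n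
    · obtain ⟨g, x, y, hg, hxy⟩ := hbig
      obtain ⟨P, h00, h01, h10, h11⟩ := diag g x y hg (by simpa using hxy 1 one_pos (by simp))
      have hy : y ≠ 0 := by
        have := det_fin_two_ne_zero (ρ g)
        rw [← hg.2] at this
        exact right_ne_zero_of_mul this
      have hiff : ∀ n : ℕ, (x / y) ^ n = 1 ↔ x ^ n = y ^ n := fun n => by
        rw [div_pow, div_eq_one_iff_eq (pow_ne_zero n hy)]
      obtain ⟨n, hn, hpow⟩ := hNT g x y hg
      have hpos : 0 < orderOf (x / y) :=
        orderOf_pos_iff.2 (isOfFinOrder_iff_pow_eq_one.2 ⟨n, hn, (hiff n).2 hpow⟩)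
      have h7 : 7 ≤ orderOf (x / y) := by
        by_contra! hlt
        exact hxy _ hpos hlt ((hiff _).1 (pow_orderOf_eq_one _))
      obtain ⟨N, hN⟩ := Nat.exists_eq_succ_of_ne_zero hpos.ne'
      refine Or.inr (isVirtuallySolvable_of_prod_eq_zero _ (conjHom_injective hρ P)
        (prod_eq_zero_of_isPrimitiveRoot (conjHom ρ P) h01 h10 (N := N) (by lia) ?_
          fun k x y hk => hNT k x y (isEigenpair_conjHom.1 hk)))
      rw [h00, h11, ← Nat.succ_eq_add_one, ← hN]
      exact IsPrimitiveRoot.orderOf _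
    · push Not at hbig
      obtain ⟨P, h00, h01, h10, h11⟩ := diag g x y hg hxy
      refine Or.inr (isVirtuallySolvable_of_forall_pow_eq (conjHom ρ P) (conjHom_injective hρ P)
        h01 h10 (by rwa [h00, h11]) (Nat.factorial_pos 6) fun k x y hk => ?_)
      obtain ⟨n, hn, hn7, hpow⟩ := hbig k x y (isEigenpair_conjHom.1 hk)
      obtain ⟨m, hm⟩ := Nat.dvd_factorial hn (by lia : n ≤ 6)
      rw [hm, pow_mul, pow_mul, hpow]

theorem strongTitsAlternative_generalLinearGroup (k : Type*) [Field k] [CharZero k] :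
    StrongTitsAlternative (GL (Fin 2) k) := by
  intro H
  have : CharZero (AlgebraicClosure k) := charZero_of_injective_algebraMap
    (algebraMap k (AlgebraicClosure k)).injective
  refine alternative_of_injective
    ((Matrix.GeneralLinearGroup.map (algebraMap k (AlgebraicClosure k))).comp H.subtype) ?_
  refine Function.Injective.comp (g := Matrix.GeneralLinearGroup.map _) (fun A B hAB => ?_)
    H.subtype_injective
  refine Units.ext (Matrix.ext fun i j => (algebraMap k (AlgebraicClosure k)).injective ?_)
  exact congrArg (fun C : GL (Fin 2) (AlgebraicClosure k) => C i j) hAB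

end GeneralLinearGroup

end TitsAlternative

/-- The group `Aut(k²)` of `k`-algebra automorphisms of `k[x,y]`, for `k` of characteristic
zero, satisfies the strong Tits alternative. -/
theorem autK2_strongTitsAlternative (k : Type*) [Field k] [CharZero k] :
    StrongTitsAlternative (MvPolynomial (Fin 2) k ≃ₐ[k] MvPolynomial (Fin 2) k) :=
  TitsAlternative.alternative_planeAut
    (TitsAlternative.strongTitsAlternative_generalLinearGroup k)
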